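/- arXiv:1712.09223 — 2 statements merged into one kernel-verified Lean document; each statement's English description precedes it below -/
import Mathlib

section
/- Let V be a finite-dimensional real normed vector space, C ⊆ V a solid closed cone, Ω ⊆ V a nonempty open connected set, and f : Ω → Ω a homeomorphism that is monotone with respect to C. If the set Per(f) of periodic points of f is dense in Ω, then f is periodic; that is, there exists an integer p ≥ 1 such that f^p(x) = x for all x ∈ Ω. -/
/-!
A homeomorphism of an open set that preserves the order in both directions preserves extremality
of differences, because `y - x` is extremal exactly when the order interval between `x` and `y` is
a chain. On periodic points the inverse of `f` is a power of `f`, so density of the periodic points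
makes `f` such an order isomorphism.

Squeezing a compact neighbourhood of `x₀` between periodic points shows that, for a suitable `N`,
all the iterates `f^[N * n]` are uniformly close to the identity there. Suppose that a periodic
point `x` near `x₀` is not fixed by `f^[N]`, and join `x` to `f^[N] x` by a path of short extremal
segments. Some linear functional `ℓ` increases along each segment. It still increases between the
images of the endpoints under `f^[N * n]`: extend the segment to a fixed length, note that the two
ends of the long segment hardly move, and that its image is again an extremal segment. Hence
`ℓ (f^[N * n] x)` is strictly increasing in `n`, which contradicts the periodicity of `x`, and so
`f^[N]` is the identity near `x₀`.

Finally, an open set of fixed points of `f^[N]` spreads along extremal directions: if `q` belongs to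
it and `y - q` is extremal, then so is `f^[N] y - q`, and the two are comparable because both
dominate a common positive multiple of `y - q`. If `y` is periodic it must then be fixed. As the
extremal vectors span the space, the interior of the fixed point set is closed, and connectedness
concludes.
-/

open Filter Function Set Topology

theorem eventually_add_smul_mem {V : Type*} [AddCommGroup V] [Module ℝ V] [TopologicalSpace V]
    [ContinuousAdd V] [ContinuousSMul ℝ V] {U : Set V} {x : V} (hU : U ∈ 𝓝 x) (v : V) :
    ∀ᶠ c : ℝ in 𝓝 0, x + c • v ∈ U := by
  have h : Tendsto (fun c : ℝ ↦ x + c • v) (𝓝 0) (𝓝 (x + (0 : ℝ) • v)) :=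
    Continuous.tendsto (by fun_prop) 0
  exact h (by simpa using hU)

section Extremal

variable {V : Type*} [AddCommGroup V] [Module ℝ V] [PartialOrder V]

/-- The nonnegative vectors `v` that generate an extreme ray of the positive cone (or vanish):
the order interval between `0` and `v` consists of multiples of `v` only. -/
def IsExtremal (v : V) : Prop :=
  0 ≤ v ∧ ∀ u ∈ Icc 0 v, ∃ c ∈ Icc (0 : ℝ) 1, c • v = u

variable [IsOrderedModule ℝ V]

theorem IsExtremal.smul {v : V} (hv : IsExtremal v) {c : ℝ} (hc : 0 ≤ c) :
    IsExtremal (c • v) := by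
  refine ⟨smul_nonneg hc hv.1, fun u hu ↦ ?_⟩
  obtain rfl | hc := hc.eq_or_lt
  · exact ⟨0, by simp, by simpa [le_antisymm_iff, and_comm] using hu⟩
  · obtain ⟨d, hd, hdv⟩ := hv.2 (c⁻¹ • u)
      ⟨smul_nonneg (inv_nonneg.2 hc.le) hu.1, (inv_smul_le_iff_of_pos hc).2 hu.2⟩
    exact ⟨d, hd, by rw [smul_comm, hdv, smul_inv_smul₀ hc.ne']⟩

theorem IsExtremal.le_or_ge_of_smul_le {v w : V} (hw : IsExtremal w) (hv : 0 ≤ v) {s : ℝ}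
    (hs : 0 < s) (h : s • v ≤ w) : v ≤ w ∨ w ≤ v := by
  obtain ⟨c, -, hcw⟩ := hw.2 (s • v) ⟨smul_nonneg hs.le hv, h⟩
  obtain hcs | hsc := le_total c s
  · refine Or.inl (le_of_smul_le_smul_left ?_ hs)
    exact hcw.ge.trans (smul_le_smul_of_nonneg_right hcs hw.1)
  · refine Or.inr (le_of_smul_le_smul_left ?_ (hs.trans_le hsc))
    exact hcw.le.trans (smul_le_smul_of_nonneg_right hsc hv)

variable [IsOrderedAddMonoid V] {Ω : Set V} {x y : Ω}

theorem IsExtremal.isChain_Icc (h : IsExtremal ((y : V) - x)) : IsChain (· ≤ ·) (Icc x y) := by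
  have key : ∀ z ∈ Icc x y, ∃ c : ℝ, (z : V) = x + c • ((y : V) - x) := fun z hz ↦ by
    obtain ⟨c, -, hc⟩ := h.2 (z - x)
      ⟨sub_nonneg.2 hz.1, sub_le_sub_right (Subtype.coe_le_coe.2 hz.2) _⟩
    exact ⟨c, by rw [hc, add_sub_cancel]⟩
  intro a ha b hb _
  obtain ⟨c, hc⟩ := key a ha
  obtain ⟨d, hd⟩ := key b hb
  simp only [← Subtype.coe_le_coe, hc, hd, add_le_add_iff_left]
  exact (le_total c d).imp (smul_le_smul_of_nonneg_right · h.1)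
    (smul_le_smul_of_nonneg_right · h.1)

variable [TopologicalSpace V] [IsTopologicalAddGroup V] [ContinuousSMul ℝ V]

theorem isExtremal_sub_of_isChain_Icc [OrderClosedTopology V] (hΩ : IsOpen Ω) (hxy : x ≤ y)
    (h : IsChain (· ≤ ·) (Icc x y)) : IsExtremal ((y : V) - x) := by
  set w : V := y - x
  have hw0 : 0 ≤ w := sub_nonneg.2 hxy
  have hmem : ∀ {v : V}, 0 ≤ v → v ≤ w → ∀ {l : ℝ}, 0 ≤ l → l ≤ 1 →
      ∀ hv : (x : V) + l • v ∈ Ω, (⟨x + l • v, hv⟩ : Ω) ∈ Icc x y := by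
    intro v hv0 hvw l hl0 hl1 hv
    refine ⟨le_add_of_nonneg_right (smul_nonneg hl0 hv0), ?_⟩
    calc (x : V) + l • v ≤ x + v := by gcongr; exact smul_le_of_le_one_left hv0 hl1
      _ ≤ y := by rwa [← le_sub_iff_add_le']
  refine ⟨hw0, fun u hu ↦ ?_⟩
  -- Scaling `u` and `c • w` down moves them into `Ω`, where the chain hypothesis compares them.
  have hcomp : ∀ c ∈ Icc (0 : ℝ) 1, u ≤ c • w ∨ c • w ≤ u := fun c hc ↦ by
    have hsmall : ∀ᶠ l : ℝ in 𝓝 0, (x : V) + l • u ∈ Ω ∧ (x : V) + l • c • w ∈ Ω ∧ l ≤ 1 :=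
      (eventually_add_smul_mem (hΩ.mem_nhds x.2) u).and
        ((eventually_add_smul_mem (hΩ.mem_nhds x.2) (c • w)).and (eventually_le_nhds one_pos))
    obtain ⟨l, ⟨hlu, hlw, hl1⟩, hl0⟩ := ((hsmall.filter_mono nhdsWithin_le_nhds).and
      (eventually_mem_nhdsWithin (s := Ioi (0 : ℝ)))).exists
    have := h.total (hmem hu.1 hu.2 hl0.le hl1 hlu)
      (hmem (smul_nonneg hc.1 hw0) (smul_le_of_le_one_left hw0 hc.2) hl0.le hl1 hlw)
    simpa only [Subtype.mk_le_mk, add_le_add_iff_left,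
      smul_le_smul_iff_of_pos_left (mem_Ioi.1 hl0)] using this
  obtain ⟨c, hc, huc, hcu⟩ := isPreconnected_closed_iff.1 (isPreconnected_Icc (a := 0) (b := 1))
    {c | u ≤ c • w} {c | c • w ≤ u} (isClosed_le (by fun_prop) (by fun_prop))
    (isClosed_le (by fun_prop) (by fun_prop)) hcomp ⟨1, by simp, by simpa using hu.2⟩
    ⟨0, by simp, by simpa using hu.1⟩
  exact ⟨c, hc, le_antisymm hcu huc⟩

theorem IsExtremal.map_orderIso [OrderClosedTopology V] {Ω' : Set V} (hΩ' : IsOpen Ω')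
    (k : Ω ≃o Ω') (h : IsExtremal ((y : V) - x)) : IsExtremal ((k y : V) - k x) := by
  refine isExtremal_sub_of_isChain_Icc hΩ' (k.monotone (Subtype.coe_le_coe.1 (sub_nonneg.1 h.1))) ?_
  rw [← k.image_Icc]
  exact h.isChain_Icc.image k

theorem IsExtremal.lt_map_orderIso [OrderClosedTopology V] {v : V} (hv : IsExtremal v)
    (hΩ : IsOpen Ω) (k : Ω ≃o Ω) {ℓ : V →ₗ[ℝ] ℝ} (hℓ : ℓ v = 1) {z z' y : Ω} {t T : ℝ}
    (ht : 0 < t) (htT : t ≤ T) (hz' : (z' : V) - z = t • v) (hy : (y : V) - z = T • v)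
    (hkz : |ℓ (k z - z)| < T / 2) (hky : |ℓ (k y - y)| < T / 2) : ℓ (k z) < ℓ (k z') := by
  have hzy : ℓ (k z) < ℓ (k y) := by
    have hℓy : ℓ y = ℓ z + T := by
      rw [← sub_eq_iff_eq_add', ← map_sub, hy, map_smul, hℓ, smul_eq_mul, mul_one]
    rw [map_sub, abs_lt] at hkz hky
    linarith
  have hne : (z' : V) - z ≠ 0 := by
    rw [hz']
    exact smul_ne_zero ht.ne' (by rintro rfl; simp at hℓ)
  have hzz' : z ≤ z' :=
    Subtype.coe_le_coe.1 (sub_nonneg.1 (hz' ▸ smul_nonneg ht.le hv.1))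
  have hz'y : z' ≤ y := Subtype.coe_le_coe.1 <| (sub_le_sub_iff_right (z : V)).1 <| by
    rw [hz', hy]
    exact smul_le_smul_of_nonneg_right htT hv.1
  -- `k` maps the extremal segment from `z` to `y` into an extremal segment, so `k z'` lies on the
  -- segment from `k z` to `k y`.
  have hky : IsExtremal ((k y : V) - k z) :=
    (hy ▸ hv.smul (ht.le.trans htT) : IsExtremal ((y : V) - z)).map_orderIso hΩ k
  obtain ⟨c, ⟨hc0, -⟩, hc⟩ := hky.2 (k z' - k z)
    ⟨sub_nonneg.2 (k.monotone hzz'), sub_le_sub_right (Subtype.coe_le_coe.2 (k.monotone hz'y)) _⟩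
  have hc0 : 0 < c := hc0.lt_of_ne' <| by
    rintro rfl
    rw [zero_smul, eq_comm, sub_eq_zero, Subtype.coe_inj, k.injective.eq_iff] at hc
    exact hne (by rw [hc, sub_self])
  rw [← sub_pos, ← map_sub, ← hc, map_smul, map_sub]
  exact mul_pos hc0 (sub_pos.2 hzy)

end Extremal

section PositiveFunctional

variable {V : Type*} [NormedAddCommGroup V] [NormedSpace ℝ V] [PartialOrder V]
  [IsOrderedAddMonoid V] [IsOrderedModule ℝ V] [OrderClosedTopology V]

theorem exists_strongDual_pos {x : V} (hx : 0 < x) :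
    ∃ φ : StrongDual ℝ V, (∀ y, 0 ≤ y → 0 ≤ φ y) ∧ 0 < φ x := by
  obtain ⟨φ, hφ, hφx⟩ := (ProperCone.positive ℝ V).hyperplane_separation_point (x₀ := -x)
    (by simpa using hx.not_ge)
  exact ⟨φ, hφ, by simpa using hφx⟩

variable (V) [FiniteDimensional ℝ V]

theorem exists_strongDual_norm_le :
    ∃ φ : StrongDual ℝ V, ∀ x, 0 ≤ x → ‖x‖ ≤ φ x := by
  set S : Set V := Ici 0 ∩ Metric.sphere 0 1
  have hScpt : IsCompact S := (isCompact_sphere _ _).inter_left isClosed_Ici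
  -- Finitely many nonnegative functionals suffice to be positive on all of the compact set `S`.
  obtain ⟨φ, hφS⟩ : ∃ φ : StrongDual ℝ V, ∀ x ∈ S, 0 < φ x := by
    suffices ∃ φ : StrongDual ℝ V, (∀ y, 0 ≤ y → 0 ≤ φ y) ∧ ∀ x ∈ S, 0 ≤ x → 0 < φ x from
      this.imp fun φ h x hx ↦ h.2 x hx hx.1
    refine hScpt.induction_on ⟨0, by simp, by simp⟩
      (fun s t hst ⟨φ, h, ht⟩ ↦ ⟨φ, h, fun x hx ↦ ht x (hst hx)⟩) ?_ fun x hx ↦ ?_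
    · rintro s t ⟨φ, hφ, hs⟩ ⟨ψ, hψ, ht⟩
      refine ⟨φ + ψ, fun y hy ↦ add_nonneg (hφ y hy) (hψ y hy), ?_⟩
      rintro x (hx | hx) hx0
      · exact add_pos_of_pos_of_nonneg (hs x hx hx0) (hψ x hx0)
      · exact add_pos_of_nonneg_of_pos (hφ x hx0) (ht x hx hx0)
    · obtain ⟨φ, hφ, hφx⟩ := exists_strongDual_pos
        (hx.1.lt_of_ne' (Metric.ne_of_mem_sphere hx.2 one_ne_zero))
      refine ⟨{y | 0 < φ y}, mem_nhdsWithin_of_mem_nhds ?_, φ, hφ, fun y hy _ ↦ hy⟩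
      exact (isOpen_lt continuous_const φ.continuous).mem_nhds hφx
  obtain ⟨c, hc, hcS⟩ : ∃ c > 0, ∀ x ∈ S, c ≤ φ x :=
    hScpt.exists_forall_le' φ.continuous.continuousOn hφS
  refine ⟨c⁻¹ • φ, fun x hx ↦ ?_⟩
  obtain rfl | hx0 := eq_or_ne x 0
  · simp
  have h := hcS (‖x‖⁻¹ • x) ⟨smul_nonneg (by positivity) hx, by simp [norm_smul, hx0]⟩
  rw [map_smul, smul_eq_mul, le_inv_mul_iff₀ (by positivity)] at h
  simpa [le_inv_mul_iff₀ hc, mul_comm] using h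

theorem exists_norm_le_mul_norm :
    ∃ K : ℝ, 0 < K ∧ ∀ x y : V, 0 ≤ x → x ≤ y → ‖x‖ ≤ K * ‖y‖ := by
  obtain ⟨φ, hφ⟩ := exists_strongDual_norm_le V
  refine ⟨‖φ‖ + 1, by positivity, fun x y hx hxy ↦ ?_⟩
  have hnonneg : 0 ≤ φ (y - x) := (norm_nonneg _).trans (hφ _ (sub_nonneg.2 hxy))
  calc ‖x‖ ≤ φ x := hφ x hx
    _ ≤ φ y := by simpa using hnonneg
    _ ≤ ‖φ‖ * ‖y‖ := (le_abs_self _).trans (φ.le_opNorm y)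
    _ ≤ (‖φ‖ + 1) * ‖y‖ := by gcongr; exact le_add_of_nonneg_right zero_le_one

end PositiveFunctional

section ExtremalBasis

theorem isExtremal_of_mem_extremePoints {V : Type*} [AddCommGroup V] [Module ℝ V] [PartialOrder V]
    [IsOrderedAddMonoid V] [IsOrderedModule ℝ V] {φ : V →ₗ[ℝ] ℝ} (hφ : ∀ x, 0 < x → 0 < φ x) {v : V}
    (hv : v ∈ {x | 0 ≤ x ∧ φ x = 1}.extremePoints ℝ) : IsExtremal v := by
  obtain ⟨⟨hv0, hv1⟩, hvext⟩ := hv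
  refine ⟨hv0, fun u hu ↦ ?_⟩
  obtain rfl | hu0 := hu.1.eq_or_lt
  · exact ⟨0, by simp⟩
  obtain rfl | huv := hu.2.eq_or_lt
  · exact ⟨1, by simp⟩
  have hpos : 0 < φ u := hφ u hu0
  have hlt : 0 < 1 - φ u := by simpa [hv1] using hφ _ (sub_pos.2 huv)
  have hnormalized := @hvext ((φ u)⁻¹ • u) ⟨smul_nonneg (by positivity) hu0.le, by simp [hpos.ne']⟩
    ((1 - φ u)⁻¹ • (v - u))
    ⟨smul_nonneg (by positivity) (sub_nonneg.2 hu.2), by simp [hv1, hlt.ne']⟩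
    ⟨φ u, 1 - φ u, hpos, hlt, by ring, by simp [hpos.ne', hlt.ne']⟩
  exact ⟨φ u, ⟨hpos.le, by linarith⟩, by rw [← hnormalized, smul_inv_smul₀ hpos.ne']⟩

variable {V : Type*} [NormedAddCommGroup V] [NormedSpace ℝ V] [FiniteDimensional ℝ V]
  [PartialOrder V] [IsOrderedAddMonoid V] [IsOrderedModule ℝ V] [OrderClosedTopology V]

theorem span_setOf_isExtremal (hsolid : (interior (Ici (0 : V))).Nonempty) :
    Submodule.span ℝ {v : V | IsExtremal v} = ⊤ := by
  obtain ⟨φ, hφ⟩ := exists_strongDual_norm_le V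
  have hφpos : ∀ x, 0 < x → 0 < φ x := fun x hx ↦ (norm_pos_iff.2 hx.ne').trans_le (hφ x hx.le)
  set B : Set V := {x | 0 ≤ x ∧ φ x = 1}
  have hBclosed : IsClosed B := isClosed_Ici.inter (isClosed_eq φ.continuous continuous_const)
  have hBcpt : IsCompact B := (isCompact_closedBall (0 : V) 1).of_isClosed_subset hBclosed
    fun x hx ↦ by simpa [← hx.2] using hφ x hx.1
  have hBconv : Convex ℝ B := (convex_Ici 0).inter (convex_hyperplane φ.toLinearMap.isLinear 1)
  set W := Submodule.span ℝ {v : V | IsExtremal v}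
  have hBW : B ⊆ W := by
    rw [← closure_convexHull_extremePoints hBcpt hBconv]
    refine closure_minimal (convexHull_min (fun v hv ↦ ?_) W.convex) W.closed_of_finiteDimensional
    exact Submodule.subset_span (isExtremal_of_mem_extremePoints (φ := φ.toLinearMap) hφpos hv)
  have hconeW : Ici (0 : V) ⊆ W := fun x hx ↦ by
    obtain rfl | hx0 := (mem_Ici.1 hx).eq_or_lt
    · exact W.zero_mem
    have hφx := hφpos x hx0
    exact (W.smul_mem_iff (inv_ne_zero hφx.ne')).1
      (hBW ⟨smul_nonneg (by positivity) hx, by simp [hφx.ne']⟩)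
  exact W.eq_top_of_nonempty_interior' (hsolid.mono (interior_mono hconeW))

theorem exists_basis_isExtremal (hsolid : (interior (Ici (0 : V))).Nonempty) :
    ∃ b : Module.Basis (Fin (Module.finrank ℝ V)) ℝ V, ∀ i, IsExtremal (b i) := by
  have hspan := (span_setOf_isExtremal hsolid).ge
  have := FiniteDimensional.fintypeBasisIndex (Module.Basis.ofSpan hspan)
  refine ⟨(Module.Basis.ofSpan hspan).reindex (Fintype.equivFinOfCardEq
    (Module.finrank_eq_card_basis (.ofSpan hspan)).symm), fun i ↦ ?_⟩
  rw [Module.Basis.reindex_apply]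
  exact Module.Basis.ofSpan_subset hspan (mem_range_self _)

end ExtremalBasis

theorem monotoneOn_symm_periodicPts {X : Type*} [Preorder X] {f : X ≃ X} (hf : Monotone f) :
    MonotoneOn f.symm (periodicPts f) := by
  rintro x ⟨m, hm, hx⟩ y ⟨n, hn, hy⟩ hxy
  obtain ⟨N, hN⟩ := Nat.exists_eq_succ_of_ne_zero (Nat.mul_pos hm hn).ne'
  have hsymm : ∀ z, IsPeriodicPt f (m * n) z → f.symm z = f^[N] z := fun z hz ↦ by
    rw [f.symm_apply_eq, ← iterate_succ_apply' f, ← hN, hz.eq]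
  rw [hsymm x (hx.mul_const n), hsymm y (hy.const_mul m)]
  exact hf.iterate N hxy

section OrderDensity

variable {V : Type*} [AddCommGroup V] [Module ℝ V] [PartialOrder V] [IsOrderedAddMonoid V]
  [IsOrderedModule ℝ V] [TopologicalSpace V] [IsTopologicalAddGroup V] [ContinuousSMul ℝ V]
  {Ω : Set V}

theorem zero_mem_closure_interior_Ici (hsolid : (interior (Ici (0 : V))).Nonempty) :
    (0 : V) ∈ closure (interior (Ici 0)) := by
  rw [(convex_Ici (𝕜 := ℝ) (0 : V)).closure_interior_eq_closure_of_nonempty_interior hsolid]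
  exact subset_closure le_rfl

theorem mem_closure_setOf_sub_mem_interior_Ici (hsolid : (interior (Ici (0 : V))).Nonempty)
    (hΩ : IsOpen Ω) (z : Ω) : z ∈ closure {w : Ω | (w : V) - z ∈ interior (Ici 0)} := by
  change z ∈ closure (Subtype.val ⁻¹' (Homeomorph.subRight (z : V) ⁻¹' interior (Ici 0)))
  rw [← hΩ.isOpenMap_subtype_val.preimage_closure_eq_closure_preimage continuous_subtype_val,
    ← Homeomorph.preimage_closure]
  simpa using zero_mem_closure_interior_Ici hsolid

theorem mem_closure_setOf_sub_mem_interior_Ici' (hsolid : (interior (Ici (0 : V))).Nonempty)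
    (hΩ : IsOpen Ω) (z : Ω) : z ∈ closure {w : Ω | (z : V) - w ∈ interior (Ici 0)} := by
  change z ∈ closure (Subtype.val ⁻¹' (Homeomorph.subLeft (z : V) ⁻¹' interior (Ici 0)))
  rw [← hΩ.isOpenMap_subtype_val.preimage_closure_eq_closure_preimage continuous_subtype_val,
    ← Homeomorph.preimage_closure]
  simpa using zero_mem_closure_interior_Ici hsolid

theorem monotone_of_monotoneOn_dense {Y : Type*} [TopologicalSpace Y] [Preorder Y]
    [OrderClosedTopology Y] (hsolid : (interior (Ici (0 : V))).Nonempty) (hΩ : IsOpen Ω)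
    {D : Set Ω} (hD : Dense D) {g : Ω → Y} (hg : Continuous g) (hgD : MonotoneOn g D) :
    Monotone g := by
  intro x y hxy
  set O : Set (Ω × Ω) := {p | (p.2 : V) - p.1 ∈ interior (Ici 0)}
  have hOopen : IsOpen O := isOpen_interior.preimage (by fun_prop)
  have hxyO : (x, y) ∈ closure O :=
    map_mem_closure (by fun_prop : Continuous (Prod.mk x))
      (mem_closure_setOf_sub_mem_interior_Ici hsolid hΩ y) fun z hz ↦
        (isUpperSet_Ici 0).interior (sub_le_sub_left (Subtype.coe_le_coe.2 hxy) _) hz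
  have hOD : O ∩ D ×ˢ D ⊆ {p | g p.1 ≤ g p.2} := fun p hp ↦
    hgD hp.2.1 hp.2.2 (Subtype.coe_le_coe.1 (sub_nonneg.1 (interior_subset hp.1)))
  have hclosed : IsClosed {p : Ω × Ω | g p.1 ≤ g p.2} := isClosed_le (by fun_prop) (by fun_prop)
  exact closure_minimal hOD hclosed
    (closure_minimal ((hD.prod hD).open_subset_closure_inter hOopen) isClosed_closure hxyO)

end OrderDensity

theorem isFixedPt_of_monotone_of_mem_periodicPts {X : Type*} [PartialOrder X] {f : X → X}
    (hf : Monotone f) {x : X} (hx : x ∈ periodicPts f) (h : x ≤ f x ∨ f x ≤ x) :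
    IsFixedPt f x := by
  obtain ⟨n, hn, hx⟩ := hx
  obtain h | h := h
  · refine (h.antisymm ?_).symm
    simpa [hx.eq] using hf.monotone_iterate_of_le_map h (Nat.one_le_iff_ne_zero.2 hn.ne')
  · refine h.antisymm ?_
    simpa [hx.eq] using hf.antitone_iterate_of_map_le h (Nat.one_le_iff_ne_zero.2 hn.ne')

section Equicontinuity

variable {V : Type*} [NormedAddCommGroup V] [NormedSpace ℝ V] [PartialOrder V]
  [IsOrderedAddMonoid V] [IsOrderedModule ℝ V] {Ω : Set V}

theorem exists_mem_interior_Ici_norm_sub_lt (hsolid : (interior (Ici (0 : V))).Nonempty)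
    (hΩ : IsOpen Ω) {D : Set Ω} (hD : Dense D) (z : Ω) {δ : ℝ} (hδ : 0 < δ) :
    ∃ a ∈ D, ∃ b ∈ D, (z : V) - a ∈ interior (Ici 0) ∧ (b : V) - z ∈ interior (Ici 0) ∧
      ‖(b : V) - a‖ < δ := by
  have hopen : IsOpen {w : Ω | (w : V) - z ∈ interior (Ici 0)} :=
    isOpen_interior.preimage (by fun_prop)
  have hopen' : IsOpen {w : Ω | (z : V) - w ∈ interior (Ici 0)} :=
    isOpen_interior.preimage (by fun_prop)
  have hab : ∀ᶠ p : Ω × Ω in 𝓝 z ×ˢ 𝓝 z, ‖(p.2 : V) - p.1‖ < δ := by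
    rw [← nhds_prod_eq]
    exact (isOpen_lt (by fun_prop) (by fun_prop)).mem_nhds (by simpa using hδ)
  obtain ⟨a, ⟨ha, haD⟩, hab⟩ := (mem_closure_iff_frequently.1 (closure_minimal
    (hD.open_subset_closure_inter hopen') isClosed_closure
    (mem_closure_setOf_sub_mem_interior_Ici' hsolid hΩ z))).and_eventually hab.curry |>.exists
  obtain ⟨b, ⟨hb, hbD⟩, hab⟩ := (mem_closure_iff_frequently.1 (closure_minimal
    (hD.open_subset_closure_inter hopen) isClosed_closure
    (mem_closure_setOf_sub_mem_interior_Ici hsolid hΩ z))).and_eventually hab |>.exists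
  exact ⟨a, haD, b, hbD, ha, hb, hab⟩

variable [FiniteDimensional ℝ V] [OrderClosedTopology V] {f : Ω → Ω}

theorem eventually_norm_iterate_sub_le (hsolid : (interior (Ici (0 : V))).Nonempty)
    (hΩ : IsOpen Ω) (hf : Monotone f) (hper : Dense (periodicPts f)) (z : Ω) {ε : ℝ}
    (hε : 0 < ε) :
    ∃ N > 0, ∀ᶠ y in 𝓝 z, ∀ n, ‖((f^[N * n] y : Ω) : V) - y‖ ≤ ε := by
  obtain ⟨K, hKpos, hK⟩ := exists_norm_le_mul_norm V
  obtain ⟨a, ⟨m, hm, ha⟩, b, ⟨m', hm', hb⟩, haz, hzb, hab⟩ :=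
    exists_mem_interior_Ici_norm_sub_lt hsolid hΩ hper z (δ := ε / (2 * K)) (by positivity)
  have hIcc : ∀ᶠ y in 𝓝 z, y ∈ Icc a b := by
    have : ∀ᶠ y : Ω in 𝓝 z, (y : V) - a ∈ interior (Ici 0) ∧ (b : V) - y ∈ interior (Ici 0) :=
      ((isOpen_interior.preimage (by fun_prop)).inter
        (isOpen_interior.preimage (by fun_prop))).mem_nhds ⟨haz, hzb⟩
    filter_upwards [this] with y hy
    exact ⟨Subtype.coe_le_coe.1 (sub_nonneg.1 (interior_subset hy.1)),
      Subtype.coe_le_coe.1 (sub_nonneg.1 (interior_subset hy.2))⟩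
  refine ⟨m * m', by positivity, hIcc.mono fun y hy n ↦ ?_⟩
  have hiter : f^[m * m' * n] y ∈ Icc a b := by
    have hmono := hf.iterate (m * m' * n)
    exact ⟨((ha.mul_const m').mul_const n).eq.ge.trans (hmono hy.1),
      (hmono hy.2).trans ((hb.const_mul m).mul_const n).eq.le⟩
  have hdist : ∀ w ∈ Icc a b, ‖(w : V) - a‖ ≤ K * ‖(b : V) - a‖ := fun w hw ↦
    hK _ _ (sub_nonneg.2 hw.1) (sub_le_sub_right (Subtype.coe_le_coe.2 hw.2) _)
  calc ‖((f^[m * m' * n] y : Ω) : V) - y‖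
      ≤ ‖((f^[m * m' * n] y : Ω) : V) - a‖ + ‖(y : V) - a‖ := by
        simpa using norm_sub_le ((f^[m * m' * n] y : V) - a) (y - a)
    _ ≤ K * ‖(b : V) - a‖ + K * ‖(b : V) - a‖ := add_le_add (hdist _ hiter) (hdist y hy)
    _ ≤ K * (ε / (2 * K)) + K * (ε / (2 * K)) := by gcongr
    _ = ε := by field

theorem exists_forall_norm_iterate_sub_le (hsolid : (interior (Ici (0 : V))).Nonempty)
    (hΩ : IsOpen Ω) (hf : Monotone f) (hper : Dense (periodicPts f)) {K : Set Ω}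
    (hK : IsCompact K) {ε : ℝ} (hε : 0 < ε) :
    ∃ N > 0, ∀ y ∈ K, ∀ n, ‖((f^[N * n] y : Ω) : V) - y‖ ≤ ε := by
  refine hK.induction_on ⟨1, by simp⟩
    (fun s t hst ⟨N, hN, h⟩ ↦ ⟨N, hN, fun y hy ↦ h y (hst hy)⟩) ?_ fun z _ ↦ ?_
  · rintro s t ⟨M, hM, hs⟩ ⟨N, hN, ht⟩
    refine ⟨M * N, by positivity, ?_⟩
    rintro y (hy | hy) n
    · rw [mul_assoc]
      exact hs y hy _
    · rw [mul_comm M, mul_assoc]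
      exact ht y hy _
  · obtain ⟨N, hN, h⟩ := eventually_norm_iterate_sub_le hsolid hΩ hf hper z hε
    exact ⟨_, mem_nhdsWithin_of_mem_nhds h, N, hN, fun y hy ↦ hy⟩

end Equicontinuity

theorem mem_nhds_of_eventually_mem_dense {X : Type*} [TopologicalSpace X] {D F : Set X}
    (hD : Dense D) (hF : IsClosed F) {x : X} (h : ∀ᶠ y in 𝓝 x, y ∈ D → y ∈ F) : F ∈ 𝓝 x := by
  obtain ⟨O, hO, hOopen, hxO⟩ := eventually_nhds_iff.1 h
  exact mem_of_superset (hOopen.mem_nhds hxO) <| (hD.open_subset_closure_inter hOopen).trans <|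
    closure_minimal (fun y hy ↦ hO y hy.1 hy.2) hF

theorem exists_pos_eventually_forall_dist_le {X : Type*} [PseudoMetricSpace X] {x₀ : X}
    {p : X × X → Prop} (h : ∀ᶠ q in 𝓝 (x₀, x₀), p q) :
    ∃ ε > 0, ∀ᶠ x in 𝓝 x₀, ∀ y, dist y x ≤ ε → p (x, y) := by
  obtain ⟨δ, hδ, hp⟩ := Metric.eventually_nhds_iff.1 h
  refine ⟨δ / 2, half_pos hδ, Metric.eventually_nhds_iff.2
    ⟨δ / 2, half_pos hδ, fun x hx y hy ↦ hp ?_⟩⟩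
  rw [Prod.dist_eq]
  exact max_lt (hx.trans (half_lt_self hδ)) <|
    (dist_triangle y x x₀).trans_lt (by linarith)

theorem coe_orderIso_pow {X : Type*} [LE X] (F : X ≃o X) (n : ℕ) : ⇑(F ^ n) = F^[n] :=
  hom_coe_pow _ rfl (fun _ _ ↦ rfl) F n

section SignedCoordSum

variable {V : Type*} [AddCommGroup V] [Module ℝ V] {ι : Type*} [Fintype ι]
  (b : Module.Basis ι ℝ V)

/-- The sum of the coordinates in the basis `b`, each counted with the sign of the corresponding
coordinate of `d`: a linear functional that increases in every basis direction followed by a path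
that realises the coordinates of `d` one after the other. -/
noncomputable def signedCoordSum (d : V) : V →ₗ[ℝ] ℝ :=
  ∑ i, (SignType.sign (b.repr d i) : ℝ) • b.coord i

theorem signedCoordSum_basis (d : V) (i : ι) :
    signedCoordSum b d (b i) = SignType.sign (b.repr d i) := by
  classical
  simp [signedCoordSum, LinearMap.sum_apply, Finsupp.single_apply]

theorem abs_signedCoordSum_le (d v : V) : |signedCoordSum b d v| ≤ ∑ i, |b.repr v i| := by
  simp only [signedCoordSum, LinearMap.sum_apply, LinearMap.smul_apply, Module.Basis.coord_apply,
    smul_eq_mul]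
  refine (Finset.abs_sum_le_sum_abs _ _).trans (Finset.sum_le_sum fun i _ ↦ ?_)
  rcases lt_trichotomy (b.repr d i) 0 with h | h | h <;> simp [h]

end SignedCoordSum

section Coordinates

variable {V : Type*} [AddCommGroup V] [Module ℝ V] [TopologicalSpace V]
  [IsTopologicalAddGroup V] [ContinuousSMul ℝ V] [T2Space V] {ι : Type*} [Finite ι]
  (b : Module.Basis ι ℝ V)

theorem continuous_basis_repr (i : ι) : Continuous fun v : V ↦ b.repr v i :=
  have := Module.Finite.of_basis b
  (b.coord i).continuous_of_finiteDimensional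

/-- Nearby points are joined inside `U` by a path that changes one coordinate at a time; a property
preserved by such steps therefore passes from one point to the other. -/
theorem eventually_basis_induction {Ω : Set V} (hΩ : IsOpen Ω) {x₀ : Ω}
    {U : Set Ω} (hU : U ∈ 𝓝 x₀) :
    ∀ᶠ q : Ω × Ω in 𝓝 (x₀, x₀), ∀ P : Ω → Prop, P q.1 →
      (∀ z ∈ U, ∀ z' ∈ U, ∀ i, (z' : V) - z = b.repr ((q.2 : V) - q.1) i • b i → P z → P z') →
      P q.2 := by
  classical
  have := Fintype.ofFinite ι
  set path : Finset ι → Ω × Ω → V :=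
    fun s q ↦ q.1 + ∑ i ∈ s, b.repr ((q.2 : V) - q.1) i • b i with hpath
  have hcont : ∀ s, Continuous (path s) := fun s ↦ by
    have := continuous_basis_repr b
    fun_prop
  have hmem : ∀ᶠ q in 𝓝 (x₀, x₀), ∀ s, path s q ∈ Subtype.val '' U := by
    refine eventually_all.2 fun s ↦ (hcont s).continuousAt.preimage_mem_nhds ?_
    simpa [hpath] using hΩ.isOpenMap_subtype_val.image_mem_nhds hU
  filter_upwards [hmem] with q hq P hP hstep
  have hpathP : ∀ s, ∃ z ∈ U, (z : V) = path s q ∧ P z := fun s ↦ by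
    induction s using Finset.induction_on with
    | empty =>
      obtain ⟨z, hz, hzq⟩ := hq ∅
      have : z = q.1 := Subtype.ext (by simpa [hpath] using hzq)
      exact ⟨z, hz, hzq, this ▸ hP⟩
    | insert i s his ih =>
      obtain ⟨z, hz, hzs, hPz⟩ := ih
      obtain ⟨z', hz', hzs'⟩ := hq (insert i s)
      refine ⟨z', hz', hzs', hstep z hz z' hz' i ?_ hPz⟩
      simp only [hzs', hzs, hpath, Finset.sum_insert his]
      abel
  obtain ⟨z, -, hz, hPz⟩ := hpathP Finset.univ
  have : z = q.2 := Subtype.ext (hz.trans (by simp only [hpath, b.sum_repr, add_sub_cancel]))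
  exact this ▸ hPz

theorem exists_pos_eventually_add_smul_mem {V : Type*} [AddCommGroup V] [Module ℝ V]
    [TopologicalSpace V] [ContinuousAdd V] [ContinuousSMul ℝ V] {Ω : Set V} (hΩ : IsOpen Ω)
    {x₀ : Ω} {K : Set Ω} (hK : K ∈ 𝓝 x₀) {ι : Type*} [Finite ι] (v : ι → V) :
    ∃ T : ℝ, 0 < T ∧ ∀ᶠ z : Ω in 𝓝 x₀, ∀ i, (z : V) + T • v i ∈ Subtype.val '' K := by
  have h : ∀ᶠ p : ℝ × Ω in 𝓝 0 ×ˢ 𝓝 x₀, ∀ i, (p.2 : V) + p.1 • v i ∈ Subtype.val '' K := by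
    refine eventually_all.2 fun i ↦ ?_
    rw [← nhds_prod_eq]
    have hcont : Continuous fun p : ℝ × Ω ↦ (p.2 : V) + p.1 • v i := by fun_prop
    refine hcont.continuousAt.preimage_mem_nhds ?_
    simpa using hΩ.isOpenMap_subtype_val.image_mem_nhds hK
  exact ((eventually_mem_nhdsWithin (s := Ioi (0 : ℝ))).and
    (h.curry.filter_mono nhdsWithin_le_nhds)).exists

theorem exists_pos_forall_sum_abs_repr_lt {V : Type*} [NormedAddCommGroup V] [NormedSpace ℝ V]
    {ι : Type*} [Fintype ι] (b : Module.Basis ι ℝ V) {δ : ℝ} (hδ : 0 < δ) :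
    ∃ ε > 0, ∀ v : V, ‖v‖ ≤ ε → ∑ i, |b.repr v i| < δ := by
  have hcont : Continuous fun v : V ↦ ∑ i, |b.repr v i| := by
    have := continuous_basis_repr b
    fun_prop
  have : ∀ᶠ v : V in 𝓝 0, ∑ i, |b.repr v i| < δ :=
    (isOpen_lt hcont continuous_const).mem_nhds (by simpa using hδ)
  simpa using Metric.nhds_basis_closedBall.eventually_iff.1 this

end Coordinates

section LocalPeriodicity

variable {V : Type*} [NormedAddCommGroup V] [NormedSpace ℝ V] [PartialOrder V]
  [IsOrderedAddMonoid V] [IsOrderedModule ℝ V] [OrderClosedTopology V] {Ω : Set V}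

theorem signedCoordSum_lt_map_orderIso {ι : Type*} [Fintype ι] {b : Module.Basis ι ℝ V}
    (hb : ∀ i, IsExtremal (b i)) (hΩ : IsOpen Ω) (k : Ω ≃o Ω) {T : ℝ} {K : Set Ω}
    (hK : ∀ z ∈ K, ∑ i, |b.repr ((k z : V) - z) i| < T / 2) {d : V} {i : ι}
    (hdT : |b.repr d i| ≤ T) (hd : b.repr d i ≠ 0) {z z' : Ω} (hz : z ∈ K) (hz' : z' ∈ K)
    (hzT : (z : V) + T • b i ∈ Subtype.val '' K) (hzT' : (z' : V) + T • b i ∈ Subtype.val '' K)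
    (hzz' : (z' : V) - z = b.repr d i • b i) :
    signedCoordSum b d (k z) < signedCoordSum b d (k z') := by
  obtain ⟨y, hy, hyz⟩ := hzT
  obtain ⟨y', hy', hyz'⟩ := hzT'
  have hclose : ∀ w ∈ K, |signedCoordSum b d (k w - w)| < T / 2 := fun w hw ↦
    (abs_signedCoordSum_le b d _).trans_lt (hK w hw)
  rcases hd.lt_or_gt with hneg | hpos
  · -- `z` lies beyond `z'` in direction `b i`, and the negated functional increases along `b i`.
    have h := (hb i).lt_map_orderIso hΩ k (ℓ := -signedCoordSum b d) (z := z') (z' := z)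
      (by simp [signedCoordSum_basis, hneg]) (neg_pos.2 hneg) ((neg_le_abs _).trans hdT)
      (by rw [neg_smul, ← hzz', neg_sub]) (by rw [hyz', add_sub_cancel_left])
      (by simpa only [LinearMap.neg_apply, abs_neg] using hclose z' hz')
      (by simpa only [LinearMap.neg_apply, abs_neg] using hclose y' hy')
    simpa using h
  · exact (hb i).lt_map_orderIso hΩ k (by simp [signedCoordSum_basis, hpos]) hpos
      ((le_abs_self _).trans hdT) hzz' (by rw [hyz, add_sub_cancel_left]) (hclose z hz)
      (hclose y hy)

variable {ι : Type*} [Finite ι] {b : Module.Basis ι ℝ V}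

theorem exists_eventually_forall_orderIso_lt (hb : ∀ i, IsExtremal (b i)) (hΩ : IsOpen Ω) {x₀ : Ω}
    {K : Set Ω} (hK : K ∈ 𝓝 x₀) :
    ∃ ε > 0, ∀ᶠ x : Ω in 𝓝 x₀, ∀ y : Ω, y ≠ x → ‖(y : V) - x‖ ≤ ε →
      ∃ ℓ : V →ₗ[ℝ] ℝ, ∀ k : Ω ≃o Ω, (∀ z ∈ K, ‖(k z : V) - z‖ ≤ ε) → ℓ (k x) < ℓ (k y) := by
  have := Fintype.ofFinite ι
  obtain ⟨T, hT0, hTK⟩ := exists_pos_eventually_add_smul_mem hΩ hK b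
  obtain ⟨ε₁, hε₁, hsmall⟩ := exists_pos_forall_sum_abs_repr_lt b (half_pos hT0)
  obtain ⟨ε₂, hε₂, hind⟩ := exists_pos_eventually_forall_dist_le
    (eventually_basis_induction b hΩ (inter_mem hK hTK))
  refine ⟨min ε₁ ε₂, lt_min hε₁ hε₂, hind.mono fun x hx y hyx hdist ↦
    ⟨signedCoordSum b (y - x), fun k hk ↦ ?_⟩⟩
  have hclose : ∀ z ∈ K, ∑ i, |b.repr ((k z : V) - z) i| < T / 2 := fun z hz ↦
    hsmall _ ((hk z hz).trans (min_le_left _ _))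
  have hdT : ∀ i, |b.repr ((y : V) - x) i| ≤ T := fun i ↦
    calc |b.repr ((y : V) - x) i|
        ≤ ∑ j, |b.repr ((y : V) - x) j| :=
          Finset.single_le_sum (fun j _ ↦ abs_nonneg (b.repr ((y : V) - x) j)) (Finset.mem_univ i)
      _ ≤ T / 2 := (hsmall _ (hdist.trans (min_le_left _ _))).le
      _ ≤ T := half_le_self hT0.le
  have hdist₂ : dist y x ≤ ε₂ := by
    rw [Subtype.dist_eq, dist_eq_norm]
    exact hdist.trans (min_le_right _ _)
  set ℓ := signedCoordSum b ((y : V) - x)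
  refine (hx y hdist₂ (fun w ↦ w = x ∨ ℓ (k x) < ℓ (k w)) (Or.inl rfl)
    fun z hz z' hz' i hzz' hP ↦ ?_).resolve_left hyx
  by_cases hd : b.repr ((y : V) - x) i = 0
  · rw [hd, zero_smul, sub_eq_zero, Subtype.coe_inj] at hzz'
    rwa [hzz']
  · have hlt := signedCoordSum_lt_map_orderIso hb hΩ k hclose (hdT i) hd hz.1 hz'.1 (hz.2 i)
      (hz'.2 i) hzz'
    exact Or.inr (hP.elim (fun h ↦ h ▸ hlt) hlt.trans')

theorem exists_pos_isPeriodicPt_mem_nhds [FiniteDimensional ℝ V]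
    (hsolid : (interior (Ici (0 : V))).Nonempty) (hΩ : IsOpen Ω) {F : Ω ≃o Ω} (hF : Continuous F)
    (hper : Dense (periodicPts F)) (x₀ : Ω) : ∃ N > 0, {z | IsPeriodicPt F N z} ∈ 𝓝 x₀ := by
  obtain ⟨b, hb⟩ := exists_basis_isExtremal hsolid
  have := hΩ.locallyCompactSpace
  obtain ⟨K, hKcpt, hK⟩ := exists_compact_mem_nhds x₀
  obtain ⟨ε, hε, hsep⟩ := exists_eventually_forall_orderIso_lt hb hΩ hK
  obtain ⟨N, hN, hclose⟩ := exists_forall_norm_iterate_sub_le hsolid hΩ F.monotone hper hKcpt hε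
  refine ⟨N, hN, mem_nhds_of_eventually_mem_dense hper
    (isClosed_eq (hF.iterate N) continuous_id) ?_⟩
  filter_upwards [hsep, hK] with x hx hxK ⟨m, hm, hxm⟩
  by_contra hne
  obtain ⟨ℓ, hℓ⟩ := hx (F^[N] x) hne (by simpa using hclose x hxK 1)
  have hmono : StrictMono fun n ↦ ℓ (F^[N * n] x) := strictMono_nat_of_lt_succ fun n ↦ by
    have h := hℓ (F ^ (N * n)) fun z hz ↦ by
      rw [coe_orderIso_pow]
      exact hclose z hz n
    rwa [coe_orderIso_pow, ← iterate_add_apply, ← Nat.mul_succ] at h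
  have h := hmono hm
  simp only [mul_zero, iterate_zero, id_eq, (hxm.const_mul N).eq, lt_irrefl] at h

end LocalPeriodicity

section Spreading

theorem exists_mem_Ioo_add_smul_sub_mem {V : Type*} [AddCommGroup V] [Module ℝ V]
    [TopologicalSpace V] [ContinuousAdd V] [ContinuousSMul ℝ V] {Ω : Set V} (hΩ : IsOpen Ω)
    {W : Set Ω} {q : Ω} (hW : W ∈ 𝓝 q) (y : Ω) :
    ∃ s ∈ Ioo (0 : ℝ) 1, ∃ r ∈ W, (r : V) - q = s • ((y : V) - q) := by
  have hmem := eventually_add_smul_mem (hΩ.isOpenMap_subtype_val.image_mem_nhds hW) ((y : V) - q)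
  obtain ⟨s, ⟨⟨r, hr, hrs⟩, hs1⟩, hs0⟩ := ((hmem.and (eventually_lt_nhds one_pos)).filter_mono
    nhdsWithin_le_nhds |>.and (eventually_mem_nhdsWithin (s := Ioi (0 : ℝ)))).exists
  exact ⟨s, ⟨hs0, hs1⟩, r, hr, by rw [hrs, add_sub_cancel_left]⟩

variable {V : Type*} [AddCommGroup V] [Module ℝ V] [PartialOrder V] [IsOrderedAddMonoid V]
  [IsOrderedModule ℝ V] [TopologicalSpace V] [IsTopologicalAddGroup V] [ContinuousSMul ℝ V]
  [OrderClosedTopology V] {Ω : Set V} {k : Ω ≃o Ω}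

theorem IsExtremal.le_or_ge_map_of_mem_nhds (hΩ : IsOpen Ω) {q y : Ω}
    (hq : fixedPoints k ∈ 𝓝 q) (hqy : IsExtremal ((y : V) - q)) : y ≤ k y ∨ k y ≤ y := by
  obtain ⟨s, hs, r, hr, hrs⟩ := exists_mem_Ioo_add_smul_sub_mem hΩ hq y
  have hry : r ≤ y := by
    rw [← Subtype.coe_le_coe, ← sub_le_sub_iff_right (q : V), hrs]
    exact smul_le_of_le_one_left hqy.1 hs.2.le
  have hrky : (r : V) ≤ k y := hr.eq.ge.trans (k.monotone hry)
  have hkqy : IsExtremal ((k y : V) - q) := by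
    simpa only [(mem_of_mem_nhds hq).eq] using hqy.map_orderIso hΩ k
  exact (hkqy.le_or_ge_of_smul_le hqy.1 hs.1 (hrs ▸ sub_le_sub_right hrky _)).imp
    (sub_le_sub_iff_right (q : V)).1 (sub_le_sub_iff_right (q : V)).1

theorem IsExtremal.le_or_ge_map_of_mem_nhds' (hΩ : IsOpen Ω) {q y : Ω}
    (hq : fixedPoints k ∈ 𝓝 q) (hyq : IsExtremal ((q : V) - y)) : y ≤ k y ∨ k y ≤ y := by
  obtain ⟨s, hs, r, hr, hrs⟩ := exists_mem_Ioo_add_smul_sub_mem hΩ hq y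
  replace hrs : (q : V) - r = s • ((q : V) - y) := by
    rw [← neg_sub, hrs, ← smul_neg, neg_sub]
  have hyr : y ≤ r := by
    rw [← Subtype.coe_le_coe, ← sub_le_sub_iff_left (q : V), hrs]
    exact smul_le_of_le_one_left hyq.1 hs.2.le
  have hkyr : (k y : V) ≤ r := (k.monotone hyr).trans hr.eq.le
  have hkyq : IsExtremal ((q : V) - k y) := by
    simpa only [(mem_of_mem_nhds hq).eq] using hyq.map_orderIso hΩ k
  exact (hkyq.le_or_ge_of_smul_le hyq.1 hs.1 (hrs ▸ sub_le_sub_left hkyr _)).symm.imp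
    (sub_le_sub_iff_left (q : V)).1 (sub_le_sub_iff_left (q : V)).1

theorem mem_interior_fixedPoints_of_isExtremal_sub (hΩ : IsOpen Ω) (hk : Continuous k)
    (hper : Dense (periodicPts k)) {z z' : Ω} (hz : z ∈ interior (fixedPoints k))
    (hzz' : IsExtremal ((z' : V) - z) ∨ IsExtremal ((z : V) - z')) :
    z' ∈ interior (fixedPoints k) := by
  have htranslate : ∀ᶠ y : Ω in 𝓝 z',
      (y : V) - (z' - z) ∈ Subtype.val '' interior (fixedPoints k) := by
    have hcont : Continuous fun y : Ω ↦ (y : V) - (z' - z) := by fun_prop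
    refine hcont.continuousAt.preimage_mem_nhds ?_
    rw [sub_sub_cancel]
    exact hΩ.isOpenMap_subtype_val.image_mem_nhds (isOpen_interior.mem_nhds hz)
  refine mem_interior_iff_mem_nhds.2 (mem_nhds_of_eventually_mem_dense hper
    (isClosed_eq hk continuous_id) (htranslate.mono ?_))
  rintro y ⟨q, hq, hqy⟩ hy
  rw [mem_interior_iff_mem_nhds] at hq
  refine isFixedPt_of_monotone_of_mem_periodicPts k.monotone hy ?_
  obtain h | h := hzz'
  · exact IsExtremal.le_or_ge_map_of_mem_nhds hΩ hq (by rwa [hqy, sub_sub_cancel])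
  · exact IsExtremal.le_or_ge_map_of_mem_nhds' hΩ hq (by rwa [hqy, sub_sub_cancel_left, neg_sub])

theorem isClosed_interior_fixedPoints {ι : Type*} [Finite ι] {b : Module.Basis ι ℝ V}
    (hb : ∀ i, IsExtremal (b i)) (hΩ : IsOpen Ω) (hk : Continuous k)
    (hper : Dense (periodicPts k)) : IsClosed (interior (fixedPoints k)) := by
  refine isClosed_iff_frequently.2 fun x₀ hx₀ ↦ ?_
  have hind := eventually_basis_induction b hΩ (univ_mem : univ ∈ 𝓝 x₀)
  rw [nhds_prod_eq] at hind
  obtain ⟨z, hz, hzx₀⟩ := (hx₀.and_eventually hind.curry).exists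
  refine hzx₀.self_of_nhds _ hz fun w _ w' _ i hww' hw ↦
    mem_interior_fixedPoints_of_isExtremal_sub hΩ hk hper hw ?_
  rw [hww', ← neg_sub (w' : V), hww', ← neg_smul]
  exact (le_total 0 _).imp (hb i).smul fun h ↦ (hb i).smul (neg_nonneg.2 h)

end Spreading

theorem exists_forall_isPeriodicPt_of_dense_periodicPts {V : Type*} [NormedAddCommGroup V]
    [NormedSpace ℝ V] [FiniteDimensional ℝ V] [PartialOrder V] [IsOrderedAddMonoid V]
    [IsOrderedModule ℝ V] [OrderClosedTopology V] (hsolid : (interior (Ici (0 : V))).Nonempty)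
    {Ω : Set V} (hΩ : IsOpen Ω) (hconn : IsConnected Ω) (f : Ω ≃ₜ Ω) (hf : Monotone f)
    (hper : Dense (periodicPts f)) : ∃ N > 0, ∀ x, IsPeriodicPt f N x := by
  have hsymm : Monotone f.symm := monotone_of_monotoneOn_dense hsolid hΩ hper f.symm.continuous
    (monotoneOn_symm_periodicPts (f := f.toEquiv) hf)
  let F : Ω ≃o Ω := f.toEquiv.toOrderIso hf hsymm
  obtain ⟨b, hb⟩ := exists_basis_isExtremal hsolid
  have := isConnected_iff_connectedSpace.1 hconn
  obtain ⟨x₀⟩ := hconn.nonempty.to_subtype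
  obtain ⟨N, hN, hx₀⟩ := exists_pos_isPeriodicPt_mem_nhds hsolid hΩ (F := F) f.continuous hper x₀
  have hcont : Continuous (F ^ N) := by
    rw [coe_orderIso_pow]
    exact f.continuous.iterate N
  have hperN : Dense (periodicPts (F ^ N)) := by
    rw [coe_orderIso_pow]
    refine hper.mono ?_
    rintro x ⟨m, hm, hx⟩
    exact ⟨m, hm, hx.iterate N⟩
  have hclopen : IsClopen (interior (fixedPoints (F ^ N))) :=
    ⟨isClosed_interior_fixedPoints hb hΩ hcont hperN, isOpen_interior⟩
  have huniv := hclopen.eq_univ ⟨x₀, mem_interior_iff_mem_nhds.2 (by rwa [coe_orderIso_pow])⟩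
  refine ⟨N, hN, fun x ↦ ?_⟩
  have hx : x ∈ fixedPoints (F ^ N) := interior_subset (huniv.ge (mem_univ x))
  rwa [coe_orderIso_pow] at hx

theorem exists_partialOrder_forall_le_iff_sub_mem {V : Type*} [AddCommGroup V] [Module ℝ V]
    [TopologicalSpace V] [ContinuousSub V] {C : Set V} (hconv : Convex ℝ C)
    (hsmul : ∀ c : ℝ, 0 ≤ c → ∀ x ∈ C, c • x ∈ C) (hpointed : C ∩ (-C) = {0})
    (hclosed : IsClosed C) :
    ∃ _ : PartialOrder V, IsOrderedAddMonoid V ∧ IsOrderedModule ℝ V ∧ OrderClosedTopology V ∧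
      ∀ x y : V, x ≤ y ↔ y - x ∈ C := by
  let cone : ConvexCone ℝ V :=
    { carrier := C
      smul_mem' := fun c hc x hx ↦ hsmul c hc.le x hx
      add_mem' := fun x hx y hy ↦ by
        have hmid : (2⁻¹ : ℝ) • x + (2⁻¹ : ℝ) • y ∈ C :=
          hconv hx hy (by norm_num) (by norm_num) (by norm_num)
        simpa [smul_smul] using hsmul 2 zero_le_two _ hmid }
  have hzero : cone.Pointed := (hpointed.ge rfl).1
  have hsalient : cone.Salient := fun x hx hx0 hnx ↦ hx0 (hpointed.le ⟨hx, hnx⟩)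
  let order := cone.toPartialOrder hzero hsalient
  have hadd := cone.to_isOrderedAddMonoid hzero hsalient
  refine ⟨order, hadd, .of_smul_nonneg fun c hc x hx ↦ ?_, ⟨?_⟩, fun _ _ ↦ Iff.rfl⟩
  · change c • x - 0 ∈ C
    rw [sub_zero]
    exact hsmul c hc x (by simpa using (show x - 0 ∈ C from hx))
  · exact hclosed.preimage (by fun_prop : Continuous fun p : V × V ↦ p.2 - p.1)

/-- Hirsch's conjecture: a monotone homeomorphism of a nonempty open connected
subset of a finite-dimensional real vector space with dense periodic points is
periodic. -/
theorem monotone_dense_periodic_points_implies_periodic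
    {V : Type*} [NormedAddCommGroup V] [NormedSpace ℝ V] [FiniteDimensional ℝ V]
    (C : Set V)
    (hCconv : Convex ℝ C)
    (hCscal : ∀ (c : ℝ), 0 ≤ c → ∀ x ∈ C, c • x ∈ C)
    (hCpointed : C ∩ (-C) = {0})
    (hCclosed : IsClosed C)
    (hCsolid : (interior C).Nonempty)
    (Ω : Set V) (hΩne : Ω.Nonempty) (hΩopen : IsOpen Ω) (hΩconn : IsConnected Ω)
    (f : Ω ≃ₜ Ω)
    (hmono : ∀ x y : Ω, ((y : V) - (x : V)) ∈ C → ((f y : V) - (f x : V)) ∈ C)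
    (hdense : Dense {x : Ω | ∃ p : ℕ, 1 ≤ p ∧ (⇑f)^[p] x = x}) :
    ∃ p : ℕ, 1 ≤ p ∧ ∀ x : Ω, (⇑f)^[p] x = x := by
  obtain ⟨_, _, _, _, hle⟩ :=
    exists_partialOrder_forall_le_iff_sub_mem hCconv hCscal hCpointed hCclosed
  have hCeq : C = Ici 0 := ext fun x ↦ by rw [mem_Ici, hle, sub_zero]
  exact exists_forall_isPeriodicPt_of_dense_periodicPts (hCeq ▸ hCsolid) hΩopen hΩconn f
    (fun x y hxy ↦ (hle _ _).2 (hmono x y ((hle _ _).1 hxy))) hdense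
end

section
/- If f : Ω → Ω is a homeomorphism of a nonempty open connected subset Ω of a finite-dimensional real normed vector space V and every point x ∈ Ω is a periodic point of f, then f is periodic; that is, there exists an integer p ≥ 1 such that f^p(x) = x for all x ∈ Ω. -/
/-!
By Baire's theorem some iterate `f^[n]` with `n ≠ 0` is the identity on a nonempty open set, and the
task is to propagate this. Newman's theorem does so where the periods are bounded: a periodic
continuous map of a connected manifold that fixes a nonempty open set pointwise is the identity.
Where they are not bounded, Baire's theorem on the closed set of bad points and Newman's theorem for
a map that is an iterate of `f` on an open invariant set and the identity elsewhere show that there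
are no bad points.

For Newman's theorem it suffices to treat an action of a group `G` of prime order `p` on an open
subset of `ℝⁿ` that fixes a ball around `w` pointwise, but moves a nearby point `y`. Measure the
degree, modulo `p`, of the map sending `x` to the mean of its orbit minus a base point: integrate
over finer and finer meshes the Alexander–Spanier cocycle that detects fully labelled Sperner
simplices. With base point `w` the map is `x ↦ x - w` around its only zero, and the integral is `1`.
Let the base point depend on `x`, and move it to `y` as the diameter of the orbit of `x` tends to
`0`. The integral does not change, but now no zero is a fixed point, so the cocycle, which is
`G`-invariant, lives on points that are not fixed. There it is a sum of cocycles each of which is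
the sum of `p` translates of one piece; translates have equal integrals, and the integral is `0`.
-/

namespace Newman

open Filter Topology Uniformity

section Cochains

variable {X Y R : Type*} [CommRing R]

/-- Alexander–Spanier cochains on `X`, indexed by the number `m` of points on which they depend
(one more than their degree). -/
abbrev Cochain (X R : Type*) (m : ℕ) : Type _ := (Fin m → X) → R

/-- The alternating sum over the faces of a tuple. -/
def coboundary {m : ℕ} : Cochain X R m →ₗ[R] Cochain X R (m + 1) :=
  ∑ i : Fin (m + 1), (-1 : R) ^ (i : ℕ) • LinearMap.funLeft R R fun x => x ∘ i.succAbove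

theorem coboundary_apply {m : ℕ} (c : Cochain X R m) (x : Fin (m + 1) → X) :
    coboundary c x = ∑ i : Fin (m + 1), (-1) ^ (i : ℕ) * c (x ∘ i.succAbove) := by
  simp [coboundary, LinearMap.funLeft_apply]

theorem coboundary_comp {m : ℕ} (φ : Y → X) (c : Cochain X R m) (x : Fin (m + 1) → Y) :
    coboundary (fun y => c (φ ∘ y)) x = coboundary c (φ ∘ x) := by
  simp only [coboundary_apply, Function.comp_assoc]

theorem coboundary_congr {m : ℕ} {c c' : Cochain X R m} {x : Fin (m + 1) → X}
    (h : ∀ i : Fin (m + 1), c (x ∘ i.succAbove) = c' (x ∘ i.succAbove)) :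
    coboundary c x = coboundary c' x := by
  simp only [coboundary_apply, h]

theorem coboundary_cons {m : ℕ} (c : Cochain X R (m + 1)) (a : X) (x : Fin (m + 1) → X) :
    coboundary c (Fin.cons a x) = c x - coboundary (fun y => c (Fin.cons a y)) x := by
  have head : (Fin.cons a x : Fin (m + 2) → X) ∘ (0 : Fin (m + 2)).succAbove = x := by
    ext j; simp
  have tail (i : Fin (m + 1)) : (Fin.cons a x : Fin (m + 2) → X) ∘ i.succ.succAbove =
      Fin.cons a (x ∘ i.succAbove) := by
    ext j; cases j using Fin.cases <;> simp
  rw [coboundary_apply, Fin.sum_univ_succ, head, coboundary_apply, sub_eq_add_neg,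
    ← Finset.sum_neg_distrib]
  simp [tail, pow_succ]

/-- The vertices `φ x₀, …, φ xᵢ, ψ xᵢ, …, ψ xₘ₋₁` of the `i`-th simplex of the prism between the
`φ`-image and the `ψ`-image of the tuple `x`. -/
def prismSimplex {m : ℕ} (φ ψ : Y → X) (i : Fin m) (x : Fin m → Y) : Fin (m + 1) → X :=
  fun j => if j ≤ i.castSucc then φ (x (i.predAbove j)) else ψ (x (i.predAbove j))

theorem prismSimplex_eq_or {m : ℕ} (φ ψ : Y → X) (i : Fin m) (x : Fin m → Y) (j : Fin (m + 1)) :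
    ∃ a, prismSimplex φ ψ i x j = φ (x a) ∨ prismSimplex φ ψ i x j = ψ (x a) := by
  refine ⟨i.predAbove j, ?_⟩
  unfold prismSimplex
  split_ifs <;> simp

theorem exists_prismSimplex_eq {m : ℕ} (φ ψ : Y → X) (i : Fin m) (x : Fin m → Y) (a : Fin m) :
    ∃ j, prismSimplex φ ψ i x j = φ (x a) ∨ prismSimplex φ ψ i x j = ψ (x a) := by
  obtain ⟨j, rfl⟩ := Fin.predAbove_surjective i a
  refine ⟨j, ?_⟩
  unfold prismSimplex
  split_ifs <;> simp

theorem prismSimplex_zero_cons {m : ℕ} (φ ψ : Y → X) (a : Y) (x : Fin m → Y) :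
    prismSimplex φ ψ 0 (Fin.cons a x) = Fin.cons (φ a) (Fin.cons (ψ a) (ψ ∘ x)) := by
  ext j
  cases j using Fin.cases with
  | zero => simp [prismSimplex]
  | succ j => cases j using Fin.cases <;> simp [prismSimplex]

theorem prismSimplex_succ_cons {m : ℕ} (φ ψ : Y → X) (i : Fin m) (a : Y) (x : Fin m → Y) :
    prismSimplex φ ψ i.succ (Fin.cons a x) = Fin.cons (φ a) (prismSimplex φ ψ i x) := by
  ext j
  cases j using Fin.cases with
  | zero => simp [prismSimplex]
  | succ j => simp [prismSimplex, Fin.succ_le_succ_iff]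

/-- The chain homotopy between pulling back along `φ` and along `ψ`. -/
def prism {m : ℕ} (φ ψ : Y → X) : Cochain X R (m + 1) →ₗ[R] Cochain Y R m :=
  ∑ i : Fin m, (-1 : R) ^ (i : ℕ) • LinearMap.funLeft R R (prismSimplex φ ψ i)

theorem prism_apply {m : ℕ} (φ ψ : Y → X) (c : Cochain X R (m + 1)) (x : Fin m → Y) :
    prism φ ψ c x = ∑ i : Fin m, (-1) ^ (i : ℕ) * c (prismSimplex φ ψ i x) := by
  simp [prism, LinearMap.funLeft_apply]

theorem prism_cons {m : ℕ} (φ ψ : Y → X) (c : Cochain X R (m + 2)) (a : Y) (x : Fin m → Y) :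
    prism φ ψ c (Fin.cons a x) = c (Fin.cons (φ a) (Fin.cons (ψ a) (ψ ∘ x))) -
      prism φ ψ (fun y => c (Fin.cons (φ a) y)) x := by
  rw [prism_apply, Fin.sum_univ_succ, prismSimplex_zero_cons, prism_apply, sub_eq_add_neg,
    ← Finset.sum_neg_distrib]
  simp [prismSimplex_succ_cons, pow_succ]

theorem prism_coboundary_add_coboundary_prism {m : ℕ} (φ ψ : Y → X) (c : Cochain X R (m + 1))
    (x : Fin (m + 1) → Y) :
    prism φ ψ (coboundary c) x + coboundary (prism φ ψ c) x = c (ψ ∘ x) - c (φ ∘ x) := by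
  induction m with
  | zero =>
    have hx : prismSimplex φ ψ 0 x = ![φ (x 0), ψ (x 0)] := by
      ext j; fin_cases j <;> rfl
    have hφ : ![φ (x 0), ψ (x 0)] ∘ (1 : Fin 2).succAbove = φ ∘ x := by
      ext j; fin_cases j; rfl
    have hψ : ![φ (x 0), ψ (x 0)] ∘ Fin.succ = ψ ∘ x := by
      ext j; fin_cases j; rfl
    simp [prism_apply, coboundary_apply, Fin.sum_univ_two, hx, hφ, hψ, sub_eq_add_neg]
  | succ m ih =>
    cases x using Fin.consCases with
    | cons a x =>
    have hδ : (fun y => coboundary c (Fin.cons (φ a) y)) =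
        c - coboundary (fun y => c (Fin.cons (φ a) y)) := by
      ext y; exact coboundary_cons c (φ a) y
    have hP : (fun y => prism φ ψ c (Fin.cons a y)) =
        (fun y => c (Fin.cons (φ a) (Fin.cons (ψ a) (ψ ∘ y)))) -
          prism φ ψ (fun y => c (Fin.cons (φ a) y)) := by
      ext y; exact prism_cons φ ψ c a y
    have hIH := ih (fun y => c (Fin.cons (φ a) y)) x
    have hψ := coboundary_comp ψ (fun y => c (Fin.cons (φ a) (Fin.cons (ψ a) y))) x
    rw [prism_cons, hδ, map_sub, Pi.sub_apply, coboundary_cons, coboundary_cons, coboundary_cons,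
      hP, map_sub, Pi.sub_apply, hψ, Fin.comp_cons, Fin.comp_cons]
    linear_combination hIH

end Cochains

section LabelSign

variable {n : ℕ} (R : Type*) [CommRing R]

/-- The sign of a labelling of the vertices of an `n`-simplex by `n + 1` labels, or `0` if some
label is missing. -/
def labelSign (l : Fin (n + 1) → Fin (n + 1)) : R :=
  Matrix.det (Matrix.of fun i j => if l i = j then (1 : R) else 0)

theorem labelSign_id : labelSign R (id : Fin (n + 1) → Fin (n + 1)) = 1 := by
  have hone : (Matrix.of fun i j : Fin (n + 1) => if id i = j then (1 : R) else 0) = 1 := by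
    ext i j
    simp [Matrix.one_apply]
  rw [labelSign, hone, Matrix.det_one]

variable {R}

theorem injective_of_labelSign_ne_zero {l : Fin (n + 1) → Fin (n + 1)} (h : labelSign R l ≠ 0) :
    Function.Injective l := by
  intro i j hij
  by_contra hne
  exact h (Matrix.det_zero_of_row_eq hne (by ext k; simp [hij]))

/-- Expanding along the constant first column: the columns of the matrix of a labelling sum to the
constant column `1`. -/
theorem coboundary_labelSign (l : Fin (n + 2) → Fin (n + 1)) : coboundary (labelSign R) l = 0 := by
  let A : Matrix (Fin (n + 2)) (Fin (n + 2)) R :=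
    Matrix.of fun i => Fin.cons 1 fun j => if l i = j then 1 else 0
  let v : Fin (n + 2) → R := Fin.cons 1 fun _ => -1
  have hAv : A.mulVec v = 0 := by
    ext i
    simp [Matrix.mulVec, dotProduct, Fin.sum_univ_succ (n := n + 1), A, v]
  have hdet : A.det = 0 := by
    have : (A.adjugate * A).mulVec v = 0 := by
      rw [← Matrix.mulVec_mulVec, hAv, Matrix.mulVec_zero]
    simpa [Matrix.adjugate_mul, Matrix.smul_mulVec, v] using congrFun this 0
  rw [coboundary_apply, ← hdet, Matrix.det_succ_column_zero]
  refine Finset.sum_congr rfl fun i _ => ?_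
  rw [show A i 0 = 1 from rfl, mul_one]
  rfl

end LabelSign

section Kuhn

/-- The vertices of the simplex of the Kuhn triangulation of `ℝⁿ` whose first vertex is the lattice
point `v` and whose `i`-th edge is in direction `π i`. -/
def kuhnSimplex {n : ℕ} (v : Fin n → ℤ) (π : Equiv.Perm (Fin n)) (j : Fin (n + 1)) : Fin n → ℤ :=
  fun a => v a + if (π.symm a).castSucc < j then 1 else 0

theorem abs_kuhnSimplex_sub_le_one {n : ℕ} (v : Fin n → ℤ) (π : Equiv.Perm (Fin n))
    (i j : Fin (n + 1)) (a : Fin n) : |kuhnSimplex v π i a - kuhnSimplex v π j a| ≤ 1 := by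
  unfold kuhnSimplex
  split_ifs <;> simp

theorem abs_sub_kuhnSimplex_le_one {n : ℕ} (v : Fin n → ℤ) (π : Equiv.Perm (Fin n))
    (j : Fin (n + 1)) (a : Fin n) : |v a - kuhnSimplex v π j a| ≤ 1 := by
  unfold kuhnSimplex
  split_ifs <;> simp

variable {k : ℕ}

theorem kuhnSimplex_mul_swap (v : Fin (k + 1) → ℤ) (π : Equiv.Perm (Fin (k + 1))) (i : Fin k)
    {j : Fin (k + 2)} (hj : j ≠ i.castSucc.succ) :
    kuhnSimplex v (π * Equiv.swap i.castSucc i.succ) j = kuhnSimplex v π j := by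
  ext a
  have hsymm : (π * Equiv.swap i.castSucc i.succ).symm a =
      Equiv.swap i.castSucc i.succ (π.symm a) := rfl
  have key (t : Fin (k + 1)) :
      (Equiv.swap i.castSucc i.succ t).castSucc < j ↔ t.castSucc < j := by
    rw [Equiv.swap_apply_def]
    simp only [Fin.lt_def, Fin.ext_iff, ne_eq, Fin.val_castSucc, Fin.val_succ] at hj ⊢
    split_ifs <;> simp only [Fin.val_castSucc, Fin.val_succ] <;> omega
  simp only [kuhnSimplex, hsymm, key]

theorem kuhnSimplex_succ (v : Fin (k + 1) → ℤ) (π : Equiv.Perm (Fin (k + 1))) (j : Fin (k + 1)) :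
    kuhnSimplex v π j.succ =
      kuhnSimplex (v + Pi.single (π 0) 1) (π * finRotate (k + 1)) j.castSucc := by
  ext a
  obtain ⟨t, rfl⟩ := π.surjective a
  have hsymm : (π * finRotate (k + 1)).symm (π t) = (finRotate (k + 1)).symm t := by
    change (finRotate (k + 1)).symm (π.symm (π t)) = _
    rw [Equiv.symm_apply_apply]
  simp only [kuhnSimplex, hsymm, Equiv.symm_apply_apply, Pi.add_apply]
  cases t using Fin.cases with
  | zero =>
    have hlast : (finRotate (k + 1)).symm 0 = Fin.last k := by
      rw [Equiv.symm_apply_eq, finRotate_last]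
    simp [hlast, Fin.le_last]
  | succ s =>
    have hs : (finRotate (k + 1)).symm s.succ = s.castSucc := by
      rw [Equiv.symm_apply_eq]; simp
    simp [hs, Fin.lt_def]

/-- The lattice points of the cube of half-side `M`. -/
noncomputable def latticeBox (n : ℕ) (M : ℤ) : Finset (Fin n → ℤ) :=
  Fintype.piFinset fun _ => Finset.Icc (-M) M

theorem mem_latticeBox {n : ℕ} {M : ℤ} {v : Fin n → ℤ} : v ∈ latticeBox n M ↔ ∀ a, |v a| ≤ M := by
  simp [latticeBox, abs_le]

theorem sum_latticeBox_add {n : ℕ} {A : Type*} [AddCommMonoid A] {M : ℤ} {f : (Fin n → ℤ) → A}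
    {e : Fin n → ℤ} (hf : ∀ v, f v ≠ 0 → v ∈ latticeBox n M)
    (hfe : ∀ v, f (v + e) ≠ 0 → v ∈ latticeBox n M) :
    ∑ v ∈ latticeBox n M, f (v + e) = ∑ v ∈ latticeBox n M, f v := by
  rw [← finsum_eq_sum_of_support_subset f hf,
    ← finsum_eq_sum_of_support_subset (fun v => f (v + e)) hfe]
  exact finsum_comp_equiv (Equiv.addRight e)

variable {R : Type*} [CommRing R]

/-- The signed sum of a cochain over the simplices of the Kuhn triangulation with first vertex in
the cube of half-side `M`. -/
noncomputable def kuhnSum {n : ℕ} (M : ℤ) (c : Cochain (Fin n → ℤ) R (n + 1)) : R :=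
  ∑ π : Equiv.Perm (Fin n), ((Equiv.Perm.sign π : ℤ) : R) *
    ∑ v ∈ latticeBox n M, c (kuhnSimplex v π)

theorem kuhnSum_interior_face (M : ℤ) (B : Cochain (Fin (k + 1) → ℤ) R (k + 1)) (i : Fin k) :
    kuhnSum M (fun y => B (y ∘ i.castSucc.succ.succAbove)) = 0 := by
  have hne : i.castSucc ≠ i.succ := Fin.castSucc_lt_succ.ne
  have hface (π : Equiv.Perm (Fin (k + 1))) (v : Fin (k + 1) → ℤ) :
      kuhnSimplex v (π * Equiv.swap i.castSucc i.succ) ∘ i.castSucc.succ.succAbove =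
        kuhnSimplex v π ∘ i.castSucc.succ.succAbove :=
    funext fun j => kuhnSimplex_mul_swap v π i (Fin.succAbove_ne _ j)
  refine Finset.sum_involution (fun π _ => π * Equiv.swap i.castSucc i.succ) ?_ ?_
    (fun π _ => Finset.mem_univ _) fun π _ => by simp [mul_assoc]
  · intro π _
    simp [hface, Equiv.Perm.sign_swap hne]
  · intro π _ _ h
    exact hne (Equiv.swap_eq_one_iff.1 (by simpa using h))

/-- The last face of a simplex is the first face of its successor in the cyclic order of the
edge directions. -/
theorem kuhnSum_first_face {M : ℤ} {B : Cochain (Fin (k + 1) → ℤ) R (k + 1)}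
    (hB : ∀ y, B y ≠ 0 → ∀ j a, |y j a| ≤ M - 1) :
    kuhnSum M (fun y => B (y ∘ (0 : Fin (k + 2)).succAbove)) =
      (-1) ^ k * kuhnSum M (fun y => B (y ∘ (Fin.last (k + 1)).succAbove)) := by
  have hface (π : Equiv.Perm (Fin (k + 1))) (v : Fin (k + 1) → ℤ) :
      kuhnSimplex v π ∘ (0 : Fin (k + 2)).succAbove =
        kuhnSimplex (v + Pi.single (π 0) 1) (π * finRotate (k + 1)) ∘
          (Fin.last (k + 1)).succAbove := by
    ext j : 1
    simpa using kuhnSimplex_succ v π j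
  have hbox {v w : Fin (k + 1) → ℤ} {π : Equiv.Perm (Fin (k + 1))} {i : Fin (k + 2)}
      (hv : B (kuhnSimplex w π ∘ i.succAbove) ≠ 0)
      (hvw : ∀ a, |v a - kuhnSimplex w π (i.succAbove 0) a| ≤ 1) : v ∈ latticeBox (k + 1) M := by
    refine mem_latticeBox.2 fun a => ?_
    have h₁ := abs_le.1 (hB _ hv 0 a)
    have h₂ := abs_le.1 (hvw a)
    simp only [Function.comp_apply] at h₁
    exact abs_le.2 ⟨by omega, by omega⟩
  unfold kuhnSum
  rw [Finset.mul_sum]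
  refine Fintype.sum_equiv (Equiv.mulRight (finRotate (k + 1))) _ _ fun π => ?_
  have hshift : ∑ v ∈ latticeBox (k + 1) M, B (kuhnSimplex v π ∘ (0 : Fin (k + 2)).succAbove) =
      ∑ v ∈ latticeBox (k + 1) M,
        B (kuhnSimplex v (π * finRotate (k + 1)) ∘ (Fin.last (k + 1)).succAbove) := by
    simp only [hface]
    refine sum_latticeBox_add (e := Pi.single (π 0) 1)
      (f := fun v => B (kuhnSimplex v (π * finRotate (k + 1)) ∘ (Fin.last (k + 1)).succAbove))
      (fun v hv => hbox hv fun a => abs_sub_kuhnSimplex_le_one _ _ _ _) fun v hv => ?_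
    rw [← hface] at hv
    exact hbox hv fun a => abs_sub_kuhnSimplex_le_one _ _ _ _
  have hsign : ((Equiv.Perm.sign (π * finRotate (k + 1)) : ℤ) : R) =
      (-1) ^ k * ((Equiv.Perm.sign π : ℤ) : R) := by
    rw [Equiv.Perm.sign_mul, sign_finRotate]
    push_cast
    ring
  rw [hshift, Equiv.coe_mulRight, hsign, ← mul_assoc, ← mul_assoc, ← mul_pow]
  simp

/-- Stokes' theorem for the Kuhn triangulation. -/
theorem kuhnSum_coboundary {M : ℤ} {B : Cochain (Fin (k + 1) → ℤ) R (k + 1)}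
    (hB : ∀ y, B y ≠ 0 → ∀ j a, |y j a| ≤ M - 1) : kuhnSum M (coboundary B) = 0 := by
  have hfaces : kuhnSum M (coboundary B) =
      ∑ i : Fin (k + 2), (-1) ^ (i : ℕ) * kuhnSum M (fun y => B (y ∘ i.succAbove)) := by
    simp only [kuhnSum, coboundary_apply, Finset.mul_sum]
    rw [Finset.sum_congr rfl fun π _ => Finset.sum_comm, Finset.sum_comm]
    simp only [mul_left_comm]
  rw [hfaces, Fin.sum_univ_succ, Fin.sum_univ_castSucc]
  simp only [kuhnSum_interior_face, kuhnSum_first_face hB, Fin.succ_last,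
    Fin.val_zero, Fin.val_last, pow_zero, one_mul, mul_zero, Finset.sum_const_zero, zero_add,
    pow_succ]
  ring

end Kuhn

section SmallTuples

variable {ι κ X : Type*} [UniformSpace X]

/-- The filter of tuples of points that are arbitrarily close to each other. -/
def smallTuples (ι X : Type*) [UniformSpace X] : Filter (ι → X) :=
  (𝓤 X).lift' fun V => {x | ∀ i j, (x i, x j) ∈ V}

theorem mem_smallTuples {V : Set (X × X)} (hV : V ∈ 𝓤 X) :
    {x : ι → X | ∀ i j, (x i, x j) ∈ V} ∈ smallTuples ι X :=
  mem_lift' hV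

theorem eventually_smallTuples_dist_lt {X : Type*} [PseudoMetricSpace X] {δ : ℝ} (hδ : 0 < δ) :
    ∀ᶠ x in smallTuples ι X, ∀ i j, dist (x i) (x j) < δ :=
  mem_smallTuples (Metric.dist_mem_uniformity hδ)

theorem eventually_smallTuples_iff_dist {X : Type*} [PseudoMetricSpace X] {P : (ι → X) → Prop} :
    (∀ᶠ x in smallTuples ι X, P x) ↔ ∃ δ > 0, ∀ x, (∀ i j, dist (x i) (x j) < δ) → P x :=
  (Metric.uniformity_basis_dist.lift' fun _ _ h _ hx i j => h (hx i j) :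
    (smallTuples ι X).HasBasis _ _).eventually_iff

theorem tendsto_comp_smallTuples (f : κ → ι) :
    Tendsto (fun x : ι → X => x ∘ f) (smallTuples ι X) (smallTuples κ X) :=
  tendsto_lift'.2 fun _ hV => mem_of_superset (mem_smallTuples hV) fun _ hx i j => hx (f i) (f j)

end SmallTuples

section Integral

variable {R : Type*} [CommRing R]

/-- The point of the mesh of size `1 / (N + 1)` with integer coordinates `v`. -/
noncomputable def meshPoint {n : ℕ} (N : ℕ) (v : Fin n → ℤ) : Fin n → ℝ :=
  fun a => v a / (N + 1)

theorem dist_meshPoint_kuhnSimplex_le {n : ℕ} (N : ℕ) (v : Fin n → ℤ) (π : Equiv.Perm (Fin n))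
    (i j : Fin (n + 1)) :
    dist (meshPoint N (kuhnSimplex v π i)) (meshPoint N (kuhnSimplex v π j)) ≤ 1 / (N + 1) := by
  have hN : (0 : ℝ) < N + 1 := by positivity
  refine (dist_pi_le_iff (by positivity)).2 fun a => ?_
  rw [Real.dist_eq, meshPoint, meshPoint, ← sub_div, abs_div, abs_of_pos hN]
  gcongr
  exact_mod_cast abs_kuhnSimplex_sub_le_one v π i j a

/-- The integral over `ℝⁿ` of a cochain of top degree: the germ, as the mesh is refined, of its sums
over the Kuhn triangulations of larger and larger cubes. -/
noncomputable def integral {n : ℕ} :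
    Cochain (Fin n → ℝ) R (n + 1) →ₗ[R] Germ (atTop : Filter ℕ) R where
  toFun c := ((fun N : ℕ => kuhnSum ((N + 1) ^ 2) fun y => c (meshPoint N ∘ y)) : ℕ → R)
  map_add' c c' := by
    rw [← Germ.coe_add]
    congr 1
    ext N
    simp [kuhnSum, mul_add, Finset.sum_add_distrib]
  map_smul' r c := by
    rw [RingHom.id_apply, ← Germ.coe_smul]
    congr 1
    ext N
    simp [kuhnSum, Finset.mul_sum, mul_left_comm]

theorem integral_eq_coe_iff {n : ℕ} {c : Cochain (Fin n → ℝ) R (n + 1)} {f : ℕ → R} :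
    integral c = (f : Germ atTop R) ↔
      ∀ᶠ N : ℕ in atTop, kuhnSum ((N + 1) ^ 2) (fun y => c (meshPoint N ∘ y)) = f N :=
  Germ.coe_eq

theorem eventually_meshPoint_kuhnSimplex {n : ℕ} {P : (Fin (n + 1) → Fin n → ℝ) → Prop}
    (h : ∀ᶠ x in smallTuples (Fin (n + 1)) (Fin n → ℝ), P x) :
    ∀ᶠ N : ℕ in atTop, ∀ v π, P (meshPoint N ∘ kuhnSimplex v π) := by
  obtain ⟨δ, hδ, hP⟩ := eventually_smallTuples_iff_dist.1 h
  filter_upwards [tendsto_one_div_add_atTop_nhds_zero_nat.eventually (gt_mem_nhds hδ)]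
    with N hN v π
  exact hP _ fun i j => (dist_meshPoint_kuhnSimplex_le N v π i j).trans_lt hN

theorem integral_congr {n : ℕ} {c c' : Cochain (Fin n → ℝ) R (n + 1)}
    (h : c =ᶠ[smallTuples (Fin (n + 1)) (Fin n → ℝ)] c') : integral c = integral c' := by
  refine integral_eq_coe_iff.2 ?_
  filter_upwards [eventually_meshPoint_kuhnSimplex h] with N hN
  simp only [kuhnSum, hN]

variable {k : ℕ}

theorem integral_coboundary_of_norm_le {b : Cochain (Fin (k + 1) → ℝ) R (k + 1)} {M : ℝ}
    (hb : ∀ x, b x ≠ 0 → ∀ j, ‖x j‖ ≤ M) : integral (coboundary b) = 0 := by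
  rw [← Germ.coe_zero]
  refine integral_eq_coe_iff.2 ?_
  filter_upwards [tendsto_natCast_atTop_atTop.eventually_ge_atTop M] with N hN
  have hcob : (fun y : Fin (k + 2) → Fin (k + 1) → ℤ => coboundary b (meshPoint N ∘ y)) =
      coboundary fun y => b (meshPoint N ∘ y) :=
    funext fun y => (coboundary_comp (meshPoint N) b y).symm
  rw [hcob, kuhnSum_coboundary, Pi.zero_apply]
  intro y hy j a
  have hNp : (0 : ℝ) < N + 1 := by positivity
  have h := (norm_le_pi_norm (meshPoint N (y j)) a).trans (hb _ hy j)
  rw [meshPoint, Real.norm_eq_abs, abs_div, abs_of_pos hNp, div_le_iff₀ hNp] at h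
  have : |(y j a : ℝ)| ≤ ((N : ℝ) + 1) ^ 2 - 1 := by nlinarith
  exact_mod_cast this

theorem integral_coboundary {b : Cochain (Fin (k + 1) → ℝ) R (k + 1)}
    {S : Set (Fin (k + 1) → ℝ)} (hS : Bornology.IsBounded S)
    (hb : ∀ᶠ x in smallTuples (Fin (k + 1)) (Fin (k + 1) → ℝ), b x ≠ 0 → ∀ j, x j ∈ S) :
    integral (coboundary b) = 0 := by
  classical
  obtain ⟨M, hM⟩ := hS.exists_norm_le
  let b' : Cochain (Fin (k + 1) → ℝ) R (k + 1) := fun x => if ∀ j, x j ∈ S then b x else 0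
  have hbb' : coboundary b =ᶠ[smallTuples _ _] coboundary b' := by
    filter_upwards [eventually_all.2 fun i : Fin (k + 2) =>
      (tendsto_comp_smallTuples i.succAbove).eventually hb] with x hx
    refine coboundary_congr fun i => ?_
    by_cases h : b (x ∘ i.succAbove) = 0
    · simp [b', h]
    · exact (if_pos (hx i h)).symm
  rw [integral_congr hbb']
  refine integral_coboundary_of_norm_le (M := M) fun x hx j => hM _ ?_
  by_contra hj
  exact hx (if_neg fun h => hj (h j))

theorem integral_comp_eq_of_prism {X : Type*} {c : Cochain X R (k + 2)}
    {φ ψ : (Fin (k + 1) → ℝ) → X} {S : Set (Fin (k + 1) → ℝ)} (hS : Bornology.IsBounded S)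
    (hcob : ∀ᶠ x in smallTuples (Fin (k + 2)) (Fin (k + 1) → ℝ),
      ∀ i, coboundary c (prismSimplex φ ψ i x) = 0)
    (hsupp : ∀ᶠ x in smallTuples (Fin (k + 1)) (Fin (k + 1) → ℝ),
      ∀ i, c (prismSimplex φ ψ i x) ≠ 0 → ∀ j, x j ∈ S) :
    integral (fun x => c (φ ∘ x)) = integral (fun x => c (ψ ∘ x)) := by
  rw [eq_comm, ← sub_eq_zero, ← map_sub]
  have hprism : (fun x => c (ψ ∘ x)) - (fun x => c (φ ∘ x))
      =ᶠ[smallTuples _ _] coboundary (prism φ ψ c) := by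
    filter_upwards [hcob] with x hx
    have h : prism φ ψ (coboundary c) x = 0 := by simp [prism_apply, hx]
    rw [Pi.sub_apply, ← prism_coboundary_add_coboundary_prism, h, zero_add]
  rw [integral_congr hprism]
  refine integral_coboundary hS ?_
  filter_upwards [hsupp] with x hx hne
  rw [prism_apply] at hne
  obtain ⟨i, -, hi⟩ := Finset.exists_ne_zero_of_sum_ne_zero hne
  exact hx i (right_ne_zero_of_mul hi)

end Integral

section Label

variable {n : ℕ} {α : Type*} [Zero α] [LinearOrder α]

/-- The first negative coordinate of a vector, or the last element of `Fin (n + 1)` if there is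
none. -/
def label (y : Fin n → α) : Fin (n + 1) :=
  ({i | y i < 0} : Finset (Fin n)).inf Fin.castSucc

theorem le_label_iff {y : Fin n → α} {j : Fin (n + 1)} :
    j ≤ label y ↔ ∀ i, y i < 0 → j ≤ i.castSucc := by
  simp [label]

theorem nonneg_of_castSucc_lt_label {y : Fin n → α} {i : Fin n} (h : i.castSucc < label y) :
    0 ≤ y i :=
  not_lt.1 fun hi => h.not_ge (le_label_iff.1 le_rfl i hi)

theorem neg_of_label_eq_castSucc {y : Fin n → α} {i : Fin n} (h : label y = i.castSucc) :
    y i < 0 := by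
  by_contra hi
  have : i.succ ≤ label y := le_label_iff.2 fun a ha =>
    (Fin.succ_le_castSucc_iff).2 <| lt_of_le_of_ne
      (Fin.castSucc_le_castSucc_iff.1 (h ▸ le_label_iff.1 le_rfl a ha)) fun hia => hi (hia ▸ ha)
  exact (Fin.castSucc_lt_succ (i := i)).not_ge (h ▸ this)

theorem label_mono : Monotone (label : (Fin n → α) → Fin (n + 1)) :=
  fun _ _ h => le_label_iff.2 fun i hi => le_label_iff.1 le_rfl i ((h i).trans_lt hi)

theorem label_congr {β : Type*} [Zero β] [LinearOrder β] {y : Fin n → α} {z : Fin n → β}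
    (h : ∀ i, y i < 0 ↔ z i < 0) : label y = label z := by
  simp only [label, h]

theorem label_eq_of_neg_iff {y : Fin n → α} {j : Fin (n + 1)} (h : ∀ i, y i < 0 ↔ j ≤ i.castSucc) :
    label y = j := by
  refine le_antisymm ?_ (le_label_iff.2 fun i hi => (h i).1 hi)
  cases j using Fin.lastCases with
  | last => exact Fin.le_last _
  | cast i => exact le_label_iff.1 le_rfl i ((h i).2 le_rfl)

end Label

section LabelSum

variable {n : ℕ} {R : Type*} [CommRing R]

theorem label_kuhnSimplex_one (u : Fin n → ℤ) (j : Fin (n + 1)) :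
    label (kuhnSimplex (u - 1) 1 j - u) = j :=
  label_eq_of_neg_iff fun i => by
    have hsymm : (1 : Equiv.Perm (Fin n)).symm i = i := rfl
    rw [← not_lt (b := j)]
    simp only [kuhnSimplex, Pi.sub_apply, Pi.one_apply, hsymm]
    split_ifs with h <;> simp [h]

theorem eq_of_injective_label_kuhnSimplex {u v : Fin n → ℤ} {π : Equiv.Perm (Fin n)}
    (h : Function.Injective fun j => label (kuhnSimplex v π j - u)) : v = u - 1 ∧ π = 1 := by
  have hmono : Monotone fun j => label (kuhnSimplex v π j - u) := fun i j hij =>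
    label_mono fun a => by
      simp only [kuhnSimplex, Pi.sub_apply]
      split_ifs with hi hj
      exacts [le_rfl, (hj (hi.trans_le hij)).elim, by omega, le_rfl]
  have hid (j) : label (kuhnSimplex v π j - u) = j :=
    have hstrict := hmono.strictMono_of_injective h
    le_antisymm hstrict.apply_le hstrict.le_apply
  have hcoord (a : Fin n) : v a = u a - 1 ∧ π.symm a = a := by
    have hneg : kuhnSimplex v π a.castSucc a - u a < 0 := neg_of_label_eq_castSucc (hid a.castSucc)
    have hpos : 0 ≤ kuhnSimplex v π a.succ a - u a :=
      nonneg_of_castSucc_lt_label ((hid a.succ).symm ▸ Fin.castSucc_lt_succ)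
    simp only [kuhnSimplex, Fin.castSucc_lt_castSucc_iff, Fin.castSucc_lt_succ_iff] at hneg hpos
    split_ifs at hneg hpos <;> omega
  refine ⟨funext fun a => (hcoord a).1, Equiv.ext fun a => ?_⟩
  exact (π.symm_apply_eq.1 (hcoord a).2).symm

theorem kuhnSum_labelSign_label {M : ℤ} {u : Fin n → ℤ} (hu : u - 1 ∈ latticeBox n M) :
    kuhnSum M (fun y => labelSign R fun j => label (y j - u)) = 1 := by
  have hzero {v π} (h : ¬(v = u - 1 ∧ π = 1)) :
      labelSign R (fun j => label (kuhnSimplex v π j - u)) = 0 := by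
    by_contra hne
    exact h (eq_of_injective_label_kuhnSimplex (injective_of_labelSign_ne_zero hne))
  rw [kuhnSum, Finset.sum_eq_single 1 (fun π _ hπ => ?_) (by simp), Finset.sum_eq_single (u - 1)
    (fun v _ hv => hzero fun h => hv h.1) fun h => (h hu).elim]
  · simp only [label_kuhnSimplex_one, Equiv.Perm.sign_one, Units.val_one, Int.cast_one, one_mul]
    exact labelSign_id R
  · rw [Finset.sum_eq_zero fun v _ => hzero fun h => hπ h.2, mul_zero]

theorem label_meshPoint_sub (N : ℕ) (v : Fin n → ℤ) (w : Fin n → ℝ) :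
    label (meshPoint N v - w) = label (v - fun i => ⌈w i * (N + 1)⌉) := by
  refine label_congr fun i => ?_
  have hN : (0 : ℝ) < N + 1 := by positivity
  rw [Pi.sub_apply, Pi.sub_apply, sub_neg, sub_neg, Int.lt_ceil, meshPoint, div_lt_iff₀ hN]

theorem integral_labelSign_label (w : Fin n → ℝ) :
    integral (fun x => labelSign R fun j => label (x j - w)) = 1 := by
  rw [← Germ.coe_one]
  refine integral_eq_coe_iff.2 ?_
  filter_upwards [tendsto_natCast_atTop_atTop.eventually_ge_atTop (‖w‖ + 1)] with N hN
  simp only [Function.comp_apply, label_meshPoint_sub]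
  refine kuhnSum_labelSign_label (mem_latticeBox.2 fun a => ?_)
  have hw : |w a| ≤ N - 1 := (norm_le_pi_norm w a).trans (by linarith)
  have hceil := Int.ceil_lt_add_one (w a * (N + 1))
  have hle := Int.le_ceil (w a * (N + 1))
  rw [abs_le] at hw
  have hlower : -((N : ℝ) + 1) ^ 2 ≤ (⌈w a * (N + 1)⌉ : ℝ) - 1 := by nlinarith
  have hupper : (⌈w a * (N + 1)⌉ : ℝ) - 1 ≤ ((N : ℝ) + 1) ^ 2 := by nlinarith
  exact abs_le.2 ⟨by exact_mod_cast hlower, by exact_mod_cast hupper⟩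

theorem labelSign_label_eq_zero_of_dist_lt {y : Fin (n + 1) → Fin n → ℝ} {z : Fin n → ℝ} {s : ℝ}
    (hs : 0 < s) (hz : s ≤ ‖z‖) (hy : ∀ j, dist (y j) z < s) :
    labelSign R (fun j => label (y j)) = 0 := by
  by_contra hne
  have hsurj : Function.Surjective fun j => label (y j) :=
    Finite.surjective_of_injective (injective_of_labelSign_ne_zero hne)
  obtain ⟨i, hi⟩ : ∃ i, s ≤ |z i| := by
    simpa only [Real.norm_eq_abs, not_forall, not_lt] using mt (pi_norm_lt_iff hs).2 hz.not_gt
  have hclose (j) : |y j i - z i| < s := (dist_le_pi_dist (y j) z i).trans_lt (hy j)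
  rcases le_abs.1 hi with h | h
  · obtain ⟨j, hj⟩ := hsurj i.castSucc
    linarith [neg_of_label_eq_castSucc hj, abs_lt.1 (hclose j)]
  · obtain ⟨j, hj⟩ := hsurj (Fin.last n)
    have : 0 ≤ y j i :=
      nonneg_of_castSucc_lt_label ((Fin.castSucc_lt_last i).trans_eq hj.symm)
    linarith [abs_lt.1 (hclose j)]

end LabelSum

section Homotopy

variable {k : ℕ} {R : Type*} [CommRing R] {X : Type*} {K : Set X}

/-- A cochain all of whose nonzero values are taken on tuples of points of `K`, and which is a
cocycle on small tuples. -/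
structure IsLocalCocycle [UniformSpace X] {m : ℕ} (c : Cochain X R m) (K : Set X) : Prop where
  mem_of_ne_zero : ∀ x, c x ≠ 0 → ∀ i, x i ∈ K
  coboundary_eq_zero : ∀ᶠ x in smallTuples (Fin (m + 1)) X, coboundary c x = 0

theorem eventually_smallTuples_comp {ι Y : Type*} [UniformSpace X] [UniformSpace Y] {φ : X → Y}
    (hK : IsCompact K) (hφ : ∀ x ∈ K, ContinuousAt φ x) {P : (ι → Y) → Prop}
    (hP : ∀ᶠ y in smallTuples ι Y, P y) :
    ∀ᶠ x in smallTuples ι X, (∃ i, x i ∈ K) → P (φ ∘ x) := by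
  obtain ⟨V, hV, hVP⟩ := (mem_lift'_sets
    (h := fun V : Set (Y × Y) => {y : ι → Y | ∀ i j, (y i, y j) ∈ V})
    fun _ _ h _ hx i j => h (hx i j)).1 hP
  obtain ⟨W, hW, hWs, hWV⟩ := comp_symm_mem_uniformity_sets hV
  filter_upwards [mem_smallTuples (hK.uniformContinuousAt_of_continuousAt φ hφ hW)]
    with x hx ⟨i, hi⟩
  exact hVP fun a b => hWV ⟨φ (x i), hWs.symm _ _ (hx i a hi), hx i b hi⟩

variable [PseudoMetricSpace X]

theorem integral_comp_eq_of_dist_lt {c : Cochain X R (k + 2)}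
    (hsupp : ∀ x, c x ≠ 0 → ∀ i, x i ∈ K) {δ : ℝ}
    (hcob : ∀ x, (∀ i j, dist (x i) (x j) < δ) → coboundary c x = 0)
    {φ ψ : (Fin (k + 1) → ℝ) → X} {S : Set (Fin (k + 1) → ℝ)} (hS : Bornology.IsBounded S)
    (hφ : ∀ x, φ x ∈ K → x ∈ S) (hψ : ∀ x, ψ x ∈ K → x ∈ S)
    (hdist : ∀ᶠ p in 𝓤 (Fin (k + 1) → ℝ), p.1 ∈ S →
      dist (φ p.1) (φ p.2) < δ / 2 ∧ dist (φ p.1) (ψ p.2) < δ / 2) :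
    integral (fun x => c (φ ∘ x)) = integral (fun x => c (ψ ∘ x)) := by
  have hmem {m : ℕ} {x : Fin m → Fin (k + 1) → ℝ} {i : Fin m} {a : Fin m}
      {j : Fin (m + 1)} (hj : prismSimplex φ ψ i x j = φ (x a) ∨ prismSimplex φ ψ i x j = ψ (x a))
      (hK : prismSimplex φ ψ i x j ∈ K) : x a ∈ S :=
    hj.elim (fun h => hφ _ (h ▸ hK)) fun h => hψ _ (h ▸ hK)
  refine integral_comp_eq_of_prism hS ?_ (.of_forall fun x i hne a => ?_)
  · filter_upwards [mem_smallTuples hdist] with x hx i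
    by_cases hxS : ∃ a, x a ∈ S
    · obtain ⟨a, ha⟩ := hxS
      have hclose (j) : dist (φ (x a)) (prismSimplex φ ψ i x j) < δ / 2 := by
        obtain ⟨b, h | h⟩ := prismSimplex_eq_or φ ψ i x j
        · exact h ▸ (hx a b ha).1
        · exact h ▸ (hx a b ha).2
      refine hcob _ fun j j' => ?_
      linarith [dist_triangle_left (prismSimplex φ ψ i x j) (prismSimplex φ ψ i x j') (φ (x a)),
        hclose j, hclose j']
    · rw [coboundary_apply]
      refine Finset.sum_eq_zero fun l _ => mul_eq_zero_of_right _ ?_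
      by_contra hne
      obtain ⟨b, hb⟩ := prismSimplex_eq_or φ ψ i x (l.succAbove 0)
      exact hxS ⟨b, hmem hb (hsupp _ hne 0)⟩
  · obtain ⟨j, hj⟩ := exists_prismSimplex_eq φ ψ i x a
    exact hmem hj (hsupp _ hne j)

theorem integral_comp_eq_of_homotopy {c : Cochain X R (k + 2)} (hc : IsLocalCocycle c K)
    {S : Set (Fin (k + 1) → ℝ)} (hS : IsCompact S) {H : ℝ → (Fin (k + 1) → ℝ) → X} {a b : ℝ}
    (hab : a ≤ b) (hHS : ∀ t ∈ Set.Icc a b, ∀ x, H t x ∈ K → x ∈ S)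
    (hH : ∀ t ∈ Set.Icc a b, ∀ x ∈ S, ContinuousAt (Function.uncurry H) (t, x)) :
    integral (fun x => c (H a ∘ x)) = integral (fun x => c (H b ∘ x)) := by
  obtain ⟨δ, hδ, hcob⟩ := eventually_smallTuples_iff_dist.1 hc.coboundary_eq_zero
  refine isPreconnected_Icc.induction₂
    (fun s t => integral (fun x => c (H s ∘ x)) = integral (fun x => c (H t ∘ x)))
    (fun s hs => ?_) (fun _ _ _ _ _ _ => Eq.trans) (fun _ _ _ _ => Eq.symm)
    (Set.left_mem_Icc.2 hab) (Set.right_mem_Icc.2 hab)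
  have hunif := (isCompact_singleton.prod hS).uniformContinuousAt_of_continuousAt
    (Function.uncurry H) (by rintro ⟨_, x⟩ ⟨rfl, hx⟩; exact hH _ hs x hx)
    (Metric.dist_mem_uniformity (half_pos hδ))
  obtain ⟨η, hη, hclose⟩ := Metric.mem_uniformity_dist.1 hunif
  have hsH {t : ℝ} (ht : dist s t < η) : ∀ᶠ p in 𝓤 (Fin (k + 1) → ℝ), p.1 ∈ S →
      dist (H s p.1) (H t p.2) < δ / 2 := by
    filter_upwards [Metric.dist_mem_uniformity hη] with p hp hpS
    exact @hclose (s, p.1) (t, p.2) (max_lt ht hp) ⟨rfl, hpS⟩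
  filter_upwards [self_mem_nhdsWithin, nhdsWithin_le_nhds (Metric.ball_mem_nhds s hη)]
    with t ht hst
  refine integral_comp_eq_of_dist_lt hc.mem_of_ne_zero hcob hS.isBounded (hHS s hs) (hHS t ht) ?_
  filter_upwards [hsH (t := s) (by simpa using hη), hsH (Metric.mem_ball'.1 hst)] with p h₁ h₂ hp
  exact ⟨h₁ hp, h₂ hp⟩

end Homotopy

section Scaling

variable {k : ℕ} {R : Type*} [CommRing R] {K : Set (Fin (k + 1) → ℝ)} {w : Fin (k + 1) → ℝ}

theorem mem_convexJoin_of_homothety_mem {σ : ℝ} (hσ : 1 ≤ σ) {z : Fin (k + 1) → ℝ}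
    (hz : AffineMap.homothety w σ z ∈ K) : z ∈ convexJoin ℝ {w} K := by
  refine mem_convexJoin.2 ⟨w, rfl, _, hz, ?_⟩
  rw [segment_eq_image_lineMap]
  refine ⟨σ⁻¹, ⟨by positivity, inv_le_one_of_one_le₀ hσ⟩, ?_⟩
  rw [← AffineMap.homothety_eq_lineMap, ← AffineMap.homothety_mul_apply,
    inv_mul_cancel₀ (by positivity), AffineMap.homothety_one, AffineMap.id_apply]

theorem eventually_homothety_mem_imp (hK : Bornology.IsBounded K) {P : (Fin (k + 1) → ℝ) → Prop}
    (hP : ∀ᶠ z in 𝓝 w, P z) :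
    ∀ᶠ σ : ℝ in atTop, ∀ z, AffineMap.homothety w σ z ∈ K → P z := by
  obtain ⟨ε, hε, hball⟩ := Metric.eventually_nhds_iff.1 hP
  obtain ⟨M, hM⟩ := hK.subset_closedBall w
  filter_upwards [eventually_gt_atTop (max 0 (M / ε))] with σ hσ z hz
  obtain ⟨hσ, hMσ⟩ := max_lt_iff.1 hσ
  have h := Metric.mem_closedBall.1 (hM hz)
  rw [dist_homothety_center, Real.norm_of_nonneg hσ.le, dist_comm] at h
  exact hball (lt_of_mul_lt_mul_left (h.trans_lt ((div_lt_iff₀ hε).1 hMσ)) hσ.le)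

theorem isCompact_convexJoin_singleton (hK : IsCompact K) : IsCompact (convexJoin ℝ {w} K) := by
  have hjoin : convexJoin ℝ {w} K =
      (fun q : ℝ × (Fin (k + 1) → ℝ) => AffineMap.lineMap w q.2 q.1) '' Set.Icc 0 1 ×ˢ K := by
    ext z
    simp only [mem_convexJoin, Set.mem_singleton_iff, segment_eq_image_lineMap, Set.mem_image,
      Set.mem_prod, Prod.exists]
    grind
  rw [hjoin]
  exact (isCompact_Icc.prod hK).image (by fun_prop)

theorem integral_comp_eq_integral_homothety_comp {c : Cochain (Fin (k + 1) → ℝ) R (k + 2)}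
    (hc : IsLocalCocycle c K) {φ : (Fin (k + 1) → ℝ) → Fin (k + 1) → ℝ} {σ : ℝ} (hσ : 1 ≤ σ)
    (hcompact : IsCompact (φ ⁻¹' convexJoin ℝ {w} K))
    (hcont : ∀ x ∈ φ ⁻¹' convexJoin ℝ {w} K, ContinuousAt φ x) :
    integral (fun x => c (φ ∘ x)) =
      integral (fun x => c (AffineMap.homothety w σ ∘ φ ∘ x)) := by
  have := integral_comp_eq_of_homotopy (H := fun t x => AffineMap.homothety w t (φ x)) hc hcompact
    hσ (fun t ht x hx => mem_convexJoin_of_homothety_mem ht.1 hx) fun t _ x hx => by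
      have : ContinuousAt (fun q : ℝ × (Fin (k + 1) → ℝ) => φ q.2) (t, x) :=
        (hcont x hx).comp continuousAt_snd
      simp only [AffineMap.homothety_apply, Function.uncurry_def]
      fun_prop
  simpa [Function.comp_def] using this

theorem integral_comp_eq_of_eq_near {c : Cochain (Fin (k + 1) → ℝ) R (k + 2)}
    (hc : IsLocalCocycle c K) (hK : IsCompact K) {h : (Fin (k + 1) → ℝ) → Fin (k + 1) → ℝ}
    (hcompact : IsCompact (h ⁻¹' convexJoin ℝ {w} K))
    (hcont : ∀ x ∈ h ⁻¹' convexJoin ℝ {w} K, ContinuousAt h x)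
    (hw : ∀ᶠ x in 𝓝 w, h ⁻¹' {x} = {x}) :
    integral (fun x => c (h ∘ x)) = integral c := by
  obtain ⟨σ, hσ, hfix⟩ := ((eventually_ge_atTop 1).and
    (eventually_homothety_mem_imp hK.isBounded hw)).exists
  have hid : integral (fun x => c (AffineMap.homothety w σ ∘ x)) = integral c :=
    (integral_comp_eq_integral_homothety_comp (φ := id) hc hσ (isCompact_convexJoin_singleton hK)
      fun _ _ => continuousAt_id).symm
  rw [integral_comp_eq_integral_homothety_comp hc hσ hcompact hcont, ← hid]
  congr 1
  ext x
  by_cases hx : h ∘ x = x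
  · rw [hx]
  obtain ⟨j, hj⟩ := Function.ne_iff.1 hx
  have hleft : c (AffineMap.homothety w σ ∘ h ∘ x) = 0 := by
    by_contra hne
    have := hfix _ (hc.mem_of_ne_zero _ hne j)
    exact hj (Set.mem_singleton_iff.1 (this.le rfl)).symm
  have hright : c (AffineMap.homothety w σ ∘ x) = 0 := by
    by_contra hne
    have := hfix _ (hc.mem_of_ne_zero _ hne j)
    exact hj (this.ge rfl)
  rw [hleft, hright]

end Scaling

section Rounding

variable {n : ℕ}

theorem exists_residue_ne (a : Fin n → ℤ) : ∃ ρ : ZMod (n + 1), ∀ i, (a i : ZMod (n + 1)) ≠ ρ := by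
  by_contra! h
  have := Fintype.card_le_of_surjective (fun i => (a i : ZMod (n + 1))) h
  simp [ZMod.card] at this

/-- A residue class modulo `n + 1` containing none of the `n` integers `a i`. -/
noncomputable def missedResidue (a : Fin n → ℤ) : ZMod (n + 1) :=
  (exists_residue_ne a).choose

theorem ne_missedResidue (a : Fin n → ℤ) (i : Fin n) : (a i : ZMod (n + 1)) ≠ missedResidue a :=
  (exists_residue_ne a).choose_spec i

/-- The rounding of an integer vector to blocks of length `n + 1`. The blocks are cut at the residue
class missed by all the coordinates, so that no coordinate is next to a cut from the right. -/
noncomputable def coarsen (a : Fin n → ℤ) : Fin n → ℤ :=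
  fun i => (a i - (missedResidue a).val) / (n + 1)

theorem coarsen_eq_of_missedResidue_eq {a b : Fin n → ℤ} (hres : missedResidue a = missedResidue b)
    (hab : ∀ i, |a i - b i| ≤ 1) : coarsen a = coarsen b := by
  have hndvd {a : Fin n → ℤ} {i} : ¬ ((n : ℤ) + 1 ∣ a i - (missedResidue a).val) := fun h => by
    refine ne_missedResidue a i (sub_eq_zero.1 ?_)
    have := (ZMod.intCast_zmod_eq_zero_iff_dvd _ (n + 1)).2 (by exact_mod_cast h)
    simpa using this
  have hdiv {t m : ℤ} (hm : 0 < m) (ht : ¬ m ∣ t + 1) : (t + 1) / m = t / m := by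
    have hmod := Int.emod_add_mul_ediv t m
    have hlt : t % m + 1 ≠ m := fun h => ht ⟨t / m + 1, by linarith⟩
    have := Int.emod_nonneg t hm.ne'
    have := Int.emod_lt_of_pos t hm
    exact ((Int.ediv_emod_unique (r := t % m + 1) hm).2 ⟨by linarith, by omega, by omega⟩).1
  funext i
  have ha := hndvd (a := a) (i := i)
  have hb := hndvd (a := b) (i := i)
  have h := abs_le.1 (hab i)
  rw [hres] at ha
  rw [coarsen, coarsen, hres]
  obtain h | h | h : a i = b i ∨ a i = b i + 1 ∨ b i = a i + 1 := by omega
  · rw [h]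
  · rw [h, add_sub_right_comm] at ha ⊢
    exact hdiv (by omega) ha
  · rw [h, add_sub_right_comm] at hb ⊢
    exact (hdiv (by omega) hb).symm

theorem not_injective_coarsen {a : Fin (n + 1) → Fin n → ℤ} (ha : ∀ j j' i, |a j i - a j' i| ≤ 1)
    {i : Fin n} (hi : ∀ j j', a j i = a j' i) : ¬ Function.Injective fun j => coarsen (a j) := by
  intro hinj
  have hres : Function.Injective fun j => missedResidue (a j) := fun j j' h =>
    hinj (coarsen_eq_of_missedResidue_eq h (ha j j'))
  have hsurj := ((Fintype.bijective_iff_injective_and_card _).2 ⟨hres, by simp [ZMod.card]⟩).2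
  obtain ⟨j, hj⟩ := hsurj (a 0 i : ZMod (n + 1))
  exact ne_missedResidue (a j) i ((hi j 0).symm ▸ hj.symm)

theorem sub_mul_coarsen_mem_Icc (a : Fin n → ℤ) (i : Fin n) :
    a i - (n + 1) * coarsen a i ∈ Set.Icc 0 (2 * n : ℤ) := by
  have hlt : ((missedResidue a).val : ℤ) < n + 1 := by exact_mod_cast ZMod.val_lt _
  have hmod := Int.emod_add_mul_ediv (a i - (missedResidue a).val) (n + 1)
  have hnonneg := Int.emod_nonneg (a i - (missedResidue a).val) (b := n + 1) (by omega)
  have hmodlt := Int.emod_lt_of_pos (a i - (missedResidue a).val) (b := n + 1) (by omega)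
  rw [coarsen, Set.mem_Icc]
  constructor <;> linarith [Int.natCast_nonneg (missedResidue a).val]

/-- The rounding of a vector to the lattice `q * (n + 1) * ℤⁿ`. -/
noncomputable def gridRound (q : ℝ) (y : Fin n → ℝ) : Fin n → ℝ :=
  fun i => q * ((n + 1) * coarsen (fun i => ⌊y i / q⌋) i)

theorem dist_gridRound_le {q : ℝ} (hq : 0 < q) (y : Fin n → ℝ) :
    dist (gridRound q y) y ≤ q * (2 * n + 1) := by
  refine (dist_pi_le_iff (by positivity)).2 fun i => ?_
  obtain ⟨hlower, hupper⟩ := sub_mul_coarsen_mem_Icc (fun i => ⌊y i / q⌋) i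
  have hfloor := Int.floor_le (y i / q)
  have hfloor' := Int.lt_floor_add_one (y i / q)
  have hlowerR : (0 : ℝ) ≤ ⌊y i / q⌋ - (n + 1) * coarsen (fun i => ⌊y i / q⌋) i := by
    exact_mod_cast hlower
  have hupperR : (⌊y i / q⌋ : ℝ) - (n + 1) * coarsen (fun i => ⌊y i / q⌋) i ≤ 2 * n := by
    exact_mod_cast hupper
  have hscale : gridRound q y i - y i =
      q * ((n + 1) * coarsen (fun i => ⌊y i / q⌋) i - y i / q) := by
    rw [gridRound]
    field_simp
  rw [Real.dist_eq, hscale, abs_mul, abs_of_pos hq]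
  gcongr
  exact abs_le.2 ⟨by linarith, by linarith⟩

theorem not_injective_gridRound {q : ℝ} (hq : 0 < q) {x : Fin (n + 1) → Fin n → ℝ}
    (hx : ∀ j j', dist (x j) (x j') < q) {i : Fin n}
    (hi : ∀ j j', ⌊x j i / q⌋ = ⌊x j' i / q⌋) :
    ¬ Function.Injective fun j => gridRound q (x j) := by
  have hfloor (j j' i) : |⌊x j i / q⌋ - ⌊x j' i / q⌋| ≤ 1 := by
    have h : |x j i / q - x j' i / q| < 1 := by
      rw [← sub_div, abs_div, abs_of_pos hq, div_lt_one hq]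
      exact (dist_le_pi_dist (x j) (x j') i).trans_lt (hx j j')
    have hlt : |(⌊x j i / q⌋ - ⌊x j' i / q⌋ : ℝ)| < 2 := by
      rw [abs_lt] at h ⊢
      constructor <;> linarith [Int.floor_le (x j i / q), Int.lt_floor_add_one (x j i / q),
        Int.floor_le (x j' i / q), Int.lt_floor_add_one (x j' i / q)]
    exact Int.lt_add_one_iff.1 (by exact_mod_cast hlt)
  exact fun hinj => not_injective_coarsen hfloor hi fun j j' h => hinj <|
    congrArg (fun (c : Fin n → ℤ) i => q * ((n + 1) * c i)) h

theorem eventually_floor_div_eq {q t : ℝ} (ht : ∀ z : ℤ, t / q ≠ z) :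
    ∀ᶠ u in 𝓝 t, ⌊u / q⌋ = ⌊t / q⌋ := by
  have hcont : ContinuousAt (· / q) t := by fun_prop
  filter_upwards [hcont.eventually (Ioo_mem_nhds ((Int.floor_le _).lt_of_ne (ht _).symm)
    (Int.lt_floor_add_one _))] with u hu
  exact Int.floor_eq_iff.2 ⟨hu.1.le, hu.2⟩

theorem exists_radius_div_ne_intCast {a b q : ℝ} (hab : a < b) (hq : q ≠ 0) (x₀ : Fin n → ℝ) :
    ∃ s ∈ Set.Ioo a b, ∀ i, ∀ z : ℤ, (x₀ i + s) / q ≠ z ∧ (x₀ i - s) / q ≠ z := by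
  have hcount : (⋃ (i : Fin n) (z : ℤ), {q * z - x₀ i, x₀ i - q * z}).Countable :=
    Set.countable_iUnion fun i => Set.countable_iUnion fun z => Set.to_countable _
  obtain ⟨s, hs, hsab⟩ := (hcount.dense_compl ℝ).exists_between hab
  simp only [Set.mem_compl_iff, Set.mem_iUnion, Set.mem_insert_iff, Set.mem_singleton_iff,
    not_exists, not_or] at hs
  refine ⟨s, hsab, fun i z => ⟨fun hz => (hs i z).1 ?_, fun hz => (hs i z).2 ?_⟩⟩ <;>
    rw [← hz] <;> field_simp <;> ring

theorem exists_radius_floor_eq {a b q : ℝ} (hab : a < b) (hq : q ≠ 0) (x₀ : Fin n → ℝ) (ι : Type*) :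
    ∃ s ∈ Set.Ioo a b, ∀ᶠ x in smallTuples ι (Fin n → ℝ),
      (∃ j, x j ∈ Metric.ball x₀ s) → (∃ j, x j ∉ Metric.ball x₀ s) →
        ∃ i, ∀ j j', ⌊x j i / q⌋ = ⌊x j' i / q⌋ := by
  obtain ⟨s, hsab, hs⟩ := exists_radius_div_ne_intCast hab hq x₀
  refine ⟨s, hsab, ?_⟩
  have hfloor : ∀ᶠ δ in 𝓝 (0 : ℝ), ∀ i, ⌊(x₀ i + s + δ) / q⌋ = ⌊(x₀ i + s) / q⌋ ∧
      ⌊(x₀ i - s + δ) / q⌋ = ⌊(x₀ i - s) / q⌋ := by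
    have hshift (t : ℝ) : Tendsto (t + ·) (𝓝 0) (𝓝 t) := by
      simpa using (continuous_const_add t).tendsto 0
    exact eventually_all.2 fun i =>
      ((hshift _).eventually (eventually_floor_div_eq fun z => (hs i z).1)).and
        ((hshift _).eventually (eventually_floor_div_eq fun z => (hs i z).2))
  obtain ⟨η, hη, hfloor⟩ := Metric.eventually_nhds_iff.1 hfloor
  filter_upwards [mem_smallTuples (Metric.dist_mem_uniformity hη)] with x hx ⟨j₀, hj₀⟩ ⟨j₁, hj₁⟩
  obtain ⟨i, hi⟩ : ∃ i, s ≤ |x j₁ i - x₀ i| := by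
    simpa only [Metric.mem_ball, dist_pi_lt_iff (Metric.pos_of_mem_ball hj₀), Real.dist_eq,
      not_forall, not_lt] using hj₁
  have hclose (j j') : |x j i - x j' i| < η := (dist_le_pi_dist (x j) (x j') i).trans_lt (hx j j')
  have hinside : |x j₀ i - x₀ i| < s := (dist_le_pi_dist (x j₀) x₀ i).trans_lt hj₀
  simp only [dist_zero_right, Real.norm_eq_abs] at hfloor
  suffices h : ∃ t : ℝ, ∀ j, ⌊x j i / q⌋ = ⌊t / q⌋ from
    ⟨i, fun j j' => (h.choose_spec j).trans (h.choose_spec j').symm⟩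
  simp only [abs_lt] at hinside hclose
  rcases le_abs.1 hi with hi | hi
  · refine ⟨x₀ i + s, fun j => ?_⟩
    rw [← (@hfloor (x j i - (x₀ i + s)) ?_ i).1, add_sub_cancel]
    exact abs_lt.2 ⟨by linarith [hclose j j₁], by linarith [hclose j j₀]⟩
  · refine ⟨x₀ i - s, fun j => ?_⟩
    rw [← (@hfloor (x j i - (x₀ i - s)) ?_ i).2, add_sub_cancel]
    exact abs_lt.2 ⟨by linarith [hclose j j₀], by linarith [hclose j j₁]⟩

end Rounding

section Splitting

variable {X R : Type*} [CommRing R] {m : ℕ} {c : Cochain X R (m + 1)} {W : Set X}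

open Classical in
/-- The cochain that agrees with `c` on tuples of points of `W` and vanishes on all others. -/
noncomputable def restrict (W : Set X) (c : Cochain X R m) : Cochain X R m :=
  fun x => if ∀ i, x i ∈ W then c x else 0

theorem restrict_of_forall_mem {c : Cochain X R m} {x : Fin m → X} (hx : ∀ i, x i ∈ W) :
    restrict W c x = c x :=
  if_pos hx

theorem restrict_of_notMem {c : Cochain X R m} {x : Fin m → X} {i : Fin m} (hi : x i ∉ W) :
    restrict W c x = 0 :=
  if_neg fun h => hi (h i)

theorem restrict_of_eq_zero {c : Cochain X R m} {x : Fin m → X} (hx : c x = 0) :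
    restrict W c x = 0 := by
  simp only [restrict, hx, ite_self]

theorem restrict_congr {W' : Set X} {c : Cochain X R m} {x x' : Fin m → X}
    (hW : ∀ i, x i ∈ W ↔ x' i ∈ W') (hc : c x = c x') : restrict W c x = restrict W' c x' := by
  rw [restrict, restrict, hc]
  congr 1
  exact propext (forall_congr' hW)

theorem forall_mem_of_restrict_ne_zero {c : Cochain X R m} {x : Fin m → X}
    (hx : restrict W c x ≠ 0) : ∀ i, x i ∈ W := by
  by_contra h
  exact hx (if_neg h)

variable [UniformSpace X]

/-- The cochain `c` vanishes on the faces of the small simplices that have vertices both in `W` and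
in its complement, so that the restriction of `c` to `W` has the same coboundary as `c` there. -/
def Splits (c : Cochain X R (m + 1)) (W : Set X) : Prop :=
  ∀ᶠ x in smallTuples (Fin (m + 2)) X, (∃ i, x i ∈ W) → (∃ i, x i ∉ W) →
    ∀ i : Fin (m + 2), c (x ∘ i.succAbove) = 0

theorem Splits.compl (h : Splits c W) : Splits c Wᶜ := by
  filter_upwards [h] with x hx hin hout
  exact hx (by simpa using hout) hin

theorem Splits.iUnion {ι : Type*} [Finite ι] {W : ι → Set X} (h : ∀ a, Splits c (W a)) :
    Splits c (⋃ a, W a) := by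
  filter_upwards [eventually_all.2 h] with x hx hin hout
  simp only [Set.mem_iUnion, not_exists] at hin hout
  obtain ⟨i, a, hi⟩ := hin
  exact hx a ⟨i, hi⟩ (hout.imp fun _ h => h a)

theorem Splits.eventually_forall_mem (h : Splits c W) :
    ∀ᶠ x in smallTuples (Fin (m + 1)) X, c x ≠ 0 → (∃ i, x i ∈ W) → ∀ i, x i ∈ W := by
  filter_upwards [(tendsto_comp_smallTuples
    (Fin.cons 0 id : Fin (m + 2) → Fin (m + 1))).eventually h] with x hx hne ⟨i, hi⟩
  by_contra! hout
  refine hne ?_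
  simpa [Function.comp_def] using hx ⟨i.succ, by simpa⟩ (hout.imp' Fin.succ fun _ h => by simpa) 0

theorem IsLocalCocycle.restrict {K : Set X} (hc : IsLocalCocycle c K) (h : Splits c W) :
    IsLocalCocycle (restrict W c) (K ∩ W) where
  mem_of_ne_zero x hx i :=
    ⟨hc.mem_of_ne_zero x (mt restrict_of_eq_zero hx) i, forall_mem_of_restrict_ne_zero hx i⟩
  coboundary_eq_zero := by
    filter_upwards [h, hc.coboundary_eq_zero] with x hx hcob
    by_cases hout : ∃ i, x i ∉ W
    · rw [coboundary_apply]
      refine Finset.sum_eq_zero fun i _ => mul_eq_zero_of_right _ ?_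
      by_contra hne
      exact hne (restrict_of_eq_zero
        (hx ⟨_, forall_mem_of_restrict_ne_zero hne 0⟩ hout i))
    · push Not at hout
      rw [← hcob]
      exact coboundary_congr fun i => restrict_of_forall_mem fun j => hout _

theorem eventuallyEq_sum_restrict {ι : Type*} [Fintype ι] {W : ι → Set X}
    (hW : ∀ x, ∃! a, x ∈ W a) (h : ∀ a, Splits c (W a)) :
    c =ᶠ[smallTuples (Fin (m + 1)) X] ∑ a, restrict (W a) c := by
  filter_upwards [eventually_all.2 fun a => (h a).eventually_forall_mem] with x hx
  rw [Finset.sum_apply]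
  by_cases hne : c x = 0
  · exact hne.trans (Finset.sum_eq_zero fun a _ => restrict_of_eq_zero hne).symm
  obtain ⟨a, ha, huniq⟩ := hW (x 0)
  rw [Finset.sum_eq_single a (fun b _ hb => restrict_of_notMem (mt (huniq b) hb)) (by simp),
    restrict_of_forall_mem (hx a hne ⟨0, ha⟩)]

end Splitting

section Action

variable {G X R : Type*} [Group G] [MulAction G X] [CommRing R] {U W : Set X}

/-- The action of `G` preserves `U`, and its elements are continuous at the points of `U`. Away from
`U` the action may be arbitrary. -/
structure ActsContinuouslyOn (G : Type*) {X : Type*} [Group G] [MulAction G X] [TopologicalSpace X]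
    (U : Set X) : Prop where
  smul_mem : ∀ (γ : G), ∀ x ∈ U, γ • x ∈ U
  continuousAt : ∀ (γ : G), ∀ x ∈ U, ContinuousAt (γ • ·) x

/-- The union of the translates of `W`. -/
def saturation (G : Type*) {X : Type*} [Group G] [MulAction G X] (W : Set X) : Set X :=
  ⋃ γ : G, (γ • ·) ⁻¹' W

theorem smul_mem_saturation_iff {γ : G} {x : X} :
    γ • x ∈ saturation G W ↔ x ∈ saturation G W := by
  simp only [saturation, Set.mem_iUnion, Set.mem_preimage, smul_smul]
  exact (Equiv.mulRight γ).exists_congr_left.trans (by simp)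

theorem ActsContinuouslyOn.isOpen_preimage [TopologicalSpace X] (h : ActsContinuouslyOn G U)
    (hW : IsOpen W) (hWU : W ⊆ U) (γ : G) : IsOpen ((γ • ·) ⁻¹' W) := by
  refine isOpen_iff_mem_nhds.2 fun x hx => ?_
  have hxU : x ∈ U := by simpa using h.smul_mem γ⁻¹ _ (hWU hx)
  exact (h.continuousAt γ x hxU).preimage_mem_nhds (hW.mem_nhds hx)

theorem ActsContinuouslyOn.isCompact_preimage [TopologicalSpace X] (h : ActsContinuouslyOn G U)
    (hW : IsCompact W) (hWU : W ⊆ U) (γ : G) : IsCompact ((γ • ·) ⁻¹' W) := by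
  have himage : (γ • · : X → X) ⁻¹' W = (γ⁻¹ • ·) '' W := by
    ext x
    exact ⟨fun hx => ⟨_, hx, inv_smul_smul γ x⟩, by rintro ⟨y, hy, rfl⟩; simpa using hy⟩
  rw [himage]
  exact hW.image_of_continuousOn fun x hx => (h.continuousAt γ⁻¹ x (hWU hx)).continuousWithinAt

theorem ActsContinuouslyOn.exists_isCompact_cthickening_subset [Finite G] [PseudoMetricSpace X]
    [ProperSpace X] (h : ActsContinuouslyOn G U) {K O : Set X} (hK : IsCompact K) (hO : IsOpen O)
    (hOU : O ⊆ U) (hOG : ∀ (γ : G), ∀ x ∈ O, γ • x ∈ O) (hKO : K ⊆ O) :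
    ∃ ε > 0, ∃ K', IsCompact K' ∧ (∀ (γ : G), ∀ x ∈ K', γ • x ∈ K') ∧ K' ⊆ O ∧
      Metric.cthickening ε K ⊆ K' := by
  obtain ⟨ε, hε, hεO⟩ := hK.exists_cthickening_subset_open hO hKO
  refine ⟨ε, hε, saturation G (Metric.cthickening ε K), isCompact_iUnion fun γ =>
    h.isCompact_preimage hK.cthickening (hεO.trans hOU) γ, fun γ x => smul_mem_saturation_iff.2, ?_,
    fun x hx => Set.mem_iUnion.2 ⟨1, by simpa⟩⟩
  refine Set.iUnion_subset fun γ x hx => ?_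
  simpa using hOG γ⁻¹ _ (hεO hx)

/-- A local cocycle with compact support that is invariant under `G` and vanishes on degenerate
tuples. -/
structure IsInvariantCocycle (G : Type*) {X R : Type*} [Group G] [MulAction G X] [CommRing R]
    [UniformSpace X] {m : ℕ} (c : Cochain X R m) (K : Set X) : Prop
    extends IsLocalCocycle c K where
  isCompact : IsCompact K
  smul_mem : ∀ (γ : G), ∀ x ∈ K, γ • x ∈ K
  apply_smul : ∀ (γ : G) x, c (γ • x) = c x
  injective_of_ne_zero : ∀ x, c x ≠ 0 → Function.Injective x

theorem IsInvariantCocycle.splits_preimage [UniformSpace X] {m : ℕ} {c : Cochain X R (m + 1)}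
    {K : Set X} (hc : IsInvariantCocycle G c K) (h : ActsContinuouslyOn G U) (hKU : K ⊆ U)
    (hW : Splits c W) (γ : G) : Splits c ((γ • ·) ⁻¹' W) := by
  filter_upwards [eventually_smallTuples_comp hc.isCompact
    (fun x hx => h.continuousAt γ x (hKU hx)) hW] with x hx hin hout i
  by_contra hne
  have hmem := hc.mem_of_ne_zero _ hne 0
  refine hne ((hc.apply_smul γ _).symm.trans (hx ⟨_, hmem⟩ hin hout i))

theorem IsInvariantCocycle.restrict_compl_saturation [Finite G] [UniformSpace X] {m : ℕ}
    {c : Cochain X R (m + 1)} {K : Set X} (hc : IsInvariantCocycle G c K)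
    (h : ActsContinuouslyOn G U) (hKU : K ⊆ U) (hWo : IsOpen W) (hWU : W ⊆ U) (hW : Splits c W) :
    IsInvariantCocycle G (restrict (saturation G W)ᶜ c) (K ∩ (saturation G W)ᶜ) where
  toIsLocalCocycle := hc.restrict (Splits.iUnion fun γ => hc.splits_preimage h hKU hW γ).compl
  isCompact := hc.isCompact.inter_right
    (isOpen_iUnion fun γ => h.isOpen_preimage hWo hWU γ).isClosed_compl
  smul_mem γ x hx := ⟨hc.smul_mem γ x hx.1, mt smul_mem_saturation_iff.1 hx.2⟩
  apply_smul γ x :=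
    restrict_congr (fun _ => not_congr smul_mem_saturation_iff) (hc.apply_smul γ x)
  injective_of_ne_zero x hx := hc.injective_of_ne_zero x (mt restrict_of_eq_zero hx)

theorem IsInvariantCocycle.eventuallyEq_restrict_add_sum [Fintype G] [UniformSpace X] {m : ℕ}
    {c : Cochain X R (m + 1)} {K : Set X} (hc : IsInvariantCocycle G c K)
    (h : ActsContinuouslyOn G U) (hKU : K ⊆ U) (hW : Splits c W)
    (hdisj : ∀ γ : G, ∀ x ∈ W, γ • x ∈ W → γ = 1) :
    c =ᶠ[smallTuples (Fin (m + 1)) X] restrict (saturation G W)ᶜ c +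
      ∑ γ : G, fun x => restrict W c (γ • x) := by
  have hsplit (γ : G) := hc.splits_preimage h hKU hW γ
  have hinv (γ : G) : (fun x => restrict W c (γ • x)) = restrict ((γ • ·) ⁻¹' W) c := by
    funext x
    exact restrict_congr (fun _ => Iff.rfl) (hc.apply_smul γ x)
  have hcover : ∀ x : X, ∃! a : Option G,
      x ∈ a.elim (saturation G W)ᶜ fun γ => (γ • ·) ⁻¹' W := by
    intro x
    by_cases hx : x ∈ saturation G W
    · obtain ⟨γ, hγ⟩ := Set.mem_iUnion.1 hx
      refine ⟨some γ, hγ, ?_⟩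
      rintro (_ | α) hα
      · exact (hα hx).elim
      · have hαγ := hdisj (α * γ⁻¹) _ hγ (by simpa [mul_smul] using hα)
        rw [mul_inv_eq_one.1 hαγ]
    · refine ⟨none, hx, ?_⟩
      rintro (_ | α) hα
      · rfl
      · exact (hx (Set.mem_iUnion.2 ⟨α, hα⟩)).elim
  simp only [hinv]
  have hsum := eventuallyEq_sum_restrict hcover
    (Option.forall.2 ⟨(Splits.iUnion hsplit).compl, hsplit⟩)
  rwa [Fintype.sum_option] at hsum

end Action

section EquivariantExtension

variable {G X : Type*} [Group G] [MulAction G X] {B : Set X} {g : X → X}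

open Classical in
/-- The map that is `g` on `B`, extended equivariantly to the translates of `B` and by the identity
to all other points. It is meaningful when the translates of `B` are pairwise disjoint. -/
noncomputable def equivariantExtension (G : Type*) {X : Type*} [Group G] [MulAction G X]
    (B : Set X) (g : X → X) (x : X) : X :=
  if h : ∃ γ : G, γ • x ∈ B then h.choose⁻¹ • g (h.choose • x) else x

theorem equivariantExtension_eq (hB : ∀ γ : G, ∀ x ∈ B, γ • x ∈ B → γ = 1) {γ : G} {x : X}
    (hx : γ • x ∈ B) : equivariantExtension G B g x = γ⁻¹ • g (γ • x) := by
  have h : ∃ γ : G, γ • x ∈ B := ⟨γ, hx⟩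
  have hchoose : h.choose = γ := mul_inv_eq_one.1 <|
    hB _ _ hx (by simpa [mul_smul] using h.choose_spec)
  rw [equivariantExtension, dif_pos h, hchoose]

theorem equivariantExtension_smul (hB : ∀ γ : G, ∀ x ∈ B, γ • x ∈ B → γ = 1) (α : G) (x : X) :
    equivariantExtension G B g (α • x) = α • equivariantExtension G B g x := by
  by_cases h : ∃ γ : G, γ • x ∈ B
  · obtain ⟨γ, hγ⟩ := h
    have hα : (γ * α⁻¹) • α • x ∈ B := by simpa [mul_smul] using hγ
    rw [equivariantExtension_eq hB hγ, equivariantExtension_eq hB hα]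
    simp [mul_smul]
  · have hα : ¬ ∃ γ : G, γ • α • x ∈ B := fun ⟨γ, hγ⟩ => h ⟨γ * α, by rwa [mul_smul]⟩
    rw [equivariantExtension, equivariantExtension, dif_neg h, dif_neg hα]

theorem ActsContinuouslyOn.exists_dist_equivariantExtension_lt [Finite G]
    [PseudoMetricSpace X] {U K : Set X} (h : ActsContinuouslyOn G U) (hK : IsCompact K)
    (hKU : K ⊆ U) (hBK : B ⊆ K) {ε : ℝ} (hε : 0 < ε) :
    ∃ η > 0, ∀ g : X → X, (∀ x, dist (g x) x < η) →
      ∀ x, dist (equivariantExtension G B g x) x < ε := by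
  have hunif : ∀ᶠ p in 𝓤 X, ∀ γ : G, p.1 ∈ K → dist (γ • p.1) (γ • p.2) < ε :=
    eventually_all.2 fun γ => hK.uniformContinuousAt_of_continuousAt (γ • ·)
      (fun x hx => h.continuousAt γ x (hKU hx)) (Metric.dist_mem_uniformity hε)
  obtain ⟨η, hη, hclose⟩ := Metric.mem_uniformity_dist.1 hunif
  refine ⟨η, hη, fun g hg x => ?_⟩
  rw [equivariantExtension]
  split_ifs with hx
  · have := hclose (dist_comm _ (hx.choose • x) ▸ hg _) hx.choose⁻¹ (hBK hx.choose_spec)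
    rwa [inv_smul_smul, dist_comm] at this
  · rwa [dist_self]

end EquivariantExtension

section Rounding

variable {G R : Type*} [Group G] [CommRing R]

theorem IsInvariantCocycle.comp_of_dist_lt {X : Type*} [MulAction G X] [PseudoMetricSpace X]
    {m : ℕ} {c : Cochain X R m} {K K' : Set X} (hc : IsInvariantCocycle G c K) {δ ε : ℝ}
    (hcob : ∀ x, (∀ i j, dist (x i) (x j) < δ) → coboundary c x = 0) (hε : 0 < ε)
    (hεδ : 3 * ε ≤ δ) (hK' : IsCompact K') (hGK' : ∀ (γ : G), ∀ x ∈ K', γ • x ∈ K')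
    (hKK' : Metric.cthickening ε K ⊆ K') {ρ : X → X} (hρ : ∀ x, dist (ρ x) x < ε)
    (hρG : ∀ (γ : G) x, ρ (γ • x) = γ • ρ x) :
    IsInvariantCocycle G (fun x => c (ρ ∘ x)) K' where
  mem_of_ne_zero x hx i := hKK' <| Metric.mem_cthickening_of_dist_le _ _ _ _
    (hc.mem_of_ne_zero _ hx i) (dist_comm _ (x i) ▸ (hρ _).le)
  coboundary_eq_zero := by
    filter_upwards [mem_smallTuples (Metric.dist_mem_uniformity hε)] with x hx
    rw [coboundary_comp]
    refine hcob _ fun i j => ?_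
    have := dist_triangle4_right (ρ (x i)) (ρ (x j)) (x i) (x j)
    simp only [Function.comp_apply]
    linarith [hρ (x i), hρ (x j), hx i j]
  isCompact := hK'
  smul_mem := hGK'
  apply_smul γ x := by
    rw [← hc.apply_smul γ (ρ ∘ x)]
    exact congrArg c (funext fun i => hρG γ (x i))
  injective_of_ne_zero x hx := (hc.injective_of_ne_zero _ hx).of_comp

variable {k : ℕ} {c : Cochain (Fin (k + 1) → ℝ) R (k + 2)} {K U : Set (Fin (k + 1) → ℝ)}

theorem integral_comp_eq_of_dist_lt_self {δ ε : ℝ} (hsupp : ∀ x, c x ≠ 0 → ∀ i, x i ∈ K)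
    (hK : IsCompact K)
    (hcob : ∀ x, (∀ i j, dist (x i) (x j) < δ) → coboundary c x = 0) (hε : 0 < ε)
    (hεδ : 4 * ε ≤ δ) {ρ : (Fin (k + 1) → ℝ) → Fin (k + 1) → ℝ} (hρ : ∀ x, dist (ρ x) x < ε) :
    integral (fun x => c (ρ ∘ x)) = integral c := by
  refine (integral_comp_eq_of_dist_lt (φ := id) hsupp hcob
    (hK.isBounded.cthickening (δ := ε)) (fun x hx => Metric.self_subset_cthickening _ hx)
    (fun x hx => Metric.mem_cthickening_of_dist_le _ _ _ _ hx (dist_comm _ x ▸ (hρ x).le)) ?_).symm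
  filter_upwards [Metric.dist_mem_uniformity hε] with p hp _
  have := dist_triangle_right p.1 (ρ p.2) p.2
  exact ⟨by simp only [id]; linarith, by simp only [id]; linarith [hρ p.2]⟩

theorem exists_splits_comp_of_eq_gridRound {q r r' : ℝ} (hq : 0 < q) (hr : r < r')
    {x₀ : Fin (k + 1) → ℝ} {ρ : (Fin (k + 1) → ℝ) → Fin (k + 1) → ℝ}
    (hρ : ∀ x ∈ Metric.ball x₀ r', ρ x = gridRound q x)
    (hinj : ∀ x, c x ≠ 0 → Function.Injective x) :
    ∃ s ∈ Set.Ioo r r', Splits (fun x => c (ρ ∘ x)) (Metric.ball x₀ s) := by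
  obtain ⟨s, hs, hface⟩ := exists_radius_floor_eq hr hq.ne' x₀ (Fin (k + 3))
  refine ⟨s, hs, ?_⟩
  have hsmall : 0 < min q (r' - s) := lt_min hq (sub_pos.2 hs.2)
  filter_upwards [hface, mem_smallTuples (Metric.dist_mem_uniformity hsmall)]
    with x hx hclose hin hout i
  obtain ⟨a, ha⟩ := hx hin hout
  obtain ⟨j₀, hj₀⟩ := hin
  have hρx (j) : ρ (x j) = gridRound q (x j) := hρ _ <| by
    rw [Metric.mem_ball] at hj₀ ⊢
    linarith [dist_triangle (x j) (x j₀) x₀, (hclose j j₀).trans_le (min_le_right _ _)]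
  by_contra hne
  refine not_injective_gridRound hq (x := x ∘ i.succAbove)
    (fun j j' => (hclose _ _).trans_le (min_le_left _ _)) (fun j j' => ha _ _) ?_
  simpa only [Function.comp_def, hρx] using hinj _ hne

variable [MulAction G (Fin (k + 1) → ℝ)]

theorem IsInvariantCocycle.exists_splits_ball [Finite G] (hc : IsInvariantCocycle G c K)
    (h : ActsContinuouslyOn G U) {O : Set (Fin (k + 1) → ℝ)} (hO : IsOpen O) (hOU : O ⊆ U)
    (hOG : ∀ (γ : G), ∀ x ∈ O, γ • x ∈ O) (hKO : K ⊆ O) {x₀ : Fin (k + 1) → ℝ} {r r' : ℝ}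
    (hr : r < r') (hball : Metric.closedBall x₀ r' ⊆ U)
    (hdisj : ∀ γ : G, ∀ x ∈ Metric.ball x₀ r', γ • x ∈ Metric.ball x₀ r' → γ = 1) :
    ∃ s ∈ Set.Ioo r r', ∃ (c' : Cochain (Fin (k + 1) → ℝ) R (k + 2)) (K' : _),
      IsInvariantCocycle G c' K' ∧ K' ⊆ O ∧ integral c' = integral c ∧
        Splits c' (Metric.ball x₀ s) := by
  obtain ⟨δ, hδ, hcob⟩ := eventually_smallTuples_iff_dist.1 hc.coboundary_eq_zero
  obtain ⟨ε₀, hε₀, K', hK', hGK', hK'O, hKK'⟩ :=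
    h.exists_isCompact_cthickening_subset hc.isCompact hO hOU hOG hKO
  let ε := min ε₀ (δ / 4)
  have hε : 0 < ε := lt_min hε₀ (by positivity)
  have hεδ : 4 * ε ≤ δ := by linarith [min_le_right ε₀ (δ / 4)]
  obtain ⟨η, hη, hround⟩ := h.exists_dist_equivariantExtension_lt
    (isCompact_closedBall x₀ r') hball Metric.ball_subset_closedBall hε
  obtain ⟨q, hq, hqη⟩ : ∃ q > 0, q * (2 * (k + 1 : ℕ) + 1) < η :=
    ⟨η / (2 * (k + 1 : ℕ) + 2), by positivity, by
      rw [div_mul_eq_mul_div, div_lt_iff₀ (by positivity)]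
      gcongr
      norm_num⟩
  let ρ := equivariantExtension G (Metric.ball x₀ r') (gridRound q)
  have hρ : ∀ x, dist (ρ x) x < ε := hround _ fun x => (dist_gridRound_le hq x).trans_lt hqη
  obtain ⟨s, hs, hsplit⟩ := exists_splits_comp_of_eq_gridRound hq hr (ρ := ρ) (fun x hx => by
    simp only [ρ, equivariantExtension_eq hdisj (γ := 1) ((one_smul G x).symm ▸ hx), inv_one,
      one_smul]) hc.injective_of_ne_zero
  exact ⟨s, hs, fun x => c (ρ ∘ x), K', hc.comp_of_dist_lt hcob hε (by linarith) hK' hGK'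
    ((Metric.cthickening_mono (min_le_left _ _) _).trans hKK') hρ (equivariantExtension_smul hdisj),
    hK'O, integral_comp_eq_of_dist_lt_self hc.mem_of_ne_zero hc.isCompact hcob hε hεδ hρ, hsplit⟩

end Rounding

theorem IsLocalCocycle.mono {X R : Type*} [CommRing R] [UniformSpace X] {m : ℕ}
    {c : Cochain X R m} {K K' : Set X} (hc : IsLocalCocycle c K) (hK : K ⊆ K') :
    IsLocalCocycle c K' :=
  ⟨fun x hx i => hK (hc.mem_of_ne_zero x hx i), hc.coboundary_eq_zero⟩

section Vanishing

variable {k : ℕ} {G R : Type*} [Group G] [MulAction G (Fin (k + 1) → ℝ)] [CommRing R]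
  {U Q O : Set (Fin (k + 1) → ℝ)} {w : Fin (k + 1) → ℝ}

/-- The integrals of all the invariant cocycles supported in `O` vanish. -/
def IntegralVanishesOn (G R : Type*) {k : ℕ} [Group G] [MulAction G (Fin (k + 1) → ℝ)] [CommRing R]
    (O : Set (Fin (k + 1) → ℝ)) : Prop :=
  ∀ (c : Cochain (Fin (k + 1) → ℝ) R (k + 2)) (K : Set (Fin (k + 1) → ℝ)),
    IsInvariantCocycle G c K → K ⊆ O → integral c = 0

theorem integralVanishesOn_empty : IntegralVanishesOn G R (∅ : Set (Fin (k + 1) → ℝ)) := by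
  intro c K hc hK
  have hzero : c = 0 := by
    funext x
    by_contra hx
    exact hK (hc.mem_of_ne_zero x hx 0)
  rw [hzero, map_zero]

theorem ActsContinuouslyOn.integral_comp_smul (h : ActsContinuouslyOn G U) (hQ : Convex ℝ Q)
    (hQU : Q ⊆ U) (hwQ : w ∈ Q) (hw : ∀ᶠ x in 𝓝 w, ∀ γ : G, γ • x = x)
    {c : Cochain (Fin (k + 1) → ℝ) R (k + 2)} {K : Set (Fin (k + 1) → ℝ)}
    (hc : IsLocalCocycle c K) (hK : IsCompact K) (hKQ : K ⊆ Q) (γ : G) :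
    integral (fun x => c (γ • x)) = integral c := by
  have hjoin : convexJoin ℝ {w} K ⊆ U :=
    (convexJoin_subset (Set.singleton_subset_iff.2 hwQ) hKQ hQ).trans hQU
  refine integral_comp_eq_of_eq_near hc hK (w := w) (h := (γ • ·))
    (h.isCompact_preimage (isCompact_convexJoin_singleton hK) hjoin γ)
    (fun x hx => h.continuousAt γ x ?_) ?_
  · have hxU : γ • x ∈ U := hjoin hx
    simpa using h.smul_mem γ⁻¹ _ hxU
  filter_upwards [hw] with x hx
  ext y
  change γ • y = x ↔ y = x
  rw [← eq_inv_smul_iff, hx]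

theorem IntegralVanishesOn.union_saturation [Fintype G] (hcard : (Fintype.card G : R) = 0)
    (h : ActsContinuouslyOn G U) (hQ : Convex ℝ Q) (hQU : Q ⊆ U) (hwQ : w ∈ Q)
    (hw : ∀ᶠ x in 𝓝 w, ∀ γ : G, γ • x = x) (hO : IsOpen O)
    (hOG : ∀ (γ : G), ∀ x ∈ O, γ • x ∈ O) (hOQ : O ⊆ Q) {x₀ : Fin (k + 1) → ℝ} {r r' : ℝ}
    (hr : r < r') (hball : Metric.closedBall x₀ r' ⊆ U)
    (hdisj : ∀ γ : G, ∀ x ∈ Metric.ball x₀ r', γ • x ∈ Metric.ball x₀ r' → γ = 1)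
    (hsat : saturation G (Metric.ball x₀ r) ⊆ Q) (hvan : IntegralVanishesOn G R O) :
    IntegralVanishesOn G R (O ∪ saturation G (Metric.ball x₀ r)) := by
  intro c K hc hK
  have hO'Q : O ∪ saturation G (Metric.ball x₀ r) ⊆ Q := Set.union_subset hOQ hsat
  have hball_subset {s : ℝ} (hs : s ≤ r') : Metric.ball x₀ s ⊆ U :=
    (Metric.ball_subset_closedBall.trans (Metric.closedBall_subset_closedBall hs)).trans hball
  obtain ⟨s, hs, c', K', hc', hK'O, hcc', hsplit⟩ := hc.exists_splits_ball h
    (hO.union (isOpen_iUnion fun γ =>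
      h.isOpen_preimage Metric.isOpen_ball (hball_subset hr.le) γ)) (hO'Q.trans hQU)
    (fun γ x hx => hx.imp (hOG γ x) smul_mem_saturation_iff.2) hK hr hball hdisj
  have hK'U : K' ⊆ U := hK'O.trans (hO'Q.trans hQU)
  have hsum := integral_congr <| hc'.eventuallyEq_restrict_add_sum h hK'U hsplit fun γ x hx hγ =>
    hdisj γ x (Metric.ball_subset_ball hs.2.le hx) (Metric.ball_subset_ball hs.2.le hγ)
  have hcompl : integral (restrict (saturation G (Metric.ball x₀ s))ᶜ c') = 0 := by
    refine hvan _ _ (hc'.restrict_compl_saturation h hK'U Metric.isOpen_ball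
      (hball_subset hs.2.le) hsplit) fun x hx => (hK'O hx.1).resolve_right fun hxr => hx.2 ?_
    exact Set.iUnion_mono (fun γ => Set.preimage_mono (Metric.ball_subset_ball hs.1.le)) hxr
  have htranslate (γ : G) : integral (fun x => restrict (Metric.ball x₀ s) c' (γ • x)) =
      integral (restrict (Metric.ball x₀ s) c') :=
    h.integral_comp_smul hQ hQU hwQ hw ((hc'.restrict hsplit).mono Set.inter_subset_left)
      hc'.isCompact (hK'O.trans hO'Q) γ
  rw [← hcc', hsum, map_add, hcompl, zero_add, map_sum,
    Finset.sum_congr rfl fun γ _ => htranslate γ, Finset.sum_const, Finset.card_univ,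
    ← Nat.cast_smul_eq_nsmul R, hcard, zero_smul]

theorem ActsContinuouslyOn.exists_ball_disjoint_translates [Finite G] (h : ActsContinuouslyOn G U)
    (hQ : IsOpen Q) {x₀ : Fin (k + 1) → ℝ} (hx₀ : x₀ ∈ U) (hGQ : ∀ γ : G, γ • x₀ ∈ Q)
    (hfree : ∀ γ : G, γ • x₀ = x₀ → γ = 1) :
    ∃ r > 0, (∀ γ : G, ∀ x ∈ Metric.closedBall x₀ r, γ • x ∈ Q) ∧
      ∀ γ : G, ∀ x ∈ Metric.ball x₀ r, γ • x ∈ Metric.ball x₀ r → γ = 1 := by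
  have hev : ∀ᶠ p in 𝓝 x₀ ×ˢ 𝓝 x₀, ∀ γ : G, γ • p.1 ∈ Q ∧ (γ ≠ 1 → γ • p.1 ≠ p.2) := by
    refine eventually_all.2 fun γ => ?_
    have htendsto : Tendsto (fun p : _ × _ => γ • p.1) (𝓝 x₀ ×ˢ 𝓝 x₀) (𝓝 (γ • x₀)) :=
      (h.continuousAt γ x₀ hx₀).tendsto.comp tendsto_fst
    refine (htendsto.eventually (hQ.mem_nhds (hGQ γ))).and ?_
    by_cases hγ : γ = 1
    · simp [hγ]
    · have hne : ∀ᶠ q : _ × _ in 𝓝 (γ • x₀, x₀), q.1 ≠ q.2 :=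
        (isOpen_ne_fun continuous_fst continuous_snd).mem_nhds (mt (hfree γ) hγ)
      exact ((htendsto.prodMk_nhds tendsto_snd).eventually hne).mono fun _ h _ => h
  obtain ⟨r, hr, hball⟩ := Metric.nhds_basis_closedBall.prod_self.eventually_iff.1 hev
  refine ⟨r, hr, fun γ x hx => (hball (Set.mk_mem_prod hx hx) γ).1, fun γ x hx hγx => ?_⟩
  by_contra hγ
  exact (hball (Set.mk_mem_prod (Metric.ball_subset_closedBall hx)
    (Metric.ball_subset_closedBall hγx)) γ).2 hγ rfl

theorem IsInvariantCocycle.integral_eq_zero [Fintype G] (hcard : (Fintype.card G : R) = 0)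
    (h : ActsContinuouslyOn G U) (hQo : IsOpen Q) (hQ : Convex ℝ Q) (hQU : Q ⊆ U) (hwQ : w ∈ Q)
    (hw : ∀ᶠ x in 𝓝 w, ∀ γ : G, γ • x = x) {c : Cochain (Fin (k + 1) → ℝ) R (k + 2)}
    {K : Set (Fin (k + 1) → ℝ)} (hc : IsInvariantCocycle G c K) (hKQ : K ⊆ Q)
    (hfree : ∀ x ∈ K, ∀ γ : G, γ • x = x → γ = 1) : integral c = 0 := by
  choose! r hr hrQ hdisj using fun x (hx : x ∈ K) => h.exists_ball_disjoint_translates hQo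
    (hQU (hKQ hx)) (fun γ => hKQ (hc.smul_mem γ x hx)) (hfree x hx)
  have hrU {x} (hx : x ∈ K) : Metric.closedBall x (r x) ⊆ U := fun y hy =>
    hQU (by simpa using hrQ x hx 1 y hy)
  have hhalf {x} (hx : x ∈ K) : Metric.ball x (r x / 2) ⊆ Metric.closedBall x (r x) :=
    (Metric.ball_subset_ball (half_le_self (hr x hx).le)).trans Metric.ball_subset_closedBall
  have hopen {x} (hx : x ∈ K) : IsOpen (saturation G (Metric.ball x (r x / 2))) :=
    isOpen_iUnion fun γ => h.isOpen_preimage Metric.isOpen_ball ((hhalf hx).trans (hrU hx)) γ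
  have hsat {x} (hx : x ∈ K) : saturation G (Metric.ball x (r x / 2)) ⊆ Q :=
    Set.iUnion_subset fun γ y hy => by simpa using hrQ x hx γ⁻¹ _ (hhalf hx hy)
  obtain ⟨t, htK, hKt⟩ := hc.isCompact.elim_nhds_subcover
    (fun x => saturation G (Metric.ball x (r x / 2))) fun x hx => (hopen hx).mem_nhds <|
      Set.mem_iUnion.2 ⟨1, by simpa using hr x hx⟩
  suffices hvan : IntegralVanishesOn G R (⋃ x ∈ t, saturation G (Metric.ball x (r x / 2))) from
    hvan c K hc hKt
  clear hKt
  induction t using Finset.induction_on with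
  | empty => simpa using integralVanishesOn_empty
  | insert x t _ ih =>
    obtain ⟨hx, ht⟩ := Finset.forall_mem_insert .. |>.1 htK
    rw [Finset.set_biUnion_insert, Set.union_comm]
    exact (ih ht).union_saturation hcard h hQ hQU hwQ hw
      (isOpen_biUnion fun y hy => hopen (ht y hy))
      (fun γ y hy => by simpa only [Set.mem_iUnion, smul_mem_saturation_iff] using hy)
      (Set.iUnion₂_subset fun y hy => hsat (ht y hy)) (half_lt_self (hr x hx)) (hrU hx)
      (hdisj x hx) (hsat hx)

end Vanishing

section SmallTuples

theorem eventually_smallTuples_of_forall_nhds {ι X : Type*} [Finite ι] [UniformSpace X] {K : Set X}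
    (hK : IsCompact K) {P : (ι → X) → Prop} (hP : ∀ x ∈ K, ∀ᶠ y in 𝓝 fun _ : ι => x, P y) :
    ∀ᶠ y in smallTuples ι X, (∃ i, y i ∈ K) → P y := by
  refine hK.induction_on (p := fun S => ∀ᶠ y in smallTuples ι X, (∃ i, y i ∈ S) → P y)
    (.of_forall fun y ⟨_, h⟩ => h.elim) (fun S T hST hT => ?_) (fun S T hS hT => ?_) fun x hx => ?_
  · exact hT.mono fun y hy ⟨i, hi⟩ => hy ⟨i, hST hi⟩
  · filter_upwards [hS, hT] with y hyS hyT ⟨i, hi⟩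
    exact hi.elim (fun h => hyS ⟨i, h⟩) fun h => hyT ⟨i, h⟩
  have hPx := hP x hx
  rw [nhds_pi] at hPx
  obtain ⟨I, t, ht, htP⟩ := mem_pi'.1 hPx
  obtain ⟨V, hV, hVt⟩ := UniformSpace.mem_nhds_iff.1 (iInter_mem.2 ht)
  obtain ⟨W, hW, hWV⟩ := comp_mem_uniformity_sets hV
  refine ⟨_, mem_nhdsWithin_of_mem_nhds (UniformSpace.ball_mem_nhds x hW), ?_⟩
  filter_upwards [mem_smallTuples hW] with y hy ⟨i, hi⟩
  exact htP fun j _ => Set.mem_iInter.1 (hVt (hWV ⟨y i, hi, hy i j⟩)) j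

end SmallTuples

section Degree

variable {X R : Type*} [CommRing R] {n : ℕ} {D : Set X} {a : X → Fin n → ℝ}

/-- The cochain on `X` whose integral counts with multiplicity, by means of Sperner labels, the
zeros in `D` of the vector field `a`. -/
noncomputable def degreeCochain (R : Type*) [CommRing R] (D : Set X) (a : X → Fin n → ℝ) :
    Cochain X R (n + 1) :=
  restrict D fun x => labelSign R fun j => label (a (x j))

theorem degreeCochain_of_forall_mem {x : Fin (n + 1) → X} (hx : ∀ i, x i ∈ D) :
    degreeCochain R D a x = labelSign R fun j => label (a (x j)) :=
  restrict_of_forall_mem hx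

theorem degreeCochain_eq_zero {x : Fin (n + 1) → X}
    (hx : labelSign R (fun j => label (a (x j))) = 0) :
    degreeCochain R D a x = 0 :=
  restrict_of_eq_zero hx

theorem degreeCochain_comp {Y : Type*} (φ : Y → X) (x : Fin (n + 1) → Y) :
    degreeCochain R D a (φ ∘ x) = degreeCochain R (φ ⁻¹' D) (a ∘ φ) x :=
  restrict_congr (fun _ => Iff.rfl) rfl

theorem injective_of_degreeCochain_ne_zero {x : Fin (n + 1) → X} (hx : degreeCochain R D a x ≠ 0) :
    Function.Injective x :=
  .of_comp (f := fun y => label (a y)) <|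
    injective_of_labelSign_ne_zero (mt degreeCochain_eq_zero hx)

theorem eventually_labelSign_label_eq_zero [TopologicalSpace X] {x : X} (ha : ContinuousAt a x)
    (hax : a x ≠ 0) :
    ∀ᶠ y in 𝓝 fun _ : Fin (n + 1) => x, labelSign R (fun j => label (a (y j))) = 0 := by
  have hclose (j : Fin (n + 1)) :
      ∀ᶠ y in 𝓝 fun _ : Fin (n + 1) => x, dist (a (y j)) (a x) < ‖a x‖ :=
    (continuousAt_apply j fun _ => x).eventually
      (ha.eventually (Metric.ball_mem_nhds _ (norm_pos_iff.2 hax)))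
  filter_upwards [eventually_all.2 hclose] with y hy
  exact labelSign_label_eq_zero_of_dist_lt (norm_pos_iff.2 hax) le_rfl hy

variable [UniformSpace X]

theorem isLocalCocycle_degreeCochain (hD : IsOpen D) (hcompact : IsCompact (closure D))
    (ha : ∀ x ∈ closure D, ContinuousAt a x) (hzero : ∀ x ∈ closure D, a x = 0 → x ∈ D) :
    IsLocalCocycle (degreeCochain R D a) (closure D) where
  mem_of_ne_zero x hx i := subset_closure (forall_mem_of_restrict_ne_zero hx i)
  coboundary_eq_zero := by
    have hlocal : ∀ x ∈ closure D, ∀ᶠ y in 𝓝 fun _ : Fin (n + 2) => x,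
        coboundary (degreeCochain R D a) y = 0 := by
      intro x hx
      by_cases hxD : x ∈ D
      · have hmem (j : Fin (n + 2)) : ∀ᶠ y in 𝓝 fun _ : Fin (n + 2) => x, y j ∈ D :=
          (continuousAt_apply j _).eventually (hD.mem_nhds hxD)
        filter_upwards [eventually_all.2 hmem] with y hy
        exact (coboundary_congr fun i => degreeCochain_of_forall_mem fun j => hy _).trans <|
          (coboundary_comp (fun x => label (a x)) (labelSign R) y).trans (coboundary_labelSign _)
      · have hface (i : Fin (n + 2)) : ∀ᶠ y in 𝓝 fun _ : Fin (n + 2) => x,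
            degreeCochain R D a (y ∘ i.succAbove) = 0 := by
          have hcont : Continuous fun y : Fin (n + 2) → X => y ∘ i.succAbove :=
            Pi.continuous_precomp' i.succAbove
          exact (hcont.continuousAt.eventually (eventually_labelSign_label_eq_zero (ha x hx)
            (mt (hzero x hx) hxD))).mono fun y => degreeCochain_eq_zero
        filter_upwards [eventually_all.2 hface] with y hy
        simp only [coboundary_apply, hy, mul_zero, Finset.sum_const_zero]
    filter_upwards [eventually_smallTuples_of_forall_nhds hcompact hlocal] with x hx
    by_contra hne
    obtain ⟨i, hi⟩ : ∃ i : Fin (n + 2), degreeCochain R D a (x ∘ i.succAbove) ≠ 0 := by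
      by_contra! h
      exact hne (by simp only [coboundary_apply, h, mul_zero, Finset.sum_const_zero])
    exact hne (hx ⟨_, subset_closure (forall_mem_of_restrict_ne_zero hi 0)⟩)

theorem degreeCochain_eventuallyEq {D' : Set X} (hD'D : D' ⊆ D) (hD' : IsOpen D')
    (hcompact : IsCompact (closure D)) (ha : ∀ x ∈ closure D, ContinuousAt a x)
    (hzero : ∀ x ∈ closure D, a x = 0 → x ∈ D') :
    degreeCochain R D a =ᶠ[smallTuples (Fin (n + 1)) X] degreeCochain R D' a := by
  filter_upwards [eventually_smallTuples_of_forall_nhds (hcompact.diff hD') fun x hx =>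
    eventually_labelSign_label_eq_zero (R := R) (ha x hx.1) (mt (hzero x hx.1) hx.2)] with x hx
  by_cases hxD : ∀ i, x i ∈ D
  · by_cases hxD' : ∀ i, x i ∈ D'
    · rw [degreeCochain_of_forall_mem hxD, degreeCochain_of_forall_mem hxD']
    · push Not at hxD'
      have hxzero := hx (hxD'.imp fun i hi => ⟨subset_closure (hxD i), hi⟩)
      rw [degreeCochain_eq_zero hxzero, degreeCochain_eq_zero hxzero]
  · push Not at hxD
    obtain ⟨i, hi⟩ := hxD
    exact (restrict_of_notMem hi).trans (restrict_of_notMem (mt (@hD'D _) hi)).symm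

end Degree

section Integral

variable {R : Type*} [CommRing R] {k : ℕ} {D : Set (Fin (k + 1) → ℝ)}

theorem integral_degreeCochain_eq_of_homotopy (hD : IsOpen D) (hbdd : Bornology.IsBounded D)
    {a : ℝ → (Fin (k + 1) → ℝ) → Fin (k + 1) → ℝ}
    (ha : ∀ t ∈ Set.Icc (0 : ℝ) 1, ∀ x ∈ closure D, ContinuousAt (Function.uncurry a) (t, x))
    (hzero : ∀ t ∈ Set.Icc (0 : ℝ) 1, ∀ x ∈ closure D, a t x = 0 → x ∈ D) :
    integral (degreeCochain R D (a 0)) = integral (degreeCochain R D (a 1)) := by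
  have hclosure : closure (Prod.snd ⁻¹' D : Set (unitInterval × (Fin (k + 1) → ℝ))) =
      Prod.snd ⁻¹' closure D :=
    (isOpenMap_snd.preimage_closure_eq_closure_preimage continuous_snd D).symm
  have hcompact : IsCompact (closure D) := hbdd.isCompact_closure
  have hcocycle := isLocalCocycle_degreeCochain (R := R)
    (a := fun q : unitInterval × (Fin (k + 1) → ℝ) => a q.1 q.2) (hD.preimage continuous_snd)
    (by
      rw [hclosure, ← Set.univ_prod]
      exact isCompact_univ.prod hcompact)
    (fun q hq => (ha q.1 q.1.2 q.2 (hclosure.le hq)).comp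
      (f := fun q : unitInterval × (Fin (k + 1) → ℝ) => ((q.1 : ℝ), q.2)) (by fun_prop))
    (fun q hq => hzero q.1 q.1.2 q.2 (hclosure.le hq))
  have := integral_comp_eq_of_homotopy hcocycle hcompact zero_le_one
    (H := fun t x => (Set.projIcc 0 1 zero_le_one t, x)) (fun t _ x hx => hclosure.le hx)
    (fun t _ x _ => by
      have := continuous_projIcc (h := zero_le_one (α := ℝ))
      fun_prop)
  simp only [degreeCochain_comp] at this
  simpa [Function.comp_def, Set.preimage_preimage] using this

theorem integral_degreeCochain_eq_one (hD : IsOpen D) (hbdd : Bornology.IsBounded D)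
    {a : (Fin (k + 1) → ℝ) → Fin (k + 1) → ℝ} (ha : ∀ x ∈ closure D, ContinuousAt a x)
    {w : Fin (k + 1) → ℝ} (hw : w ∈ D) (haw : ∀ᶠ x in 𝓝 w, a x = x - w)
    (hzero : ∀ x ∈ closure D, a x = 0 → x = w) : integral (degreeCochain R D a) = 1 := by
  obtain ⟨s, hs, hball⟩ := Metric.eventually_nhds_iff_ball.1 (haw.and (hD.mem_nhds hw))
  rw [← integral_labelSign_label w, integral_congr (degreeCochain_eventuallyEq
    (fun x hx => (hball x hx).2) Metric.isOpen_ball hbdd.isCompact_closure ha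
    fun x hx h => by simpa [hzero x hx h] using hs)]
  refine integral_congr ?_
  filter_upwards [eventually_smallTuples_dist_lt hs] with x hx
  by_cases hxs : ∀ i, x i ∈ Metric.ball w s
  · refine (restrict_of_forall_mem hxs).trans ?_
    simp only [(hball _ (hxs _)).1]
  · push Not at hxs
    obtain ⟨i, hi⟩ := hxs
    refine (restrict_of_notMem hi).trans
      (labelSign_label_eq_zero_of_dist_lt hs (z := x i - w) ?_ fun j => ?_).symm
    · simpa [dist_eq_norm] using hi
    · simpa only [dist_sub_right] using hx j i

end Integral

section OrbitMean

variable (G : Type*) {E : Type*} [Group G] [Fintype G] [NormedAddCommGroup E] [MulAction G E]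

/-- The mean of the points `γ • x` for `γ` in the finite group `G`. -/
noncomputable def orbitMean [NormedSpace ℝ E] (x : E) : E :=
  (Fintype.card G : ℝ)⁻¹ • ∑ γ : G, γ • x

variable [NormedSpace ℝ E]

/-- The greatest distance of a point of the orbit of `x` to the mean of the orbit. -/
noncomputable def orbitRadius (x : E) : ℝ :=
  ‖fun γ : G => γ • x - orbitMean G x‖

variable {G}

theorem orbitMean_smul (γ : G) (x : E) : orbitMean G (γ • x) = orbitMean G x := by
  rw [orbitMean, orbitMean]
  congr 1
  exact Fintype.sum_equiv (Equiv.mulRight γ) _ _ fun α => (mul_smul α γ x).symm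

theorem orbitRadius_smul (γ : G) (x : E) : orbitRadius G (γ • x) = orbitRadius G x := by
  have hle (γ : G) (x : E) : orbitRadius G (γ • x) ≤ orbitRadius G x :=
    (pi_norm_le_iff_of_nonneg (norm_nonneg _)).2 fun α => by
      rw [orbitMean_smul, ← mul_smul]
      exact norm_le_pi_norm (fun β : G => β • x - orbitMean G x) (α * γ)
  exact (hle γ x).antisymm (by simpa using hle γ⁻¹ (γ • x))

theorem dist_orbitMean_le_orbitRadius (x : E) : dist x (orbitMean G x) ≤ orbitRadius G x := by
  simpa only [dist_eq_norm, orbitRadius, one_smul] using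
    norm_le_pi_norm (fun γ : G => γ • x - orbitMean G x) 1

theorem orbitMean_eq_self {x : E} (hx : ∀ γ : G, γ • x = x) : orbitMean G x = x := by
  rw [orbitMean, Finset.sum_congr rfl fun γ _ => hx γ, Finset.sum_const, Finset.card_univ,
    ← Nat.cast_smul_eq_nsmul ℝ, inv_smul_smul₀ (Nat.cast_ne_zero.2 Fintype.card_ne_zero)]

theorem orbitRadius_eq_zero_iff {x : E} : orbitRadius G x = 0 ↔ ∀ γ : G, γ • x = x := by
  refine ⟨fun h => ?_, fun h => ?_⟩
  · have hmean (γ : G) : γ • x = orbitMean G x :=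
      sub_eq_zero.1 (congrFun (norm_eq_zero.1 h) γ)
    exact fun γ => (hmean γ).trans ((hmean 1).symm.trans (one_smul G x))
  · refine norm_eq_zero.2 (funext fun γ => ?_)
    rw [h, orbitMean_eq_self h, sub_self, Pi.zero_apply]

variable {U : Set E} {x : E}

theorem ActsContinuouslyOn.continuousAt_orbitMean (h : ActsContinuouslyOn G U) (hx : x ∈ U) :
    ContinuousAt (orbitMean G) x :=
  (tendsto_finsetSum _ fun γ _ => h.continuousAt γ x hx).const_smul _

theorem ActsContinuouslyOn.continuousAt_orbitRadius (h : ActsContinuouslyOn G U) (hx : x ∈ U) :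
    ContinuousAt (orbitRadius G) x :=
  (continuousAt_pi.2 fun γ => (h.continuousAt γ x hx).sub (h.continuousAt_orbitMean hx)).norm

end OrbitMean

section DisplacedMean

variable (G : Type*) {k : ℕ} [Group G] [Fintype G] [MulAction G (Fin (k + 1) → ℝ)]

/-- The points whose orbit has radius less than `r` and mean at distance less than `ρ` of `z`. -/
def orbitTube (z : Fin (k + 1) → ℝ) (ρ r : ℝ) : Set (Fin (k + 1) → ℝ) :=
  {x | orbitRadius G x < r ∧ dist (orbitMean G x) z < ρ}

/-- The mean of the orbit of `x` seen from a base point. At time `t = 1` the base point moves from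
`w` to `y` as the radius of the orbit decreases from `r` to `0`, while at time `t = 0` it is `w`. -/
noncomputable def displacedMean (w y : Fin (k + 1) → ℝ) (r t : ℝ) (x : Fin (k + 1) → ℝ) :
    Fin (k + 1) → ℝ :=
  orbitMean G x - AffineMap.lineMap w y (t * (1 - orbitRadius G x / r))

variable {G} {U : Set (Fin (k + 1) → ℝ)} {w x y z : Fin (k + 1) → ℝ} {r ρ t : ℝ}

theorem orbitTube_subset_ball : orbitTube G z ρ r ⊆ Metric.ball z (ρ + r) := fun x hx =>
  (dist_triangle x (orbitMean G x) z).trans_lt <| by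
    linarith [hx.1, hx.2, dist_orbitMean_le_orbitRadius (G := G) x]

theorem smul_mem_orbitTube_iff {γ : G} : γ • x ∈ orbitTube G z ρ r ↔ x ∈ orbitTube G z ρ r := by
  simp only [orbitTube, Set.mem_ofPred_eq, orbitRadius_smul, orbitMean_smul]

theorem displacedMean_smul (γ : G) :
    displacedMean G w y r t (γ • x) = displacedMean G w y r t x := by
  rw [displacedMean, displacedMean, orbitMean_smul, orbitRadius_smul]

theorem ActsContinuouslyOn.continuousAt_displacedMean (h : ActsContinuouslyOn G U) (hx : x ∈ U) :
    ContinuousAt (Function.uncurry (displacedMean G w y r)) (t, x) := by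
  have hmean : ContinuousAt (fun q : ℝ × (Fin (k + 1) → ℝ) => orbitMean G q.2) (t, x) :=
    ContinuousAt.comp (g := orbitMean G) (h.continuousAt_orbitMean hx) continuousAt_snd
  have hradius : ContinuousAt (fun q : ℝ × (Fin (k + 1) → ℝ) => orbitRadius G q.2) (t, x) :=
    ContinuousAt.comp (g := orbitRadius G) (h.continuousAt_orbitRadius hx) continuousAt_snd
  simp only [Function.uncurry_def, displacedMean]
  fun_prop

theorem ActsContinuouslyOn.isOpen_orbitTube (h : ActsContinuouslyOn G U)
    (hU : Metric.closedBall z (ρ + r) ⊆ U) : IsOpen (orbitTube G z ρ r) :=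
  isOpen_iff_mem_nhds.2 fun x hx => by
    have hxU : x ∈ U := hU (Metric.ball_subset_closedBall (orbitTube_subset_ball hx))
    exact ((h.continuousAt_orbitRadius hxU).eventually_lt_const hx.1).and
      (((h.continuousAt_orbitMean hxU).dist continuousAt_const).eventually_lt_const hx.2)

theorem closure_orbitTube_subset_closedBall :
    closure (orbitTube G z ρ r) ⊆ Metric.closedBall z (ρ + r) :=
  closure_minimal (orbitTube_subset_ball.trans Metric.ball_subset_closedBall)
    Metric.isClosed_closedBall

theorem ActsContinuouslyOn.orbitRadius_le_of_mem_closure (h : ActsContinuouslyOn G U)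
    (hU : Metric.closedBall z (ρ + r) ⊆ U) (hx : x ∈ closure (orbitTube G z ρ r)) :
    orbitRadius G x ≤ r :=
  ContinuousWithinAt.closure_le hx
    (h.continuousAt_orbitRadius (hU (closure_orbitTube_subset_closedBall hx))).continuousWithinAt
    continuousWithinAt_const fun _ hy => hy.1.le

theorem ActsContinuouslyOn.mem_orbitTube_of_displacedMean_eq_zero (h : ActsContinuouslyOn G U)
    (hr : 0 < r) (hU : Metric.closedBall z (ρ + r) ⊆ U) (hw : w ∈ Metric.ball z ρ)
    (hy : y ∈ Metric.ball z ρ) (hfix : ∀ x ∈ Metric.closedBall w r, ∀ γ : G, γ • x = x)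
    (ht : t ∈ Set.Icc (0 : ℝ) 1) (hx : x ∈ closure (orbitTube G z ρ r))
    (hzero : displacedMean G w y r t x = 0) : x ∈ orbitTube G z ρ r := by
  have hle := h.orbitRadius_le_of_mem_closure hU hx
  have hmean := sub_eq_zero.1 hzero
  have hratio : orbitRadius G x / r ∈ Set.Icc (0 : ℝ) 1 :=
    ⟨div_nonneg (norm_nonneg _) hr.le, div_le_one_of_le₀ hle hr.le⟩
  refine ⟨hle.lt_of_ne fun heq => ?_, ?_⟩
  · have hxw : orbitMean G x = w := by simpa [heq, hr.ne'] using hmean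
    have hxr : x ∈ Metric.closedBall w r :=
      Metric.mem_closedBall.2 (hxw ▸ (dist_orbitMean_le_orbitRadius x).trans hle)
    exact hr.ne' (heq ▸ orbitRadius_eq_zero_iff.2 (hfix x hxr))
  · rw [hmean]
    exact (convex_ball z ρ).lineMap_mem hw hy (unitInterval.mul_mem ht
      (Set.Icc.one_sub_mem hratio))

end DisplacedMean

theorem mem_closure_of_isInvariant {G X : Type*} [Group G] [MulAction G X] [TopologicalSpace X]
    {U D : Set X} {x : X} (h : ActsContinuouslyOn G U) (hD : ∀ (γ : G), ∀ x ∈ D, γ • x ∈ D)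
    (hDU : closure D ⊆ U) (γ : G) (hx : x ∈ closure D) : γ • x ∈ closure D :=
  closure_mono (Set.image_subset_iff.2 (hD γ))
    (mem_closure_image (h.continuousAt γ x (hDU hx)) hx)

theorem isInvariantCocycle_degreeCochain {G X R : Type*} [Group G] [MulAction G X] [CommRing R]
    [UniformSpace X] {U D : Set X} {n : ℕ} {a : X → Fin n → ℝ} (h : ActsContinuouslyOn G U)
    (hD : IsOpen D) (hcompact : IsCompact (closure D)) (hDU : closure D ⊆ U)
    (ha : ∀ x ∈ closure D, ContinuousAt a x) (hzero : ∀ x ∈ closure D, a x = 0 → x ∈ D)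
    (hDG : ∀ (γ : G) x, γ • x ∈ D ↔ x ∈ D) (haG : ∀ (γ : G) x, a (γ • x) = a x) :
    IsInvariantCocycle G (degreeCochain R D a) (closure D) where
  toIsLocalCocycle := isLocalCocycle_degreeCochain hD hcompact ha hzero
  isCompact := hcompact
  smul_mem γ _ hx := mem_closure_of_isInvariant h (fun γ x => (hDG γ x).2) hDU γ hx
  apply_smul γ x := restrict_congr (fun _ => hDG γ _) (by simp only [Pi.smul_apply, haG])
  injective_of_ne_zero _ := injective_of_degreeCochain_ne_zero

theorem smul_eq_self_of_prime_card {G X : Type*} [Group G] [MulAction G X]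
    (hG : (Nat.card G).Prime) {γ : G} (hγ : γ ≠ 1) {x : X} (hx : γ • x = x) (δ : G) :
    δ • x = x := by
  have := Fact.mk hG
  have hmem : γ ∈ MulAction.stabilizer G x := hx
  rcases (MulAction.stabilizer G x).eq_bot_or_eq_top_of_prime_card with hbot | htop
  · exact absurd (Subgroup.mem_bot.1 (hbot ▸ hmem)) hγ
  · exact MulAction.mem_stabilizer_iff.1 (htop ▸ Subgroup.mem_top δ)

section DisplacedMean

variable {G : Type*} {k : ℕ} [Group G] [Fintype G] [MulAction G (Fin (k + 1) → ℝ)]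
  {U : Set (Fin (k + 1) → ℝ)} {w y z : Fin (k + 1) → ℝ} {r ρ : ℝ}

theorem ActsContinuouslyOn.integral_displacedMean_zero {R : Type*} [CommRing R]
    (h : ActsContinuouslyOn G U) (hr : 0 < r) (hU : Metric.closedBall z (ρ + r) ⊆ U)
    (hw : w ∈ Metric.ball z ρ) (hfix : ∀ x ∈ Metric.closedBall w r, ∀ γ : G, γ • x = x) :
    integral (degreeCochain R (orbitTube G z ρ r) (displacedMean G w y r 0)) = 1 := by
  have hdisplaced (x : Fin (k + 1) → ℝ) : displacedMean G w y r 0 x = orbitMean G x - w := by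
    rw [displacedMean, zero_mul, AffineMap.lineMap_apply_zero]
  have hww := hfix w (Metric.mem_closedBall_self hr.le)
  refine integral_degreeCochain_eq_one (w := w) (h.isOpen_orbitTube hU)
    (Metric.isBounded_ball.subset orbitTube_subset_ball) (fun x hx => ?_) ⟨?_, ?_⟩ ?_
    fun x hx hzero => ?_
  · simp only [funext hdisplaced]
    exact (h.continuousAt_orbitMean (hU (closure_orbitTube_subset_closedBall hx))).sub
      continuousAt_const
  · rwa [orbitRadius_eq_zero_iff.2 hww]
  · rwa [orbitMean_eq_self hww]
  · filter_upwards [Metric.closedBall_mem_nhds w hr] with x hx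
    rw [hdisplaced, orbitMean_eq_self (hfix x hx)]
  · have hmean : orbitMean G x = w := sub_eq_zero.1 (hdisplaced x ▸ hzero)
    have hxr : x ∈ Metric.closedBall w r := Metric.mem_closedBall.2
      (hmean ▸ (dist_orbitMean_le_orbitRadius x).trans (h.orbitRadius_le_of_mem_closure hU hx))
    rw [← orbitMean_eq_self (hfix x hxr), hmean]

theorem orbitRadius_pos_of_displacedMean_eq_zero {x : Fin (k + 1) → ℝ}
    (hy : ¬∀ γ : G, γ • y = y) (hzero : displacedMean G w y r 1 x = 0) : 0 < orbitRadius G x := by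
  refine (norm_nonneg _).lt_of_ne' fun h : orbitRadius G x = 0 => hy ?_
  have hx := orbitRadius_eq_zero_iff.1 h
  have hxy : x = y := sub_eq_zero.1 <| by
    simpa only [displacedMean, h, orbitMean_eq_self hx, zero_div, sub_zero, mul_one,
      AffineMap.lineMap_apply_one] using hzero
  exact hxy ▸ hx

theorem ActsContinuouslyOn.continuousAt_displacedMean_right (h : ActsContinuouslyOn G U) {t : ℝ}
    {x : Fin (k + 1) → ℝ} (hx : x ∈ U) : ContinuousAt (displacedMean G w y r t) x :=
  ContinuousAt.comp (g := Function.uncurry (displacedMean G w y r)) (f := fun x => (t, x))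
    (h.continuousAt_displacedMean hx) (by fun_prop)

theorem ActsContinuouslyOn.exists_lt_orbitRadius (h : ActsContinuouslyOn G U)
    {K : Set (Fin (k + 1) → ℝ)} (hK : IsCompact K) (hKU : K ⊆ U) (hy : ¬∀ γ : G, γ • y = y) :
    ∃ κ > 0, ∀ x ∈ K, displacedMean G w y r 1 x = 0 → κ < orbitRadius G x := by
  have hcont : ContinuousOn (displacedMean G w y r 1) K := fun x hx =>
    (h.continuousAt_displacedMean_right (hKU hx)).continuousWithinAt
  have hzeros : IsCompact (K ∩ displacedMean G w y r 1 ⁻¹' {0}) :=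
    hK.of_isClosed_subset (hcont.preimage_isClosed_of_isClosed hK.isClosed isClosed_singleton)
      Set.inter_subset_left
  obtain ⟨κ, hκ, hle⟩ := hzeros.exists_forall_le' (f := orbitRadius G)
    (fun x hx => (h.continuousAt_orbitRadius (hKU hx.1)).continuousWithinAt)
    fun x hx => orbitRadius_pos_of_displacedMean_eq_zero hy hx.2
  exact ⟨κ / 2, half_pos hκ, fun x hx hzero => (half_lt_self hκ).trans_le (hle x ⟨hx, hzero⟩)⟩

theorem ActsContinuouslyOn.integral_displacedMean_one (h : ActsContinuouslyOn G U) {R : Type*}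
    [CommRing R] (hcard : (Fintype.card G : R) = 0) (hG : (Nat.card G).Prime) (hr : 0 < r)
    (hU : Metric.ball z (ρ + 2 * r) ⊆ U) (hw : w ∈ Metric.ball z ρ) (hy : y ∈ Metric.ball z ρ)
    (hfix : ∀ x ∈ Metric.closedBall w r, ∀ γ : G, γ • x = x) (hyfix : ¬∀ γ : G, γ • y = y) :
    integral (degreeCochain R (orbitTube G z ρ r) (displacedMean G w y r 1)) = 0 := by
  have hball : Metric.closedBall z (ρ + r) ⊆ Metric.ball z (ρ + 2 * r) :=
    Metric.closedBall_subset_ball (by linarith)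
  have hclosure : closure (orbitTube G z ρ r) ⊆ Metric.ball z (ρ + 2 * r) :=
    closure_orbitTube_subset_closedBall.trans hball
  have hcompact : IsCompact (closure (orbitTube G z ρ r)) :=
    (Metric.isBounded_ball.subset orbitTube_subset_ball).isCompact_closure
  obtain ⟨κ, hκ, hlt⟩ :=
    h.exists_lt_orbitRadius (w := w) (r := r) hcompact (hclosure.trans hU) hyfix
  -- Excise the fixed points, which do not meet the zeros of the displaced mean.
  set D : Set (Fin (k + 1) → ℝ) := orbitTube G z ρ r ∩ {x | κ < orbitRadius G x}
  have hDtube : closure D ⊆ closure (orbitTube G z ρ r) := closure_mono Set.inter_subset_left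
  have hDU : closure D ⊆ U := hDtube.trans (hclosure.trans hU)
  have hD : IsOpen D := isOpen_iff_mem_nhds.2 fun x hx =>
    inter_mem ((h.isOpen_orbitTube (hball.trans hU)).mem_nhds hx.1)
      ((h.continuousAt_orbitRadius (hDU (subset_closure hx))).eventually_const_lt hx.2)
  have hDG (γ : G) (x : Fin (k + 1) → ℝ) : γ • x ∈ D ↔ x ∈ D :=
    and_congr smul_mem_orbitTube_iff (by simp only [Set.mem_ofPred_eq, orbitRadius_smul])
  have hcont : ∀ x ∈ closure (orbitTube G z ρ r), ContinuousAt (displacedMean G w y r 1) x :=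
    fun x hx => h.continuousAt_displacedMean_right (hU (hclosure hx))
  have hzero : ∀ x ∈ closure (orbitTube G z ρ r), displacedMean G w y r 1 x = 0 → x ∈ D :=
    fun x hx h0 => ⟨h.mem_orbitTube_of_displacedMean_eq_zero hr (hball.trans hU) hw hy hfix
      (Set.right_mem_Icc.2 zero_le_one) hx h0, hlt x hx h0⟩
  have hmoved : ∀ x ∈ closure D, ¬∀ γ : G, γ • x = x := fun x hx hxfix =>
    hκ.not_ge <| (ContinuousWithinAt.closure_le hx continuousWithinAt_const
      (h.continuousAt_orbitRadius (hDU hx)).continuousWithinAt fun _ hy => hy.2.le).trans_eq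
      (orbitRadius_eq_zero_iff.2 hxfix)
  rw [integral_congr (degreeCochain_eventuallyEq Set.inter_subset_left hD hcompact hcont hzero)]
  exact (isInvariantCocycle_degreeCochain h hD
    (hcompact.of_isClosed_subset isClosed_closure hDtube) hDU (fun x hx => hcont x (hDtube hx))
    (fun x hx => hzero x (hDtube hx)) hDG fun γ x => displacedMean_smul γ).integral_eq_zero
    hcard h Metric.isOpen_ball (convex_ball z _) hU (Metric.ball_subset_ball (by linarith) hw)
    (eventually_of_mem (Metric.closedBall_mem_nhds w hr) hfix) (hDtube.trans hclosure)
    fun x hx γ hγ => of_not_not fun hne => hmoved x hx (smul_eq_self_of_prime_card hG hne hγ)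

omit [Fintype G] in
theorem ActsContinuouslyOn.smul_eq_self_of_forall_mem_closedBall (h : ActsContinuouslyOn G U)
    (hG : (Nat.card G).Prime) (hr : 0 < r) (hU : Metric.ball z (ρ + 2 * r) ⊆ U)
    (hw : w ∈ Metric.ball z ρ) (hy : y ∈ Metric.ball z ρ)
    (hfix : ∀ x ∈ Metric.closedBall w r, ∀ γ : G, γ • x = x) : ∀ γ : G, γ • y = y := by
  by_contra hyfix
  have : Finite G := Nat.finite_of_card_ne_zero hG.ne_zero
  have := Fintype.ofFinite G
  have := Fact.mk hG
  have hU' : Metric.closedBall z (ρ + r) ⊆ U :=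
    (Metric.closedBall_subset_ball (by linarith)).trans hU
  have hclosure := (closure_orbitTube_subset_closedBall (G := G)).trans hU'
  have hcard : (Fintype.card G : ZMod (Nat.card G)) = 0 := by
    rw [← Nat.card_eq_fintype_card, ZMod.natCast_self]
  have hhomotopy := integral_degreeCochain_eq_of_homotopy (R := ZMod (Nat.card G))
    (h.isOpen_orbitTube hU') (Metric.isBounded_ball.subset orbitTube_subset_ball)
    (a := displacedMean G w y r) (fun t _ x hx => h.continuousAt_displacedMean (hclosure hx))
    fun t ht x hx => h.mem_orbitTube_of_displacedMean_eq_zero hr hU' hw hy hfix ht hx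
  rw [h.integral_displacedMean_zero hr hU' hw hfix,
    h.integral_displacedMean_one hcard hG hr hU hw hy hfix hyfix] at hhomotopy
  exact one_ne_zero hhomotopy

end DisplacedMean

section Manifold

variable {G X : Type*} [Group G] [TopologicalSpace X] [MulAction G X] [ContinuousConstSMul G X]

theorem exists_mulAction_of_isOpenEmbedding {E : Type*} [TopologicalSpace E] {e : X → E}
    (he : IsOpenEmbedding e) : ∃ _ : MulAction G E,
      (∀ (γ : G) x, γ • e x = e (γ • x)) ∧ ActsContinuouslyOn G (Set.range e) := by
  classical
  let : MulAction G E := .compHom E <|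
    (Equiv.Perm.extendDomainHom (Equiv.ofInjective e he.injective)).comp (MulAction.toPermHom G X)
  have hsmul (γ : G) (x : X) : γ • e x = e (γ • x) :=
    Equiv.Perm.extendDomain_apply_image _ (Equiv.ofInjective e he.injective) x
  refine ⟨this, hsmul, ?_, ?_⟩
  · rintro γ _ ⟨x, rfl⟩
    exact ⟨γ • x, (hsmul γ x).symm⟩
  · rintro γ _ ⟨x, rfl⟩
    refine he.continuousAt_iff.1 ?_
    simp only [Function.comp_def, hsmul]
    exact (he.continuous.comp (continuous_const_smul γ)).continuousAt

theorem isClosed_interior_fixedPoints_of_isOpenEmbedding (hG : (Nat.card G).Prime) {n : ℕ}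
    {e : X → Fin n → ℝ} (he : IsOpenEmbedding e) :
    IsClosed (interior (MulAction.fixedPoints G X)) := by
  refine closure_subset_iff_isClosed.1 fun z hz => ?_
  obtain _ | k := n
  · have : Subsingleton X := he.injective.subsingleton
    obtain ⟨w, hw⟩ := closure_nonempty_iff.1 ⟨z, hz⟩
    exact Subsingleton.elim w z ▸ hw
  obtain ⟨_, hsmul, hact⟩ := exists_mulAction_of_isOpenEmbedding (G := G) he
  obtain ⟨s, hs, hball⟩ := Metric.isOpen_iff.1 he.isOpen_range (e z) ⟨z, rfl⟩
  have hnhds : e ⁻¹' Metric.ball (e z) (s / 2) ∈ 𝓝 z :=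
    he.continuous.continuousAt (Metric.ball_mem_nhds _ (half_pos hs))
  obtain ⟨w, hwz, hw⟩ := mem_closure_iff_nhds.1 hz _ hnhds
  obtain ⟨r, hr, hrw⟩ := Metric.nhds_basis_closedBall.mem_iff.1 <|
    he.image_mem_nhds.2 (mem_interior_iff_mem_nhds.1 hw)
  refine mem_interior_iff_mem_nhds.2 (mem_of_superset hnhds fun y hy γ => he.injective ?_)
  rw [← hsmul]
  refine hact.smul_eq_self_of_forall_mem_closedBall hG (lt_min hr (by positivity : 0 < s / 4))
    ((Metric.ball_subset_ball ?_).trans hball) hwz hy (fun x hx δ => ?_) γ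
  · linarith [min_le_right r (s / 4)]
  · obtain ⟨x, hxfix, rfl⟩ := hrw (Metric.closedBall_subset_closedBall (min_le_left _ _) hx)
    rw [hsmul, hxfix δ]

theorem isClosed_fixedPoints [T2Space X] : IsClosed (MulAction.fixedPoints G X) := by
  simp only [MulAction.fixedPoints, Set.ofPred_forall]
  exact isClosed_iInter fun γ => isClosed_eq (continuous_const_smul γ) continuous_id

variable (V : Type*) [NormedAddCommGroup V] [NormedSpace ℝ V] [FiniteDimensional ℝ V]

theorem isClosed_interior_fixedPoints [T2Space X] [ChartedSpace V X] (hG : (Nat.card G).Prime) :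
    IsClosed (interior (MulAction.fixedPoints G X)) := by
  refine closure_subset_iff_isClosed.1 fun z hz => ?_
  have hzfix : z ∈ MulAction.fixedPoints G X :=
    closure_minimal interior_subset isClosed_fixedPoints hz
  have : Finite G := Nat.finite_of_card_ne_zero hG.ne_zero
  let Y : SubMulAction G X :=
    { carrier := {x | ∀ γ : G, γ • x ∈ (chartAt V z).source}
      smul_mem' := fun γ x hx δ => by simpa only [smul_smul] using hx (δ * γ) }
  have hY : IsOpen (Y : Set X) := by
    have : (Y : Set X) = ⋂ γ : G, (γ • ·) ⁻¹' (chartAt V z).source :=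
      Set.ofPred_forall fun γ x => γ • x ∈ (chartAt V z).source
    rw [this]
    exact isOpen_iInter_of_finite fun γ =>
      (chartAt V z).open_source.preimage (continuous_const_smul γ)
  have hzY : z ∈ Y := fun γ => (hzfix γ).symm ▸ mem_chart_source V z
  have : ContinuousConstSMul G Y :=
    ⟨fun γ => ((continuous_const_smul γ).comp continuous_subtype_val).subtype_mk _⟩
  have hchart : IsOpenEmbedding fun y : Y => chartAt V z y :=
    (chartAt V z).isOpenEmbedding_restrict.comp <|
      .of_comp (Set.inclusion fun y (hy : y ∈ Y) => by simpa using hy 1)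
        (chartAt V z).open_source.isOpenEmbedding_subtypeVal hY.isOpenEmbedding_subtypeVal
  have hclosed := isClosed_interior_fixedPoints_of_isOpenEmbedding hG
    ((ContinuousLinearEquiv.ofFinrankEq (𝕜 := ℝ) (E := V) (F := Fin (Module.finrank ℝ V) → ℝ)
      (by simp)).toHomeomorph.isOpenEmbedding.comp hchart)
  have hfix : MulAction.fixedPoints G Y = (↑) ⁻¹' MulAction.fixedPoints G X :=
    Set.ext fun y => forall_congr' fun γ => Subtype.ext_iff
  have hopen : IsOpenEmbedding ((↑) : Y → X) := hY.isOpenEmbedding_subtypeVal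
  rw [hfix,
    ← hopen.isOpenMap.preimage_interior_eq_interior_preimage continuous_subtype_val] at hclosed
  have hclosure := hclosed.closure_subset
  rw [← hopen.isOpenMap.preimage_closure_eq_closure_preimage continuous_subtype_val] at hclosure
  exact hclosure (a := ⟨z, hzY⟩) hz

end Manifold

section Newman

variable (V : Type*) {X : Type*} [NormedAddCommGroup V] [NormedSpace ℝ V] [FiniteDimensional ℝ V]
  [TopologicalSpace X] [T2Space X] [ChartedSpace V X] {g : X → X}

include V

theorem eq_id_of_prime_iterate_eq_id [PreconnectedSpace X] (hg : Continuous g) {p : ℕ}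
    (hp : p.Prime) (hgp : g^[p] = id) (hfix : (interior (Function.fixedPoints g)).Nonempty) :
    g = id := by
  obtain ⟨q, rfl⟩ := Nat.exists_eq_add_one.2 hp.pos
  let σ : Equiv.Perm X :=
    ⟨g, g^[q], congrFun hgp, congrFun ((Function.iterate_succ' g q).symm.trans hgp)⟩
  have hσp : σ ^ (q + 1) = 1 := Equiv.ext fun x =>
    (congrFun (Equiv.Perm.iterate_eq_pow σ (q + 1)).symm x).trans (congrFun hgp x)
  by_cases hσ : σ = 1
  · exact congrArg DFunLike.coe hσ
  have := Fact.mk hp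
  have hG : (Nat.card (Subgroup.zpowers σ)).Prime := by
    rwa [Nat.card_zpowers, orderOf_eq_prime hσp hσ]
  have : ContinuousConstSMul (Subgroup.zpowers σ) X := ⟨by
    rintro ⟨_, hτ⟩
    have hσfin : IsOfFinOrder σ := isOfFinOrder_iff_pow_eq_one.2 ⟨_, hp.pos, hσp⟩
    obtain ⟨n, rfl⟩ := hσfin.mem_powers_iff_mem_zpowers.2 hτ
    simp only [Subgroup.mk_smul, Equiv.Perm.smul_def, ← Equiv.Perm.iterate_eq_pow]
    exact hg.iterate n⟩
  have heq : MulAction.fixedPoints (Subgroup.zpowers σ) X = Function.fixedPoints g :=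
    Set.ext fun x => ⟨fun hx => hx ⟨σ, Subgroup.mem_zpowers σ⟩, fun hx ⟨τ, n, hn⟩ => by
      subst hn
      exact Equiv.Perm.zpow_apply_eq_self_of_apply_eq_self (f := σ) hx n⟩
  have huniv := IsClopen.eq_univ
    ⟨isClosed_interior_fixedPoints V hG, isOpen_interior⟩ (heq ▸ hfix)
  exact funext fun x => heq.le (interior_subset (huniv.ge (Set.mem_univ x)))

theorem eq_id_of_iterate_eq_id [PreconnectedSpace X] (hg : Continuous g) {n : ℕ} (hn : n ≠ 0)
    (hgn : g^[n] = id) (hfix : (interior (Function.fixedPoints g)).Nonempty) : g = id := by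
  induction n using induction_on_primes with
  | zero => exact absurd rfl hn
  | one => exact hgn
  | prime_mul p a hp ih =>
    have hga : (g^[a])^[p] = id := by rw [← Function.iterate_mul, mul_comm, hgn]
    refine ih (right_ne_zero_of_mul hn) (eq_id_of_prime_iterate_eq_id V (hg.iterate a) hp hga ?_)
    exact hfix.mono (interior_mono fun x hx => Function.IsFixedPt.iterate hx a)

theorem eqOn_id_of_forall_isPeriodicPt {C : Set X} (hCo : IsOpen C) (hC : IsPreconnected C)
    (hmaps : Set.MapsTo g C C) (hg : ContinuousOn g C) {n : ℕ} (hn : n ≠ 0)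
    (hgn : ∀ x ∈ C, Function.IsPeriodicPt g n x)
    (hfix : (C ∩ interior (Function.fixedPoints g)).Nonempty) : Set.EqOn g id C := by
  have : PreconnectedSpace C := Subtype.preconnectedSpace hC
  let : ChartedSpace V C := inferInstanceAs (ChartedSpace V (⟨C, hCo⟩ : TopologicalSpace.Opens X))
  have hid : hmaps.restrict g C C = id := by
    refine eq_id_of_iterate_eq_id V (hg.mapsToRestrict hmaps) hn (funext fun x => ?_) ?_
    · exact Subtype.ext ((hmaps.coe_iterate_restrict x n).trans (hgn x x.2))
    · obtain ⟨y, hyC, hy⟩ := hfix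
      refine ⟨⟨y, hyC⟩, interior_maximal (fun x hx => ?_)
        (isOpen_interior.preimage continuous_subtype_val) hy⟩
      have hgx : g x = x := interior_subset (s := Function.fixedPoints g) hx
      exact Subtype.ext hgx
  exact fun x hx => congrArg Subtype.val (congrFun hid ⟨x, hx⟩)

end Newman

section PointwisePeriodic

open Function

variable {X : Type*} {f : X → X}

theorem injective_of_forall_mem_periodicPts (hper : ∀ x, x ∈ periodicPts f) : Injective f :=
  fun x y h => (bijOn_periodicPts f).injOn (hper x) (hper y) h

theorem mapsTo_of_preimage_subset (hper : ∀ x, x ∈ periodicPts f) {B : Set X}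
    (hB : f ⁻¹' B ⊆ B) : Set.MapsTo f B B := fun x hx => by
  have hback (n : ℕ) : ∀ y, f^[n] y ∈ B → y ∈ B := by
    induction n with
    | zero => exact fun y hy => hy
    | succ n ih => exact fun y hy => hB (ih (f y) hy)
  obtain ⟨n, hn, hx'⟩ := hper x
  obtain ⟨m, rfl⟩ := Nat.exists_eq_add_one.2 hn
  exact hback m (f x) (hx'.eq.symm ▸ hx)

theorem isPeriodicPt_apply_iff (hf : Injective f) {n : ℕ} {x : X} :
    IsPeriodicPt f n (f x) ↔ IsPeriodicPt f n x := by
  refine ⟨fun h => hf ?_, fun h => h.apply⟩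
  rw [← iterate_succ_apply' f, iterate_succ_apply, h.eq]

variable [TopologicalSpace X]

theorem mapsTo_interior_of_preimage_subset (hf : Continuous f)
    (hper : ∀ x, x ∈ periodicPts f) {B : Set X} (hB : f ⁻¹' B ⊆ B) :
    Set.MapsTo f (interior B) (interior B) :=
  mapsTo_of_preimage_subset hper <|
    (preimage_interior_subset_interior_preimage hf).trans (interior_mono hB)

theorem mapsTo_interior_ptsOfPeriod (hf : Continuous f) (hper : ∀ x, x ∈ periodicPts f) (n : ℕ) :
    Set.MapsTo f (interior (ptsOfPeriod f n)) (interior (ptsOfPeriod f n)) :=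
  mapsTo_interior_of_preimage_subset hf hper fun _ hx =>
    (isPeriodicPt_apply_iff (injective_of_forall_mem_periodicPts hper)).1 hx

theorem mapsTo_connectedComponentIn_of_isFixedPt {A : Set X} {g : X → X}
    (hA : Set.MapsTo g A A) (hg : ContinuousOn g A) {x y : X}
    (hy : y ∈ connectedComponentIn A x) (hgy : IsFixedPt g y) :
    Set.MapsTo g (connectedComponentIn A x) (connectedComponentIn A x) := by
  have himage : g '' connectedComponentIn A x ⊆ connectedComponentIn A y :=
    (isPreconnected_connectedComponentIn.image g
      (hg.mono (connectedComponentIn_subset A x))).subset_connectedComponentIn ⟨y, hy, hgy⟩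
      (hA.mono_left (connectedComponentIn_subset A x)).image_subset
  rw [← connectedComponentIn_eq hy] at himage
  exact Set.mapsTo_iff_image_subset.2 himage

theorem exists_mem_interior_setOf_isPeriodicPt [T2Space X] [LocallyCompactSpace X]
    (hf : Continuous f) (hper : ∀ x, x ∈ periodicPts f) {S : Set X} (hS : IsClosed S)
    (hne : S.Nonempty) :
    ∃ n ≠ 0, ∃ x ∈ S, x ∈ interior {y | y ∈ S → IsPeriodicPt f n y} := by
  have : LocallyCompactSpace S := hS.isClosedEmbedding_subtypeVal.locallyCompactSpace
  have : Nonempty S := hne.to_subtype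
  obtain ⟨n, x, hx⟩ := nonempty_interior_of_iUnion_of_closed
    (f := fun n : ℕ+ => ((↑) ⁻¹' ptsOfPeriod f n : Set S))
    (fun n => (isClosed_eq (hf.iterate n) continuous_id).preimage continuous_subtype_val)
    (by rw [← Set.preimage_iUnion, iUnion_pnat_ptsOfPeriod, Set.eq_univ_of_forall hper,
      Set.preimage_univ])
  refine ⟨n, n.ne_zero, x, x.2, mem_interior_iff_mem_nhds.2 ?_⟩
  obtain ⟨u, hu, hsub⟩ := mem_nhds_subtype S x _ |>.1 (mem_interior_iff_mem_nhds.1 hx)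
  exact mem_of_superset hu fun y hy hyS => hsub (a := ⟨y, hyS⟩) hy

end PointwisePeriodic

section Montgomery

open Function

variable {X : Type*} {f : X → X}

theorem iterate_piecewise_id {O : Set X} [∀ x, Decidable (x ∈ O)] (hO : Set.MapsTo f O O)
    (n : ℕ) : (O.piecewise f id)^[n] = O.piecewise f^[n] id := by
  induction n with
  | zero => exact (Set.piecewise_same O id).symm
  | succ n ih =>
    refine funext fun x => ?_
    by_cases hx : x ∈ O
    · simp only [iterate_succ_apply, ih, Set.piecewise_eq_of_mem _ _ _ hx,
        Set.piecewise_eq_of_mem _ _ _ (hO hx)]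
    · simp only [iterate_succ_apply, ih, Set.piecewise_eq_of_notMem _ _ _ hx, id]

theorem setOf_imp_isPeriodicPt_preimage_subset (hf : Injective f) {S : Set X}
    (hS : Set.MapsTo f S S) (n : ℕ) :
    f ⁻¹' {x | x ∈ S → IsPeriodicPt f n x} ⊆ {x | x ∈ S → IsPeriodicPt f n x} :=
  fun _ hx hxS => (isPeriodicPt_apply_iff hf).1 (hx (hS hxS))

variable [TopologicalSpace X]

/-- The points near which some positive iterate of `f` is the identity. -/
def locallyPeriodicPts (f : X → X) : Set X :=
  ⋃ n ≠ 0, interior (ptsOfPeriod f n)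

theorem mem_locallyPeriodicPts {x : X} :
    x ∈ locallyPeriodicPts f ↔ ∃ n ≠ 0, x ∈ interior (ptsOfPeriod f n) := by
  simp [locallyPeriodicPts]

theorem mapsTo_compl_locallyPeriodicPts (hf : Continuous f) (hinj : Injective f) :
    Set.MapsTo f (locallyPeriodicPts f)ᶜ (locallyPeriodicPts f)ᶜ := fun x hx hfx => by
  obtain ⟨n, hn, hfx⟩ := mem_locallyPeriodicPts.1 hfx
  refine hx (mem_locallyPeriodicPts.2 ⟨n, hn, interior_mono (fun y hy => ?_)
    (preimage_interior_subset_interior_preimage hf hfx)⟩)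
  exact (isPeriodicPt_apply_iff hinj).1 hy

variable (V : Type*) [NormedAddCommGroup V] [NormedSpace ℝ V] [FiniteDimensional ℝ V] [T2Space X]
  [ChartedSpace V X]

include V

theorem mem_interior_ptsOfPeriod_of_mem_closure (hf : Continuous f)
    (hper : ∀ x, x ∈ periodicPts f) {k : ℕ} {x : X} (hx : x ∈ locallyPeriodicPts f)
    (hxk : x ∈ closure (interior (ptsOfPeriod f k))) : x ∈ interior (ptsOfPeriod f k) := by
  have := ChartedSpace.locallyConnectedSpace V X
  obtain ⟨m, hm, hx⟩ := mem_locallyPeriodicPts.1 hx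
  let C := connectedComponentIn (interior (ptsOfPeriod f m)) x
  have hCo : IsOpen C := isOpen_interior.connectedComponentIn
  have hxC : x ∈ C := mem_connectedComponentIn hx
  obtain ⟨y, hyC, hyk⟩ := mem_closure_iff.1 hxk C hCo hxC
  have hCmaps : Set.MapsTo f^[k] C C := mapsTo_connectedComponentIn_of_isFixedPt
    ((mapsTo_interior_ptsOfPeriod hf hper m).iterate k) (hf.iterate k).continuousOn hyC
    (interior_subset hyk : y ∈ ptsOfPeriod f k)
  have hCm (z : X) (hz : z ∈ C) : IsPeriodicPt f m z :=
    interior_subset (s := ptsOfPeriod f m) (connectedComponentIn_subset _ _ hz)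
  have hid : Set.EqOn f^[k] id C := eqOn_id_of_forall_isPeriodicPt V hCo
    isPreconnected_connectedComponentIn hCmaps (hf.iterate k).continuousOn hm
    (fun z hz => (hCm z hz).iterate k) ⟨y, hyC, hyk⟩
  exact interior_maximal (t := C) (fun z hz => hid hz) hCo hxC

theorem eqOn_id_of_isFixedPt_of_mem_frontier {C O : Set X} {g : X → X} (hCo : IsOpen C)
    (hC : IsPreconnected C) (hCmaps : Set.MapsTo g C C) (hOmaps : Set.MapsTo g O O)
    (hg : ContinuousOn g C) {n : ℕ} (hn : n ≠ 0) (hgn : ∀ x ∈ O, IsPeriodicPt g n x)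
    (hfix : ∀ x ∈ C ∩ frontier O, IsFixedPt g x) (hCO : (C \ closure O).Nonempty) :
    Set.EqOn g id (C ∩ O) := by
  classical
  -- Newman's theorem applies to the map that is `g` on `O` and the identity elsewhere.
  have hid : Set.EqOn (O.piecewise g id) id C := by
    refine eqOn_id_of_forall_isPeriodicPt V hCo hC ?_ ?_ hn (fun x _ => ?_) ?_
    · intro x hx
      by_cases hxO : x ∈ O
      · exact (Set.piecewise_eq_of_mem O g id hxO).symm ▸ hCmaps hx
      · exact (Set.piecewise_eq_of_notMem O g id hxO).symm ▸ hx
    · exact ContinuousOn.piecewise hfix (hg.mono Set.inter_subset_left) continuousOn_id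
    · rw [IsPeriodicPt, iterate_piecewise_id hOmaps]
      by_cases hxO : x ∈ O
      · exact (Set.piecewise_eq_of_mem _ _ _ hxO).trans (hgn x hxO)
      · exact Set.piecewise_eq_of_notMem _ _ _ hxO
    · obtain ⟨y, hyC, hyO⟩ := hCO
      refine ⟨y, hyC, interior_maximal (t := (closure O)ᶜ) (fun z hz => ?_)
        isClosed_closure.isOpen_compl hyO⟩
      exact Set.piecewise_eq_of_notMem _ _ _ fun hzO => hz (subset_closure hzO)
  exact fun x hx => (Set.piecewise_eq_of_mem O g id hx.2).symm.trans (hid hx.1)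

theorem subset_locallyPeriodicPts (hf : Continuous f) (hper : ∀ x, x ∈ periodicPts f) {C : Set X}
    (hCo : IsOpen C) (hC : IsPreconnected C) {k : ℕ} (hk : k ≠ 0) (hCmaps : Set.MapsTo f^[k] C C)
    (hCk : ∀ x ∈ C, x ∉ locallyPeriodicPts f → IsPeriodicPt f k x) :
    C ⊆ locallyPeriodicPts f := by
  by_contra hCG
  obtain ⟨e, heC, he⟩ := Set.not_subset.1 hCG
  have hid {n : ℕ} (hn : n ≠ 0) : Set.EqOn f^[k] id (C ∩ interior (ptsOfPeriod f (n * k))) := by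
    have hclosure {x : X} (hx : x ∈ locallyPeriodicPts f) :
        x ∈ closure (interior (ptsOfPeriod f (n * k))) → x ∈ interior (ptsOfPeriod f (n * k)) :=
      mem_interior_ptsOfPeriod_of_mem_closure V hf hper hx
    refine eqOn_id_of_isFixedPt_of_mem_frontier V hCo hC hCmaps
      ((mapsTo_interior_ptsOfPeriod hf hper (n * k)).iterate k) (hf.iterate k).continuousOn
      (mul_ne_zero hn hk) (fun x hx => ?_) (fun x ⟨hxC, hx⟩ => hCk x hxC fun hxG => ?_) ?_
    · exact IsPeriodicPt.iterate (interior_subset (s := ptsOfPeriod f (n * k)) hx) k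
    · rw [isOpen_interior.frontier_eq] at hx
      exact hx.2 (hclosure hxG hx.1)
    · obtain ⟨y, hyC, hy⟩ : ∃ y ∈ C, y ∉ ptsOfPeriod f (n * k) := by
        by_contra! hsub
        exact he (mem_locallyPeriodicPts.2
          ⟨n * k, mul_ne_zero hn hk, interior_maximal hsub hCo heC⟩)
      have hyG : y ∈ locallyPeriodicPts f := by
        by_contra hyG
        exact hy ((hCk y hyC hyG).const_mul n)
      exact ⟨y, hyC, fun hcl => hy (interior_subset (hclosure hyG hcl))⟩
  refine he (mem_locallyPeriodicPts.2 ⟨k, hk, interior_maximal (fun x hx => ?_) hCo heC⟩)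
  by_cases hxG : x ∈ locallyPeriodicPts f
  · obtain ⟨n, hn, hxn⟩ := mem_locallyPeriodicPts.1 hxG
    exact hid hn ⟨hx, interior_mono (fun y hy => IsPeriodicPt.mul_const hy k) hxn⟩
  · exact hCk x hx hxG

theorem locallyPeriodicPts_eq_univ (hf : Continuous f) (hper : ∀ x, x ∈ periodicPts f) :
    locallyPeriodicPts f = Set.univ := by
  have := ChartedSpace.locallyConnectedSpace V X
  have := ChartedSpace.locallyCompactSpace V X
  by_contra hG
  have hclosed : IsClosed (locallyPeriodicPts f)ᶜ :=
    (isOpen_biUnion fun _ _ => isOpen_interior).isClosed_compl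
  obtain ⟨k, hk, e, heG, he⟩ :=
    exists_mem_interior_setOf_isPeriodicPt hf hper hclosed (Set.nonempty_compl.2 hG)
  have hinj := injective_of_forall_mem_periodicPts hper
  have hmaps := mapsTo_interior_of_preimage_subset hf hper <|
    setOf_imp_isPeriodicPt_preimage_subset hinj (mapsTo_compl_locallyPeriodicPts hf hinj) k
  have heC := mem_connectedComponentIn he
  have hfe : IsPeriodicPt f k e := interior_subset he heG
  refine heG (subset_locallyPeriodicPts V hf hper isOpen_interior.connectedComponentIn
    isPreconnected_connectedComponentIn hk (mapsTo_connectedComponentIn_of_isFixedPt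
    (hmaps.iterate k) (hf.iterate k).continuousOn heC hfe) (fun x hx => ?_) heC)
  exact interior_subset (connectedComponentIn_subset _ _ hx)

end Montgomery

end Newman

open Function in
theorem periodic_of_forall_periodic_point_general (V : Type*) [NormedAddCommGroup V]
    [NormedSpace ℝ V] [FiniteDimensional ℝ V] {X : Type*} [TopologicalSpace X] [T2Space X]
    [ConnectedSpace X] [ChartedSpace V X] {f : X → X} (hf : Continuous f)
    (hper : ∀ x, ∃ p : ℕ, 1 ≤ p ∧ f^[p] x = x) : ∃ p : ℕ, 1 ≤ p ∧ ∀ x, f^[p] x = x := by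
  have huniv := Newman.locallyPeriodicPts_eq_univ V hf hper
  obtain ⟨x⟩ := ConnectedSpace.toNonempty (α := X)
  obtain ⟨k, hk, hx⟩ := Newman.mem_locallyPeriodicPts.1 (huniv.ge (Set.mem_univ x))
  have hclosed : IsClosed (interior (ptsOfPeriod f k)) := closure_subset_iff_isClosed.1 fun y hy =>
    Newman.mem_interior_ptsOfPeriod_of_mem_closure V hf hper (huniv.ge (Set.mem_univ y)) hy
  have hopen := IsClopen.eq_univ ⟨hclosed, isOpen_interior⟩ ⟨x, hx⟩
  exact ⟨k, Nat.one_le_iff_ne_zero.2 hk, fun y =>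
    (interior_subset (hopen.ge (Set.mem_univ y)) : y ∈ ptsOfPeriod f k)⟩

/-- Montgomery's theorem: a homeomorphism of a nonempty open connected subset
of a finite-dimensional real vector space, all of whose points are periodic,
is periodic. -/
theorem periodic_of_forall_periodic_point
    {V : Type*} [NormedAddCommGroup V] [NormedSpace ℝ V] [FiniteDimensional ℝ V]
    (Ω : Set V) (hΩne : Ω.Nonempty) (hΩopen : IsOpen Ω) (hΩconn : IsConnected Ω)
    (f : Ω ≃ₜ Ω)
    (hper : ∀ x : Ω, ∃ p : ℕ, 1 ≤ p ∧ (⇑f)^[p] x = x) :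
    ∃ p : ℕ, 1 ≤ p ∧ ∀ x : Ω, (⇑f)^[p] x = x := by
  have : ConnectedSpace Ω := isConnected_iff_connectedSpace.1 hΩconn
  let : ChartedSpace V Ω :=
    inferInstanceAs (ChartedSpace V (⟨Ω, hΩopen⟩ : TopologicalSpace.Opens V))
  exact periodic_of_forall_periodic_point_general V f.continuous hper
end
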